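/- arXiv:1404.1598 — 10 statements merged into one kernel-verified Lean document; each statement's English description precedes it below -/
import Mathlib

section
/- If |X| ≥ 3 and all blocks of the partition P have the same size, then the group S(X,P) is generated by two elements. -/
open Function Set

/-- The group `S(X,P)` of permutations of `X` preserving the partition induced by
the equivalence relation `r`, as a subgroup of `Equiv.Perm X`. -/
def SGrp {X : Type*} (r : Setoid X) : Subgroup (Equiv.Perm X) where
  carrier := {g | ∀ x y : X, r (g x) (g y) ↔ r x y}
  one_mem' := by intro x y; simp
  mul_mem' := by
    intro a b ha hb x y
    simp only [Equiv.Perm.mul_apply]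
    rw [ha, hb]
  inv_mem' := by
    intro a ha x y
    have h := ha (a⁻¹ x) (a⁻¹ y)
    simpa using h.symm

section Helpers

/-- Permutations of the block indices acting on `A × Y`. -/
def pureHom (A Y : Type*) : Equiv.Perm A →* Equiv.Perm (A × Y) where
  toFun σ := Equiv.prodCongr σ (Equiv.refl Y)
  map_one' := by ext x <;> rfl
  map_mul' := by intro σ τ; ext x <;> rfl

/-- Families of permutations acting on the fibres of `A × Y → A`. -/
def fibHom (A Y : Type*) : (A → Equiv.Perm Y) →* Equiv.Perm (A × Y) where
  toFun f := Equiv.prodShear (Equiv.refl A) f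
  map_one' := by ext x <;> rfl
  map_mul' := by intro σ τ; ext x <;> rfl

@[simp] lemma pureHom_apply {A Y : Type*} (σ : Equiv.Perm A) (x : A × Y) :
    pureHom A Y σ x = (σ x.1, x.2) := rfl

@[simp] lemma fibHom_apply {A Y : Type*} (f : A → Equiv.Perm Y) (x : A × Y) :
    fibHom A Y f x = (x.1, f x.1 x.2) := rfl

lemma pure_fib {A Y : Type*} [DecidableEq A] (σ : Equiv.Perm A) (i : A) (α : Equiv.Perm Y) :
    pureHom A Y σ * fibHom A Y (Pi.mulSingle i α) =
      fibHom A Y (Pi.mulSingle (σ i) α) * pureHom A Y σ := by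
  ext x
  · simp
  · simp only [Equiv.Perm.mul_apply, pureHom_apply, fibHom_apply]
    by_cases h : x.1 = i
    · subst h; simp
    · rw [Pi.mulSingle_eq_of_ne h, Pi.mulSingle_eq_of_ne (fun h' => h (σ.injective h'))]

lemma pure_mem {A Y : Type*} (σ : Equiv.Perm A) :
    pureHom A Y σ ∈ SGrp (Setoid.ker (Prod.fst : A × Y → A)) := by
  intro x y
  simp [Setoid.ker_def]

lemma fib_mem {A Y : Type*} (f : A → Equiv.Perm Y) :
    fibHom A Y f ∈ SGrp (Setoid.ker (Prod.fst : A × Y → A)) := by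
  intro x y
  simp [Setoid.ker_def]

lemma core {A Y : Type*} [Finite A] [DecidableEq A] [Nonempty Y]
    (H : Subgroup (Equiv.Perm (A × Y)))
    (hP : ∀ σ, pureHom A Y σ ∈ H) (v w : Equiv.Perm Y) (hvw : Subgroup.closure {v, w} = ⊤)
    (i j : A) (hv : fibHom A Y (Pi.mulSingle i v) ∈ H) (hw : fibHom A Y (Pi.mulSingle j w) ∈ H) :
    SGrp (Setoid.ker (Prod.fst : A × Y → A)) ≤ H := by
  have move : ∀ (i k : A) (α : Equiv.Perm Y), fibHom A Y (Pi.mulSingle i α) ∈ H →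
      fibHom A Y (Pi.mulSingle k α) ∈ H := by
    intro i k α h
    have := pure_fib (Y := Y) (Equiv.swap i k) i α
    rw [Equiv.swap_apply_left, ← mul_inv_eq_iff_eq_mul] at this
    rw [← this]
    exact H.mul_mem (H.mul_mem (hP _) h) (H.inv_mem (hP _))
  have all : ∀ (k : A) (α : Equiv.Perm Y), fibHom A Y (Pi.mulSingle k α) ∈ H := by
    intro k α
    have hle : Subgroup.closure {v, w} ≤
        H.comap ((fibHom A Y).comp (MonoidHom.mulSingle (fun _ => Equiv.Perm Y) k)) := by
      rw [Subgroup.closure_le]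
      rintro x (rfl | rfl)
      · exact move _ _ _ hv
      · exact move _ _ _ hw
    rw [hvw] at hle
    exact hle (Subgroup.mem_top α)
  have allf : ∀ f : A → Equiv.Perm Y, fibHom A Y f ∈ H := by
    intro f
    exact Subgroup.pi_mem_of_mulSingle_mem (H := H.comap (fibHom A Y)) f (fun k => all k _)
  intro g hg
  obtain ⟨y0⟩ := ‹Nonempty Y›
  have hg' : ∀ x y : A × Y, (g x).1 = (g y).1 ↔ x.1 = y.1 := hg
  have hinj : Function.Injective (fun a : A => (g (a, y0)).1) := by
    intro a b h
    exact (hg' _ _).1 h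
  let σ : Equiv.Perm A := Equiv.ofBijective _ (Finite.injective_iff_bijective.1 hinj)
  have hσ : ∀ x, (g x).1 = σ x.1 := fun x => (hg' x (x.1, y0)).2 rfl
  have hσ' : ∀ x, (g.symm x).1 = σ.symm x.1 := by
    intro x
    rw [Equiv.eq_symm_apply, ← hσ]; simp
  let f : A → Equiv.Perm Y := fun a =>
    { toFun := fun y => (g (a, y)).2
      invFun := fun y => (g.symm (σ a, y)).2
      left_inv := by
        intro y
        have : (σ a, (g (a, y)).2) = g (a, y) := Prod.ext (hσ (a, y)).symm rfl
        simp [this]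
      right_inv := by
        intro y
        have : (a, (g.symm (σ a, y)).2) = g.symm (σ a, y) := by
          refine Prod.ext ?_ rfl
          rw [hσ']; simp
        simp [this] }
  have : g = pureHom A Y σ * fibHom A Y f := by
    ext x
    · simp [hσ]
    · simp [f]
  rw [this]
  exact H.mul_mem (hP _) (allf _)

lemma split_mem {G : Type*} [Group G] (H : Subgroup G) (x y : G) (h : Commute x y) (k : ℕ)
    (hx : x ^ 2 = 1) (hy : y ^ (2 * k + 1) = 1) (hxy : x * y ∈ H) : x ∈ H ∧ y ∈ H := by
  have h1 : x ∈ H := by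
    have := H.pow_mem hxy (2 * k + 1)
    rw [h.mul_pow, hy, pow_succ, pow_mul, hx] at this
    simpa using this
  refine ⟨h1, ?_⟩
  simpa using H.mul_mem (H.inv_mem h1) hxy

lemma sym_gen (n : ℕ) : ∃ (v w : Equiv.Perm (Fin n)) (k : ℕ),
    v ^ 2 = 1 ∧ w ^ (2 * k + 1) = 1 ∧ Subgroup.closure {v, w} = ⊤ := by
  rcases n with _ | _ | n
  · exact ⟨1, 1, 0, by simp, by simp, Subsingleton.elim _ _⟩
  · refine ⟨1, 1, 0, by simp, by simp, ?_⟩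
    rw [eq_top_iff]
    intro x _
    have hx : x = 1 := by ext y; omega
    rw [hx]
    exact Subgroup.one_mem _
  have hc := isCycle_finRotate (n := n)
  have hgen := Equiv.Perm.closure_cycle_adjacent_swap hc (by simp) 0
  have h01 : finRotate (n + 2) 0 = 1 := by simp
  rw [h01] at hgen
  have hord : ∀ m, finRotate (m + 1) ^ (m + 1) = 1 := by
    intro m
    rcases m with _ | m
    · ext y; omega
    have := (isCycle_finRotate (n := m)).orderOf
    rw [support_finRotate] at this
    have h2 := pow_orderOf_eq_one (finRotate (m + 2))
    rw [this] at h2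
    simpa using h2
  have hsq : (Equiv.swap (0 : Fin (n + 2)) 1) ^ 2 = 1 := by
    rw [sq, Equiv.swap_mul_self]
  rcases Nat.even_or_odd' n with ⟨k, hk | hk⟩
  · refine ⟨Equiv.swap 0 1, Equiv.swap 0 1 * finRotate (n + 2), k, hsq, ?_, ?_⟩
    · rw [finRotate_succ_eq_decomposeFin]
      have hd : ∀ e : Equiv.Perm (Fin (n + 1)), Equiv.swap 0 1 * Equiv.Perm.decomposeFin.symm (1, e)
          = Equiv.Perm.decomposeFin.symm (0, e) := by
        intro e
        ext x
        refine Fin.cases ?_ (fun x => ?_) x <;> simp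
      rw [hd]
      have hp : ∀ (e : Equiv.Perm (Fin (n + 1))) (j : ℕ),
          (Equiv.Perm.decomposeFin.symm (0, e)) ^ j = Equiv.Perm.decomposeFin.symm (0, e ^ j) := by
        intro e j
        induction j with
        | zero =>
          ext x
          refine Fin.cases ?_ (fun x => ?_) x <;> simp
        | succ j ih =>
          rw [pow_succ, ih]
          ext x
          refine Fin.cases ?_ (fun x => ?_) x <;> simp [pow_succ]
      rw [hp, ← hk, hord]
      ext x
      refine Fin.cases ?_ (fun x => ?_) x <;> simp
    · rw [eq_top_iff, ← hgen, Subgroup.closure_le]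
      have hv : Equiv.swap (0 : Fin (n + 2)) 1 ∈ Subgroup.closure
          {Equiv.swap 0 1, Equiv.swap 0 1 * finRotate (n + 2)} :=
        Subgroup.subset_closure (by simp)
      have hw : Equiv.swap (0 : Fin (n + 2)) 1 * finRotate (n + 2) ∈ Subgroup.closure
          {Equiv.swap 0 1, Equiv.swap 0 1 * finRotate (n + 2)} :=
        Subgroup.subset_closure (by simp)
      rintro x (rfl | rfl)
      · have := Subgroup.mul_mem _ hv hw
        rwa [← mul_assoc, Equiv.swap_mul_self, one_mul] at this
      · exact hv
  · refine ⟨Equiv.swap 0 1, finRotate (n + 2), k + 1, hsq, ?_, ?_⟩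
    · rw [show 2 * (k + 1) + 1 = n + 1 + 1 by omega]
      exact hord _
    · rw [Set.pair_comm]; exact hgen

lemma prod_case (m n : ℕ) : ∃ a b : Equiv.Perm (Fin m × Fin n),
    Subgroup.closure {a, b} = SGrp (Setoid.ker (Prod.fst : Fin m × Fin n → Fin m)) := by
  rcases n with _ | n
  · exact ⟨1, 1, Subsingleton.elim _ _⟩
  obtain ⟨v, w, k, hv, hw, hvw⟩ := sym_gen (n + 1)
  set D := fibHom (Fin m) (Fin (n + 1)) with hD
  set P := pureHom (Fin m) (Fin (n + 1)) with hPdef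
  have finish : ∀ (a b : Equiv.Perm (Fin m × Fin (n + 1)))
      (_ : a ∈ SGrp (Setoid.ker (Prod.fst : Fin m × Fin (n + 1) → Fin m)))
      (_ : b ∈ SGrp (Setoid.ker (Prod.fst : Fin m × Fin (n + 1) → Fin m)))
      (_ : ∀ σ, P σ ∈ Subgroup.closure {a, b}) (i j : Fin m)
      (_ : D (Pi.mulSingle i v) ∈ Subgroup.closure {a, b})
      (_ : D (Pi.mulSingle j w) ∈ Subgroup.closure {a, b}),
      ∃ a b : Equiv.Perm (Fin m × Fin (n + 1)),
        Subgroup.closure {a, b} = SGrp (Setoid.ker (Prod.fst : Fin m × Fin (n + 1) → Fin m)) := by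
    intro a b ha hb hP i j h1 h2
    refine ⟨a, b, le_antisymm ?_ (core _ hP v w hvw i j h1 h2)⟩
    rw [Subgroup.closure_le]
    rintro x (rfl | rfl)
    · exact ha
    · exact hb
  have hDw : ∀ i : Fin m, D (Pi.mulSingle i w) ^ (2 * k + 1) = 1 := by
    intro i; rw [← map_pow, ← Pi.mulSingle_pow, hw]; simp
  have hDv : ∀ i : Fin m, D (Pi.mulSingle i v) ^ 2 = 1 := by
    intro i; rw [← map_pow, ← Pi.mulSingle_pow, hv]; simp
  rcases m with _ | _ | _ | m
  · exact ⟨1, 1, Subsingleton.elim _ _⟩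
  · refine finish (D (Pi.mulSingle 0 v)) (D (Pi.mulSingle 0 w)) (fib_mem _) (fib_mem _) ?_ 0 0
      (Subgroup.subset_closure (by simp)) (Subgroup.subset_closure (by simp))
    intro σ
    have hσ : σ = 1 := by ext y; omega
    rw [hσ, map_one]
    exact Subgroup.one_mem _
  · set a := D (Pi.mulSingle 0 v) * D (Pi.mulSingle 1 w) with ha
    set b := P (Equiv.swap 0 1) with hb
    have haH : a ∈ Subgroup.closure {a, b} := Subgroup.subset_closure (by simp)
    have hbH : b ∈ Subgroup.closure {a, b} := Subgroup.subset_closure (by simp)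
    have hcomm : Commute (D (Pi.mulSingle 0 v)) (D (Pi.mulSingle 1 w)) :=
      (Pi.mulSingle_commute (f := fun _ : Fin 2 => Equiv.Perm (Fin (n + 1)))
        (show (0 : Fin 2) ≠ 1 by decide) v w).map D
    have hs := split_mem _ _ _ hcomm k (hDv 0) (hDw 1) haH
    refine finish a b (Subgroup.mul_mem _ (fib_mem _) (fib_mem _)) (pure_mem _) ?_ 0 1 hs.1 hs.2
    intro σ
    have : σ = 1 ∨ σ = Equiv.swap 0 1 := by revert σ; decide
    rcases this with rfl | rfl
    · rw [map_one]; exact Subgroup.one_mem _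
    · exact hbH
  · set a := D (Pi.mulSingle 0 v) * P (finRotate (m + 3)) with ha
    set b := P (Equiv.swap 0 1) * D (Pi.mulSingle 2 w) with hb
    have haH : a ∈ Subgroup.closure {a, b} := Subgroup.subset_closure (by simp)
    have hbH : b ∈ Subgroup.closure {a, b} := Subgroup.subset_closure (by simp)
    have h20 : (2 : Fin (m + 3)) ≠ 0 := by
      simp [Fin.ext_iff, Nat.mod_eq_of_lt (show 2 < m + 3 by omega)]
    have h21 : (2 : Fin (m + 3)) ≠ 1 := by
      simp [Fin.ext_iff, Nat.mod_eq_of_lt (show 2 < m + 3 by omega)]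
    have hcomm : Commute (P (Equiv.swap 0 1)) (D (Pi.mulSingle 2 w)) := by
      have := pure_fib (Y := Fin (n + 1)) (Equiv.swap (0 : Fin (m + 3)) 1) 2 w
      rwa [Equiv.swap_apply_of_ne_of_ne h20 h21] at this
    have hs := split_mem _ _ _ hcomm k
      (by rw [← map_pow, sq, Equiv.swap_mul_self, map_one]) (hDw 2) hbH
    have hadj : ∀ i : ℕ, ∀ hi : i + 1 < m + 3,
        P (Equiv.swap ⟨i, by omega⟩ ⟨i + 1, hi⟩) ∈ Subgroup.closure {a, b} := by
      intro i
      induction i with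
      | zero => intro hi; exact hs.1
      | succ i ih =>
        intro hi
        have h1 := ih (by omega)
        have h2 := Subgroup.mul_mem _ (Subgroup.mul_mem _ haH h1) (Subgroup.inv_mem _ haH)
        have hr : ∀ j : ℕ, ∀ hj : j + 1 < m + 3,
            finRotate (m + 3) ⟨j, by omega⟩ = ⟨j + 1, hj⟩ := by
          intro j hj
          exact finRotate_of_lt (by omega)
        have hconj : finRotate (m + 3) * Equiv.swap ⟨i, by omega⟩ ⟨i + 1, by omega⟩ =
            Equiv.swap ⟨i + 1, by omega⟩ ⟨i + 1 + 1, hi⟩ * finRotate (m + 3) := by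
          rw [Equiv.mul_swap_eq_swap_mul, hr i (by omega), hr (i + 1) hi]
        have hc := pure_fib (Y := Fin (n + 1))
          (Equiv.swap (⟨i + 1, by omega⟩ : Fin (m + 3)) ⟨i + 1 + 1, hi⟩) 0 v
        rw [Equiv.swap_apply_of_ne_of_ne (by simp [Fin.ext_iff]) (by simp [Fin.ext_iff])] at hc
        have heq : a * P (Equiv.swap ⟨i, by omega⟩ ⟨i + 1, by omega⟩) * a⁻¹ =
            P (Equiv.swap ⟨i + 1, by omega⟩ ⟨i + 1 + 1, hi⟩) := by
          rw [mul_inv_eq_iff_eq_mul, ha, mul_assoc, ← map_mul, hconj, map_mul, ← mul_assoc,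
            ← mul_assoc, hc]
        rw [heq] at h2
        exact h2
    have hP : ∀ σ, P σ ∈ Subgroup.closure {a, b} := by
      intro σ
      have hσ : σ ∈ Submonoid.closure (Set.range fun i : Fin (m + 2) =>
          Equiv.swap i.castSucc i.succ) := by
        rw [Equiv.Perm.mclosure_swap_castSucc_succ]; trivial
      have hle : Submonoid.closure (Set.range fun i : Fin (m + 2) =>
          Equiv.swap i.castSucc i.succ) ≤ ((Subgroup.closure {a, b}).comap P).toSubmonoid := by
        rw [Submonoid.closure_le]
        rintro _ ⟨i, rfl⟩
        exact hadj i.1 (by omega)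
      exact hle hσ
    refine finish a b (Subgroup.mul_mem _ (fib_mem _) (pure_mem _))
      (Subgroup.mul_mem _ (pure_mem _) (fib_mem _)) hP 0 2 ?_ hs.2
    have := Subgroup.mul_mem _ haH (Subgroup.inv_mem _ (hP (finRotate (m + 3))))
    rwa [ha, mul_inv_cancel_right] at this

lemma exists_coord {X : Type*} [Fintype X] (r : Setoid X) (c : ℕ)
    (h : ∀ B ∈ Setoid.classes r, B.ncard = c) :
    ∃ (m : ℕ) (e : X ≃ Fin m × Fin c), ∀ x y, (e x).1 = (e y).1 ↔ r x y := by
  classical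
  obtain ⟨m, ⟨q⟩⟩ := Finite.exists_equiv_fin (Quotient r)
  have hfib : ∀ z : Quotient r, Nonempty ({x : X // Quotient.mk r x = z} ≃ Fin c) := by
    intro z
    induction z using Quotient.inductionOn with
    | h y =>
      have h1 := h {x | r x y} (Setoid.mem_classes r y)
      have h2 : Nat.card {x : X // Quotient.mk r x = Quotient.mk r y} = c := by
        rw [← h1, ← Nat.card_coe_set_eq]
        refine Nat.card_congr (Equiv.subtypeEquivRight fun x => ?_)
        exact Quotient.eq
      exact ⟨Finite.equivFinOfCardEq h2⟩
  let F := fun z => (hfib z).some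
  refine ⟨m, (Equiv.sigmaFiberEquiv (Quotient.mk r)).symm.trans
    ((Equiv.sigmaCongrRight F).trans ((Equiv.sigmaEquivProd _ _).trans
      (Equiv.prodCongr q (Equiv.refl _)))), ?_⟩
  intro x y
  have : q (Quotient.mk r x) = q (Quotient.mk r y) ↔ r x y := by
    rw [q.injective.eq_iff]; exact Quotient.eq
  exact this

end Helpers

/-- If `|X| ≥ 3` and all blocks of the partition have the same
size, then the group `S(X,P)` is generated by two elements. -/
theorem SXP_two_generated {X : Type*} [Fintype X] (r : Setoid X)
    (hX : 3 ≤ Fintype.card X)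
    (huniform : ∃ c : ℕ, ∀ B ∈ Setoid.classes r, B.ncard = c) :
    ∃ a b : Equiv.Perm X, Subgroup.closure {a, b} = SGrp r := by
  obtain ⟨c, h⟩ := huniform
  obtain ⟨m, e, he⟩ := exists_coord r c h
  obtain ⟨a, b, hab⟩ := prod_case m c
  let φ : Equiv.Perm (Fin m × Fin c) ≃* Equiv.Perm X := e.symm.permCongrHom
  refine ⟨φ a, φ b, ?_⟩
  have h1 : Subgroup.closure {φ a, φ b} = (Subgroup.closure {a, b}).map φ.toMonoidHom := by
    rw [MonoidHom.map_closure, Set.image_pair]; rfl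
  rw [h1, hab]
  ext g
  rw [Subgroup.mem_map]
  have key : ∀ f : Equiv.Perm (Fin m × Fin c), φ f ∈ SGrp r ↔
      f ∈ SGrp (Setoid.ker (Prod.fst : Fin m × Fin c → Fin m)) := by
    intro f
    have hφ : ∀ x, φ f x = e.symm (f (e x)) := fun x => rfl
    constructor
    · intro hf x y
      have := hf (e.symm x) (e.symm y)
      rw [← he, ← he, hφ, hφ] at this
      simpa [Setoid.ker_def] using this
    · intro hf x y
      have := hf (e x) (e y)
      rw [← he, ← he, hφ, hφ]
      simpa [Setoid.ker_def] using this
  constructor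
  · rintro ⟨f, hf, rfl⟩
    exact (key f).2 hf
  · intro hg
    refine ⟨φ.symm g, ?_, φ.apply_symm_apply g⟩
    rw [← key, φ.apply_symm_apply]
    exact hg
end

section
/- Let u ≥ 2 and let l_1,…,l_u be integers each ≥ 2. Then the rank of the direct product Sym(l_1) × ⋯ × Sym(l_u) equals u; that is, this group is generated by u elements but not by fewer than u elements. -/
open Function Set

/-- The rank of a group: the least cardinality of a generating subset. -/
noncomputable def grank (G : Type*) [Group G] : ℕ :=
  sInf {k | ∃ S : Set G, S.Finite ∧ S.ncard = k ∧ Subgroup.closure S = ⊤}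

/-- A subgroup of `Perm (Fin (k+2))` containing a swap of `0` and `last` and the cycle
`(0 1 … k)` is everything. -/
lemma star_gen (k : ℕ) (H : Subgroup (Equiv.Perm (Fin (k + 2))))
    (ht : Equiv.swap 0 (Fin.last (k + 1)) ∈ H)
    (hc : Fin.cycleRange (⟨k, by omega⟩ : Fin (k + 2)) ∈ H) : H = ⊤ := by
  have star : ∀ i : ℕ, ∀ hi : i < k + 1,
      Equiv.swap (⟨i, by omega⟩ : Fin (k + 2)) (Fin.last (k + 1)) ∈ H := by
    intro i
    induction i with
    | zero => intro hi; exact ht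
    | succ i ih =>
      intro hi
      have h1 := H.mul_mem (H.mul_mem hc (ih (by omega))) (H.inv_mem hc)
      rw [← Equiv.swap_apply_apply] at h1
      have e1 : Fin.cycleRange (⟨k, by omega⟩ : Fin (k + 2)) ⟨i, by omega⟩ = ⟨i + 1, by omega⟩ := by
        apply Fin.ext
        rw [Fin.coe_cycleRange_of_lt]
        simp only [Fin.mk_lt_mk]; omega
      have e2 : Fin.cycleRange (⟨k, by omega⟩ : Fin (k + 2)) (Fin.last (k + 1)) = Fin.last (k + 1) := by
        apply Fin.cycleRange_of_gt
        simp [Fin.lt_def]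
      rwa [e1, e2] at h1
  have star' : ∀ a : Fin (k + 2), Equiv.swap a (Fin.last (k + 1)) ∈ H := by
    intro a
    by_cases ha : a = Fin.last (k + 1)
    · subst ha; rw [Equiv.swap_self]; exact H.one_mem
    · have := Fin.val_lt_last ha
      exact star a.1 this
  rw [eq_top_iff, ← Equiv.Perm.closure_isSwap, Subgroup.closure_le]
  rintro σ ⟨a, b, hab, rfl⟩
  by_cases hb : b = Fin.last (k + 1)
  · subst hb; exact star' a
  by_cases ha : a = Fin.last (k + 1)
  · subst ha; rw [Equiv.swap_comm]; exact star' b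
  have h1 := H.mul_mem (H.mul_mem (star' b) (star' a)) (H.inv_mem (star' b))
  rw [← Equiv.swap_apply_apply, Equiv.swap_apply_of_ne_of_ne hab ha, Equiv.swap_apply_right] at h1
  exact h1

lemma perm_gen (n : ℕ) (hn : 2 ≤ n) : ∃ t c : Equiv.Perm (Fin n), ∃ m : ℕ,
    t ^ 2 = 1 ∧ c ^ (2 * m + 1) = 1 ∧
      ∀ H : Subgroup (Equiv.Perm (Fin n)), t ∈ H → c ∈ H → H = ⊤ := by
  obtain ⟨k, rfl⟩ := Nat.exists_eq_add_of_le' hn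
  rcases Nat.even_or_odd' k with ⟨m, hm | hm⟩
  · refine ⟨Equiv.swap 0 (Fin.last (k + 1)), Fin.cycleRange ⟨k, by omega⟩, m, ?_, ?_,
      fun H ht hc => star_gen k H ht hc⟩
    · rw [sq, Equiv.swap_mul_self]
    · rw [← hm]
      by_cases hk : k = 0
      · subst hk
        simp
      · rw [← orderOf_dvd_iff_pow_eq_one, ← Equiv.Perm.lcm_cycleType, Fin.cycleType_cycleRange]
        · simp
        · simpa [Fin.ext_iff] using hk
  · refine ⟨Equiv.swap 0 (finRotate (k + 2) 0), finRotate (k + 2), m + 1, ?_, ?_, ?_⟩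
    · rw [sq, Equiv.swap_mul_self]
    · rw [← orderOf_dvd_iff_pow_eq_one, ← Equiv.Perm.lcm_cycleType, cycleType_finRotate]
      simp only [Multiset.lcm_singleton]
      exact dvd_of_eq (by rw [normalize_eq]; omega)
    · intro H ht hc
      rw [eq_top_iff, ← Equiv.Perm.closure_cycle_adjacent_swap isCycle_finRotate
        support_finRotate 0, Subgroup.closure_le]
      rintro x (rfl | rfl)
      · exact hc
      · exact ht

lemma rank_lower (u : ℕ) (l : Fin u → ℕ) (hl : ∀ j, 2 ≤ l j)
    (S : Set ((j : Fin u) → Equiv.Perm (Fin (l j)))) (hf : S.Finite)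
    (hS : Subgroup.closure S = ⊤) : u ≤ S.ncard := by
  let φ : ((j : Fin u) → Equiv.Perm (Fin (l j))) →* (Fin u → ℤˣ) :=
    { toFun := fun g j => Equiv.Perm.sign (g j)
      map_one' := by ext; simp
      map_mul' := by intros; ext; simp }
  have hφ : Surjective φ := by
    intro y
    have : ∀ j, ∃ g : Equiv.Perm (Fin (l j)), Equiv.Perm.sign g = y j := by
      intro j
      have : Nontrivial (Fin (l j)) := Fin.nontrivial_iff_two_le.mpr (hl j)
      exact Equiv.Perm.sign_surjective _ (y j)
    choose g hg using this
    exact ⟨g, funext hg⟩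
  have h1 := Group.rank_le_of_surjective φ hφ
  have h2 := Group.rank_le (S := hf.toFinset) (by simpa using hS)
  rw [← Set.ncard_eq_toFinset_card S hf] at h2
  have h3 := card_dvd_exponent_pow_rank' (G := Fin u → ℤˣ) (n := 2)
    (fun g => by ext j; simp)
  have h4 : Nat.card (Fin u → ℤˣ) = 2 ^ u := by simp
  rw [h4, Nat.pow_dvd_pow_iff_le_right (by norm_num)] at h3
  omega

lemma rank_upper (u : ℕ) (hu : 2 ≤ u) (l : Fin u → ℕ) (hl : ∀ j, 2 ≤ l j) :
    ∃ S : Set ((j : Fin u) → Equiv.Perm (Fin (l j))), S.Finite ∧ S.ncard ≤ u ∧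
      Subgroup.closure S = ⊤ := by
  choose t c m ht hc hgen using fun j => perm_gen (l j) (hl j)
  let ρ := finRotate u
  have hρ : ∀ i, i ≠ ρ i := by
    intro i h
    have : i ∈ (finRotate u).support := by rw [support_finRotate_of_le hu]; simp
    exact (Equiv.Perm.mem_support.mp this) h.symm
  let g : Fin u → ((j : Fin u) → Equiv.Perm (Fin (l j))) := fun i =>
    Pi.mulSingle i (t i) * Pi.mulSingle (ρ i) (c (ρ i))
  refine ⟨Set.range g, Set.finite_range g, ?_, ?_⟩
  · rw [← Set.image_univ]
    exact (Set.ncard_image_le).trans (by simp)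
  set H := Subgroup.closure (Set.range g) with hH
  have hg : ∀ i, g i ∈ H := fun i => Subgroup.subset_closure ⟨i, rfl⟩
  have h1 : ∀ i, Pi.mulSingle i (t i) ∈ H := by
    intro i
    have := H.pow_mem (hg i) (2 * m (ρ i) + 1)
    have e : g i ^ (2 * m (ρ i) + 1) = Pi.mulSingle i (t i) := by
      simp only [g]
      rw [(Pi.mulSingle_commute (f := fun j => Equiv.Perm (Fin (l j))) (hρ i) (t i) (c (ρ i))).mul_pow, ← Pi.mulSingle_pow,
        ← Pi.mulSingle_pow, hc, Pi.mulSingle_one, mul_one, pow_succ, pow_mul, ht, one_pow, one_mul]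
    rwa [e] at this
  have h2 : ∀ i, Pi.mulSingle i (c i) ∈ H := by
    intro i
    obtain ⟨i, rfl⟩ := ρ.surjective i
    exact (H.mul_mem_cancel_left (h1 i)).mp (hg i)
  rw [eq_top_iff]
  intro x _
  refine Subgroup.pi_mem_of_mulSingle_mem x fun j => ?_
  have := hgen j (H.comap (MonoidHom.mulSingle (fun j => Equiv.Perm (Fin (l j))) j)) (h1 j) (h2 j)
  have hx : x j ∈ H.comap (MonoidHom.mulSingle (fun j => Equiv.Perm (Fin (l j))) j) := by rw [this]; trivial
  exact hx

/-- Let `u ≥ 2` and `l₁, …, l_u ≥ 2`.  Then the rank of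
`Sym(l₁) × ⋯ × Sym(l_u)` equals `u`. -/
theorem rank_prod_symm (u : ℕ) (hu : 2 ≤ u) (l : Fin u → ℕ) (hl : ∀ j, 2 ≤ l j) :
    grank ((j : Fin u) → Equiv.Perm (Fin (l j))) = u := by
  obtain ⟨S, hf, hn, hS⟩ := rank_upper u hu l hl
  have hmem : S.ncard ∈ {k | ∃ S : Set ((j : Fin u) → Equiv.Perm (Fin (l j))),
      S.Finite ∧ S.ncard = k ∧ Subgroup.closure S = ⊤} := ⟨S, hf, rfl, hS⟩
  unfold grank
  apply le_antisymm
  · exact (Nat.sInf_le hmem).trans hn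
  · apply le_csInf ⟨_, hmem⟩
    rintro k ⟨T, hT, rfl, hT'⟩
    exact rank_lower u l hl T hT hT'
end

section
/- Let f ∈ 𝒜, g ∈ T(X,P) and a ∈ Σ(X,P) be such that f = ag (i.e. (x)f = ((x)a)g for all x ∈ X). Then a ∈ S(X,P). -/
open Function Set

/-- The monoid (as a subset of `Function.End X`) of all transformations preserving
the partition induced by the equivalence relation `r`. -/
def TSet {X : Type*} (r : Setoid X) : Set (Function.End X) :=
  {f | ∀ x y : X, r x y → r (f x) (f y)}

/-- The group of units of `TSet r` (i.e. `S(X,P)`): the permutations `g` of `X` with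
`x ∼ y ↔ g x ∼ g y`. -/
def SXP {X : Type*} (r : Setoid X) : Set (Function.End X) :=
  {f | Function.Bijective f ∧ ∀ x y : X, r (f x) (f y) ↔ r x y}

/-- The submonoid (as a subset) of transformations preserving the partition whose
image meets every block of the partition. -/
def SigmaSet {X : Type*} (r : Setoid X) : Set (Function.End X) :=
  {f | f ∈ TSet r ∧ ∀ B ∈ Setoid.classes r, (Set.range f ∩ B).Nonempty}

/-- The number of blocks of the partition having size `s`. -/
noncomputable def blockCount {X : Type*} (r : Setoid X) (s : ℕ) : ℕ :=
  {B | B ∈ Setoid.classes r ∧ B.ncard = s}.ncard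

/-- (Blocks are enumerated as `Pb 0, …, Pb (N-1)` with
nondecreasing sizes; `F` is the transformation of indices induced by `f`, and `f`
belongs to `𝒜`, i.e. `f` is injective on every block and `F` has image of size
`N - 1`.)  If `f = a g` (composing left to right) with `a ∈ Σ(X,P)` and
`g ∈ T(X,P)`, then `a ∈ S(X,P)`. -/
theorem left_factor_mem_SXP {X : Type*} [Fintype X] [Nonempty X] (r : Setoid X)
    (N : ℕ) (Pb : Fin N → Set X)
    (hPmem : ∀ i, Pb i ∈ Setoid.classes r)
    (hPinj : Function.Injective Pb)
    (hPsurj : ∀ B ∈ Setoid.classes r, ∃ i, Pb i = B)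
    (hPmono : Monotone fun i => (Pb i).ncard)
    (f a g : Function.End X)
    (hf : f ∈ TSet r) (ha : a ∈ SigmaSet r) (hg : g ∈ TSet r)
    (F : Fin N → Fin N) (hF : ∀ i, f '' Pb i ⊆ Pb (F i))
    (hfinj : ∀ i, Set.InjOn f (Pb i))
    (hFim : (Set.range F).ncard = N - 1)
    (hfactor : ∀ x : X, f x = g (a x)) :
    a ∈ SXP r := by
  obtain ⟨haT, haS⟩ := ha
  let A : Quotient r → Quotient r := Quotient.map a haT
  have hAsurj : Function.Surjective A := by
    intro q
    induction q using Quotient.inductionOn with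
    | _ y =>
      obtain ⟨z, ⟨x, rfl⟩, hz⟩ := haS {z | r z y} (Setoid.mem_classes r y)
      exact ⟨Quotient.mk r x, Quotient.sound hz⟩
  have hAinj : Function.Injective A := Finite.injective_iff_surjective.mpr hAsurj
  have hiff : ∀ x y : X, r (a x) (a y) ↔ r x y := by
    intro x y
    refine ⟨fun h => ?_, haT x y⟩
    exact Quotient.exact (hAinj (Quotient.sound h : A (Quotient.mk r x) = A (Quotient.mk r y)))
  have hinj : Function.Injective a := by
    intro x y hxy
    have hr : r x y := (hiff x y).mp (by rw [hxy])
    obtain ⟨i, hi⟩ := hPsurj {z | r z y} (Setoid.mem_classes r y)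
    refine hfinj i ?_ ?_ ?_
    · rw [hi]; exact hr
    · rw [hi]; exact r.refl y
    · rw [hfactor, hfactor, hxy]
  exact ⟨Finite.injective_iff_bijective.mp hinj, hiff⟩
end

section
/- Let f ∈ 𝒜, a ∈ T(X,P) and g ∈ T(X,P) with g ∉ Σ(X,P) be such that f = ga (i.e. (x)f = ((x)g)a for all x ∈ X). Then g ∈ 𝒜. -/
open Function Set

/-- (Blocks are enumerated as `Pb 0, …, Pb (N-1)` with
nondecreasing sizes; `F` resp. `G` are the transformations of indices induced by
`f` resp. `g`, and `f ∈ 𝒜`, i.e. `f` is injective on every block and `F` has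
image of size `N - 1`.)  If `f = g a` (composing left to right) with
`g ∈ T(X,P) ∖ Σ(X,P)` and `a ∈ T(X,P)`, then `g ∈ 𝒜`. -/
theorem right_divisor_mem_A {X : Type*} [Fintype X] [Nonempty X] (r : Setoid X)
    (N : ℕ) (Pb : Fin N → Set X)
    (hPmem : ∀ i, Pb i ∈ Setoid.classes r)
    (hPinj : Function.Injective Pb)
    (hPsurj : ∀ B ∈ Setoid.classes r, ∃ i, Pb i = B)
    (hPmono : Monotone fun i => (Pb i).ncard)
    (f g a : Function.End X)
    (hf : f ∈ TSet r) (hg : g ∈ TSet r) (hgn : g ∉ SigmaSet r) (ha : a ∈ TSet r)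
    (F G : Fin N → Fin N)
    (hF : ∀ i, f '' Pb i ⊆ Pb (F i)) (hG : ∀ i, g '' Pb i ⊆ Pb (G i))
    (hfinj : ∀ i, Set.InjOn f (Pb i))
    (hFim : (Set.range F).ncard = N - 1)
    (hfactor : ∀ x : X, f x = a (g x)) :
    (∀ i, Set.InjOn g (Pb i)) ∧ (Set.range G).ncard = N - 1 := by
  have hne : ∀ i, (Pb i).Nonempty := by
    intro i
    obtain ⟨y, hy⟩ := hPmem i
    exact ⟨y, by rw [hy]; exact r.refl y⟩
  have hrel : ∀ i x y, x ∈ Pb i → y ∈ Pb i → r x y := by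
    intro i x y hx hy
    obtain ⟨z, hz⟩ := hPmem i
    rw [hz] at hx hy
    exact r.trans hx (r.symm hy)
  have hidx : ∀ i j x y, x ∈ Pb i → y ∈ Pb j → r x y → i = j := by
    intro i j x y hx hy hxy
    apply hPinj
    obtain ⟨z, hz⟩ := hPmem i
    obtain ⟨w, hw⟩ := hPmem j
    rw [hz] at hx ⊢
    rw [hw] at hy ⊢
    have hzw : r z w := r.trans (r.symm hx) (r.trans hxy hy)
    ext t
    exact ⟨fun h => r.trans h hzw, fun h => r.trans h (r.symm hzw)⟩
  refine ⟨?_, ?_⟩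
  · intro i x hx y hy hxy
    apply hfinj i hx hy
    rw [hfactor, hfactor, hxy]
  have hGF : ∀ i j, G i = G j → F i = F j := by
    intro i j hij
    obtain ⟨x, hx⟩ := hne i
    obtain ⟨y, hy⟩ := hne j
    have h1 : g x ∈ Pb (G i) := hG i ⟨x, hx, rfl⟩
    have h2 : g y ∈ Pb (G i) := by rw [hij]; exact hG j ⟨y, hy, rfl⟩
    have h3 := ha _ _ (hrel _ _ _ h1 h2)
    rw [← hfactor, ← hfactor] at h3
    exact hidx _ _ _ _ (hF i ⟨x, hx, rfl⟩) (hF j ⟨y, hy, rfl⟩) h3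
  have hle : (Set.range F).ncard ≤ (Set.range G).ncard := by
    have hsub : Set.range F ⊆ (Function.extend G F id) '' Set.range G := by
      rintro _ ⟨i, rfl⟩
      refine ⟨G i, ⟨i, rfl⟩, ?_⟩
      exact Function.FactorsThrough.extend_apply (fun i j h => hGF i j h) id i
    exact (Set.ncard_le_ncard hsub (Set.toFinite _)).trans
      (Set.ncard_image_le (Set.toFinite _))
  have hnsurj : Set.range G ≠ Set.univ := by
    intro hs
    apply hgn
    refine ⟨hg, fun B hB => ?_⟩
    obtain ⟨j, rfl⟩ := hPsurj B hB
    obtain ⟨i, rfl⟩ : j ∈ Set.range G := by rw [hs]; trivial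
    obtain ⟨x, hx⟩ := hne i
    exact ⟨g x, ⟨x, rfl⟩, hG i ⟨x, hx, rfl⟩⟩
  have hlt : (Set.range G).ncard < N := by
    have h := Set.ncard_lt_ncard (Set.ssubset_univ_iff.mpr hnsurj) (Set.toFinite _)
    simpa [Set.ncard_univ] using h
  omega
end

section
/- Let U ⊆ T(X,P) ∖ Σ(X,P) be such that Σ(X,P) ∪ U generates the monoid T(X,P). Then for all distinct i, j ∈ {1,…,n} there exist f ∈ U ∩ 𝒜 and distinct k, l ∈ {1,…,n} such that (k)f̄ = (l)f̄, |P_i| = |P_k| and |P_j| = |P_l|. -/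
open Function Set

/-- (Blocks are enumerated as `Pb 0, …, Pb (N-1)` with
nondecreasing sizes.)  If `U ⊆ T(X,P) ∖ Σ(X,P)` is such that `Σ(X,P) ∪ U`
generates the monoid `T(X,P)`, then for all distinct `i, j` there exist
`f ∈ U ∩ 𝒜` and distinct `k, l` such that `(k)f̄ = (l)f̄`, `|P_i| = |P_k|` and
`|P_j| = |P_l|`. -/
theorem generators_contain_A_elements {X : Type*} [Fintype X] [Nonempty X] (r : Setoid X)
    (N : ℕ) (Pb : Fin N → Set X)
    (hPmem : ∀ i, Pb i ∈ Setoid.classes r)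
    (hPinj : Function.Injective Pb)
    (hPsurj : ∀ B ∈ Setoid.classes r, ∃ i, Pb i = B)
    (hPmono : Monotone fun i => (Pb i).ncard)
    (U : Set (Function.End X)) (hU : U ⊆ TSet r \ SigmaSet r)
    (hgen : (Submonoid.closure (SigmaSet r ∪ U) : Set (Function.End X)) = TSet r) :
    ∀ i j : Fin N, i ≠ j →
      ∃ f ∈ U, ∃ F : Fin N → Fin N,
        (∀ c, f '' Pb c ⊆ Pb (F c)) ∧
        (∀ c, Set.InjOn f (Pb c)) ∧
        (Set.range F).ncard = N - 1 ∧
        ∃ k l : Fin N, k ≠ l ∧ F k = F l ∧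
          (Pb k).ncard = (Pb i).ncard ∧ (Pb l).ncard = (Pb j).ncard := by
  classical
  have hcl : ∀ c x, x ∈ Pb c → ∀ y, y ∈ Pb c ↔ r y x := by
    intro c x hx y
    obtain ⟨z, hz⟩ := hPmem c
    rw [hz] at hx ⊢
    simp only [Set.mem_setOf_eq] at hx ⊢
    exact ⟨fun h => r.trans' h (r.symm' hx), fun h => r.trans' h hx⟩
  have hcov : ∀ x, ∃ c, x ∈ Pb c := by
    intro x
    obtain ⟨c, hc⟩ := hPsurj _ (Setoid.mem_classes r x)
    exact ⟨c, by rw [hc]; exact r.refl' x⟩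
  have huniq : ∀ x a b, x ∈ Pb a → x ∈ Pb b → a = b := by
    intro x a b ha hb
    apply hPinj
    ext y
    rw [hcl a x ha, hcl b x hb]
  have hne : ∀ c, ∃ x, x ∈ Pb c := by
    intro c
    obtain ⟨z, hz⟩ := hPmem c
    exact ⟨z, by rw [hz]; exact r.refl' z⟩
  have hbar : ∀ f ∈ TSet r, ∃ F : Fin N → Fin N, ∀ c, ∀ x ∈ Pb c, f x ∈ Pb (F c) := by
    intro f hf
    have : ∀ c, ∃ d, ∀ x ∈ Pb c, f x ∈ Pb d := by
      intro c
      obtain ⟨z, hz⟩ := hne c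
      obtain ⟨d, hd⟩ := hcov (f z)
      refine ⟨d, fun x hx => ?_⟩
      rw [hcl d _ hd]
      exact hf _ _ ((hcl c z hz x).1 hx)
    choose F hF using this
    exact ⟨F, hF⟩
  have key : ∀ h ∈ Submonoid.closure (SigmaSet r ∪ U), ∀ i j : Fin N, i ≠ j →
      ∀ H : Fin N → Fin N, (∀ c, ∀ x ∈ Pb c, h x ∈ Pb (H c)) →
      (∀ c, Set.InjOn h (Pb c)) → H i = H j →
      (∀ a b, H a = H b → a = b ∨ (a = i ∧ b = j) ∨ (a = j ∧ b = i)) →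
      ∃ f ∈ U, ∃ F : Fin N → Fin N,
        (∀ c, f '' Pb c ⊆ Pb (F c)) ∧
        (∀ c, Set.InjOn f (Pb c)) ∧
        (Set.range F).ncard = N - 1 ∧
        ∃ k l : Fin N, k ≠ l ∧ F k = F l ∧
          (Pb k).ncard = (Pb i).ncard ∧ (Pb l).ncard = (Pb j).ncard := by
    intro h hh
    induction hh using Submonoid.closure_induction_right with
    | one =>
      intro i j hij H hH _ hHij _
      exfalso
      obtain ⟨x, hx⟩ := hne i
      obtain ⟨y, hy⟩ := hne j
      have h1 : H i = i := huniq x _ _ (hH i x hx) hx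
      have h2 : H j = j := huniq y _ _ (hH j y hy) hy
      exact hij (by rw [← h1, ← h2, hHij])
    | mul_right h' hh' s hs ih =>
      intro i j hij H hH hinj hHij hHm
      have hsT : s ∈ TSet r := by
        rcases hs with hs | hs
        · exact hs.1
        · exact (hU hs).1
      have hh'T : h' ∈ TSet r := by
        rw [← hgen]; exact hh'
      obtain ⟨S, hS⟩ := hbar s hsT
      obtain ⟨H', hH'⟩ := hbar h' hh'T
      have hcomp : ∀ c, H c = H' (S c) := by
        intro c
        obtain ⟨x, hx⟩ := hne c
        exact huniq (h' (s x)) _ _ (hH c x hx) (hH' _ _ (hS c x hx))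
      have hsinj : ∀ c, Set.InjOn s (Pb c) := by
        intro c x hx y hy hxy
        exact hinj c hx hy (show h' (s x) = h' (s y) by rw [hxy])
      by_cases hSinj : Function.Injective S
      · have hsi : Function.Injective s := by
          intro x y hxy
          obtain ⟨a, ha⟩ := hcov x
          obtain ⟨b, hb⟩ := hcov y
          have hab : a = b := by
            apply hSinj
            apply huniq (s x) _ _ (hS a x ha)
            rw [hxy]; exact hS b y hb
          subst hab
          exact hsinj a ha hb hxy
        have hss : Function.Surjective s := Finite.surjective_of_injective hsi
        have hSs : Function.Surjective S := Finite.surjective_of_injective hSinj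
        have himg : ∀ c, Pb (S c) = s '' Pb c := by
          intro c
          ext x
          constructor
          · intro hx
            obtain ⟨y, rfl⟩ := hss x
            obtain ⟨d, hd⟩ := hcov y
            have : d = c := hSinj (huniq _ _ _ (hS d y hd) hx)
            subst this
            exact ⟨y, hd, rfl⟩
          · rintro ⟨y, hy, rfl⟩
            exact hS c y hy
        have hcard : ∀ c, (Pb (S c)).ncard = (Pb c).ncard := by
          intro c
          rw [himg c, Set.ncard_image_of_injective _ hsi]
        have := ih (S i) (S j) (fun e => hij (hSinj e)) H' hH' ?_ ?_ ?_
        · rwa [hcard, hcard] at this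
        · intro c
          obtain ⟨d, rfl⟩ := hSs c
          rw [himg d]
          rintro _ ⟨x, hx, rfl⟩ _ ⟨y, hy, rfl⟩ hxy
          rw [hinj d hx hy hxy]
        · rw [← hcomp, ← hcomp, hHij]
        · intro a b hab
          obtain ⟨a, rfl⟩ := hSs a
          obtain ⟨b, rfl⟩ := hSs b
          rw [← hcomp, ← hcomp] at hab
          rcases hHm a b hab with h | ⟨h1, h2⟩ | ⟨h1, h2⟩
          · left; rw [h]
          · right; left; exact ⟨by rw [h1], by rw [h2]⟩
          · right; right; exact ⟨by rw [h1], by rw [h2]⟩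
      · have hSm : ∀ a b, S a = S b → a = b ∨ (a = i ∧ b = j) ∨ (a = j ∧ b = i) := by
          intro a b hab
          apply hHm
          rw [hcomp, hcomp, hab]
        have hSij : S i = S j := by
          simp only [Function.Injective, not_forall] at hSinj
          obtain ⟨a, b, hab, hne'⟩ := hSinj
          rcases hSm a b hab with h | ⟨h1, h2⟩ | ⟨h1, h2⟩
          · exact absurd h hne'
          · rw [← h1, ← h2, hab]
          · rw [← h1, ← h2, hab]
        have hsU : s ∈ U := by
          rcases hs with hs | hs
          · exfalso
            apply hSinj
            apply Finite.injective_iff_surjective.2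
            intro c
            obtain ⟨_, ⟨x, rfl⟩, hx⟩ := hs.2 _ (hPmem c)
            obtain ⟨d, hd⟩ := hcov x
            exact ⟨d, huniq _ _ _ (hS d x hd) hx⟩
          · exact hs
        refine ⟨s, hsU, S, ?_, hsinj, ?_, i, j, hij, hSij, rfl, rfl⟩
        · rintro c _ ⟨x, hx, rfl⟩
          exact hS c x hx
        · have hr : Set.range S = S '' {i}ᶜ := by
            ext c
            constructor
            · rintro ⟨a, rfl⟩
              by_cases ha : a = i
              · exact ⟨j, fun e => hij (by simpa using e.symm), by rw [ha, hSij]⟩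
              · exact ⟨a, ha, rfl⟩
            · rintro ⟨a, _, rfl⟩
              exact ⟨a, rfl⟩
          rw [hr, Set.ncard_image_of_injOn, Set.ncard_compl]
          · simp
          · intro a ha b hb hab
            rcases hSm a b hab with h | ⟨h1, h2⟩ | ⟨h1, h2⟩
            · exact h
            · exact absurd h1 ha
            · exact absurd h2 hb
  have main : ∀ i j : Fin N, i ≠ j → (Pb i).ncard ≤ (Pb j).ncard →
      ∃ f ∈ U, ∃ F : Fin N → Fin N,
        (∀ c, f '' Pb c ⊆ Pb (F c)) ∧
        (∀ c, Set.InjOn f (Pb c)) ∧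
        (Set.range F).ncard = N - 1 ∧
        ∃ k l : Fin N, k ≠ l ∧ F k = F l ∧
          (Pb k).ncard = (Pb i).ncard ∧ (Pb l).ncard = (Pb j).ncard := by
    intro i j hij hle
    obtain ⟨e⟩ : Nonempty (Pb i ↪ Pb j) := by
      apply Function.Embedding.nonempty_of_card_le
      rwa [← Nat.card_eq_fintype_card, ← Nat.card_eq_fintype_card]
    let g : Function.End X := fun x => if h : x ∈ Pb i then (e ⟨x, h⟩ : X) else x
    let G : Fin N → Fin N := fun c => if c = i then j else c
    have hg1 : ∀ x (h : x ∈ Pb i), g x = e ⟨x, h⟩ := fun x h => dif_pos h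
    have hg2 : ∀ x, x ∉ Pb i → g x = x := fun x h => dif_neg h
    have hgG : ∀ c, ∀ x ∈ Pb c, g x ∈ Pb (G c) := by
      intro c x hx
      by_cases hc : c = i
      · subst hc
        rw [hg1 x hx]
        simp [G]
      · rw [hg2 x (fun h => hc (huniq x _ _ hx h))]
        simpa [G, hc] using hx
    have hgT : g ∈ TSet r := by
      intro x y hxy
      obtain ⟨c, hc⟩ := hcov y
      exact (hcl _ _ (hgG c y hc) _).1 (hgG c x ((hcl c y hc x).2 hxy))
    rw [← hgen] at hgT
    refine key g hgT i j hij G hgG ?_ ?_ ?_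
    · intro c x hx y hy hxy
      by_cases hc : c = i
      · subst hc
        rw [hg1 x hx, hg1 y hy] at hxy
        simpa using e.injective (Subtype.ext hxy)
      · rwa [hg2 x (fun h => hc (huniq x _ _ hx h)),
          hg2 y (fun h => hc (huniq y _ _ hy h))] at hxy
    · simp [G]
    · intro a b hab
      simp only [G] at hab
      split_ifs at hab with h1 h2 h2
      · left; rw [h1, h2]
      · right; left; exact ⟨h1, hab.symm⟩
      · right; right; exact ⟨hab, h2⟩
      · left; exact hab
  intro i j hij
  rcases le_total (Pb i).ncard (Pb j).ncard with hle | hle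
  · exact main i j hij hle
  · obtain ⟨f, hf, F, h1, h2, h3, k, l, hkl, h4, h5, h6⟩ := main j i hij.symm hle
    exact ⟨f, hf, F, h1, h2, h3, l, k, hkl.symm, h4.symm, h6, h5⟩
end

section
/- Let s be the number of distinct block sizes of P and let r be the number of block sizes that occur in at least two blocks of P. Then the relative rank of T(X,P) modulo Σ(X,P) equals C(s,2) + r, where C(s,2) is the binomial coefficient s choose 2. -/
open Function Set

/-- The relative rank `rank(A : U)` of the monoid given by the subset `A` of `M`
modulo the subset `U`: the least cardinality of a set `W ⊆ A` such that `U ∪ W`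
generates `A`. -/
noncomputable def relRank {M : Type*} [Monoid M] (A U : Set M) : ℕ :=
  sInf {k | ∃ W : Set M, W ⊆ A ∧ W.Finite ∧ W.ncard = k ∧
    (Submonoid.closure (U ∪ W) : Set M) = A}

namespace RelRankAux

open Classical in
/-- The map that acts as `φ` on the block `E` and fixes everything else. -/
noncomputable def G {X Q : Type*} (c : X → Q) (E : Q) (φ : X → X) : Function.End X :=
  fun x => if c x = E then φ x else x

/-- `S` contains all of `Σ`. -/
def Big {X Q : Type*} (c : X → Q) (S : Submonoid (Function.End X)) : Prop :=
  ∀ f : Function.End X, (∀ x y, c x = c y → c (f x) = c (f y)) →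
    (∀ q, ∃ x, c (f x) = q) → f ∈ S

lemma G_pos {X Q : Type*} {c : X → Q} {E : Q} {φ : X → X} {x : X} (h : c x = E) :
    G c E φ x = φ x := by simp [G, h]

lemma G_neg {X Q : Type*} {c : X → Q} {E : Q} {φ : X → X} {x : X} (h : c x ≠ E) :
    G c E φ x = x := by simp [G, h]

lemma big_pres {X Q : Type*} {c : X → Q} (hc : Surjective c) {S : Submonoid (Function.End X)}
    (hS : Big c S) (f : Function.End X) (hf : ∀ x, c (f x) = c x) : f ∈ S := by
  apply hS
  · intro x y h; rw [hf, hf, h]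
  · intro q; obtain ⟨x, rfl⟩ := hc q; exact ⟨x, hf x⟩

lemma lemA {X Q : Type*} [Finite X] {c : X → Q} (hc : Surjective c)
    {S : Submonoid (Function.End X)} (hS : Big c S)
    (hG : ∀ E D (φ : X → X), E ≠ D → (∀ x, c x = E → c (φ x) = D) → G c E φ ∈ S) :
    ∀ (n : ℕ) (f : Function.End X), {x | c (f x) ≠ c x}.ncard = n →
      (∀ x y, c x = c y → c (f x) = c (f y)) → f ∈ S := by
  classical
  intro n
  induction n using Nat.strong_induction_on with
  | _ n ih =>
    intro f hn hf
    by_cases hs : ∀ q, ∃ x, c (f x) = q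
    · exact hS f hf hs
    push Not at hs
    obtain ⟨E, hE⟩ := hs
    obtain ⟨x0, hx0⟩ := hc E
    let f' : Function.End X := fun x => if c x = E then x else f x
    have hff : f = G c E f * f' := by
      funext x
      change f x = G c E f (f' x)
      by_cases h : c x = E
      · have : f' x = x := by simp [f', h]
        rw [this]
        exact (G_pos (φ := f) h).symm
      · have : f' x = f x := by simp [f', h]
        rw [this]
        exact (G_neg (φ := f) (hE x)).symm
    rw [hff]
    apply S.mul_mem
    · apply hG E (c (f x0)) f (hE x0).symm
      intro x hx
      exact hf x x0 (hx.trans hx0.symm)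
    · refine ih _ ?_ f' rfl ?_
      · rw [← hn]
        apply Set.ncard_lt_ncard _ (Set.toFinite _)
        refine ⟨?_, ?_⟩
        · intro x hx
          simp only [Set.mem_ofPred_eq] at hx ⊢
          by_cases h : c x = E
          · simp [f', h] at hx
          · simpa [f', h] using hx
        · intro h
          have h1 : x0 ∈ {x | c (f x) ≠ c x} := by
            simp only [Set.mem_ofPred_eq]; rw [hx0]; exact hE x0
          have h2 := h h1
          simp [f', hx0] at h2
      · intro x y hxy
        by_cases h : c x = E
        · have h' : c y = E := hxy ▸ h
          simp [f', h, h']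
        · have h' : c y ≠ E := hxy ▸ h
          simp [f', h, h', hf x y hxy]

lemma factor {A B : Type*} [Finite B] (i : A → B) (hi : Injective i) (φ : A → B) :
    ∃ (α : A → A) (β : Equiv.Perm B), ∀ x, β (i (α x)) = φ x := by
  classical
  have : Fintype B := Fintype.ofFinite B
  choose sec hsec using fun y : Set.range φ => y.2
  have hj : Injective (fun y : Set.range φ => i (sec y)) := by
    intro y z h
    have := hi h
    apply Subtype.ext
    rw [← hsec y, ← hsec z, this]
  let e := (Equiv.ofInjective _ hj).symm
  refine ⟨fun x => sec ⟨φ x, x, rfl⟩, Equiv.extendSubtype (p := fun b => b ∈ Set.range (fun y : Set.range φ => i (sec y))) (q := fun b => b ∈ Set.range φ) e, ?_⟩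
  intro x
  rw [Equiv.extendSubtype_apply_of_mem _ _ ⟨⟨φ x, x, rfl⟩, rfl⟩]
  have : e ⟨i (sec ⟨φ x, x, rfl⟩), ⟨⟨φ x, x, rfl⟩, rfl⟩⟩ = ⟨φ x, x, rfl⟩ := by
    rw [Equiv.symm_apply_eq]
    rfl
  rw [this]

/-- There is an injective `E → D` whose extension by the identity lies in `S`. -/
def Good {X Q : Type*} (c : X → Q) (S : Submonoid (Function.End X)) (E D : Q) : Prop :=
  ∃ i : X → X, (∀ x, c x = E → c (i x) = D) ∧ (∀ x y, c x = E → c y = E → i x = i y → x = y) ∧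
    G c E i ∈ S

lemma lemB1 {X Q : Type*} [Finite X] {c : X → Q} (hc : Surjective c)
    {S : Submonoid (Function.End X)} (hS : Big c S) {E D : Q} (hED : E ≠ D)
    (hg : Good c S E D) (φ : X → X) (hφ : ∀ x, c x = E → c (φ x) = D) : G c E φ ∈ S := by
  classical
  obtain ⟨i, hi, hinj, hiS⟩ := hg
  obtain ⟨α, β, hαβ⟩ := factor (A := {x // c x = E}) (B := {x // c x = D})
    (fun x => ⟨i x.1, hi x.1 x.2⟩)
    (fun x y h => Subtype.ext (hinj _ _ x.2 y.2 (Subtype.ext_iff.1 h)))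
    (fun x => ⟨φ x.1, hφ x.1 x.2⟩)
  let a : Function.End X := fun x => if h : c x = E then (α ⟨x, h⟩).1 else x
  let b : Function.End X := fun x => if h : c x = D then (β ⟨x, h⟩).1 else x
  let b' : Function.End X := fun x => if h : c x = D then (β.symm ⟨x, h⟩).1 else x
  have ha : a ∈ S := by
    apply big_pres hc hS
    intro x
    by_cases h : c x = E
    · simp only [a, h, dif_pos]; exact (α ⟨x, h⟩).2
    · simp [a, h]
  have hb : b ∈ S := by
    apply big_pres hc hS
    intro x
    by_cases h : c x = D
    · simp only [b, h, dif_pos]; exact (β ⟨x, h⟩).2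
    · simp [b, h]
  have hb' : b' ∈ S := by
    apply big_pres hc hS
    intro x
    by_cases h : c x = D
    · simp only [b', h, dif_pos]; exact (β.symm ⟨x, h⟩).2
    · simp [b', h]
  have key : G c E φ = b * (G c E i * (a * b')) := by
    funext x
    change G c E φ x = b (G c E i (a (b' x)))
    by_cases h : c x = E
    · have h1 : b' x = x := by
        have : c x ≠ D := h ▸ hED
        simp [b', this]
      have h2 : a x = (α ⟨x, h⟩).1 := by simp [a, h]
      rw [h1, h2, G_pos h, G_pos (α ⟨x, h⟩).2]
      have h3 : c (i (α ⟨x, h⟩).1) = D := hi _ (α ⟨x, h⟩).2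
      have h4 := hαβ ⟨x, h⟩
      simp only [b, h3, dif_pos, h4]
    · rw [G_neg h]
      by_cases h' : c x = D
      · have h1 : b' x = (β.symm ⟨x, h'⟩).1 := by simp [b', h']
        have h2 : c (β.symm ⟨x, h'⟩).1 = D := (β.symm ⟨x, h'⟩).2
        have h3 : c (β.symm ⟨x, h'⟩).1 ≠ E := by rw [h2]; exact hED.symm
        have h4 : a (β.symm ⟨x, h'⟩).1 = (β.symm ⟨x, h'⟩).1 := by simp only [a, h3, dif_neg, not_false_eq_true]
        rw [h1, h4, G_neg h3]
        simp only [b, h2, dif_pos]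
        simp
      · have h1 : b' x = x := by simp [b', h']
        have h2 : a x = x := by simp [a, h]
        have h3 : b x = x := by simp [b, h']
        rw [h1, h2, G_neg h, h3]
  rw [key]
  exact S.mul_mem hb (S.mul_mem hiS (S.mul_mem ha hb'))

lemma lemB2 {X Q : Type*} {c : X → Q} (hc : Surjective c)
    {S : Submonoid (Function.End X)} (hS : Big c S) {E D : Q} (hED : E ≠ D)
    (hg : Good c S E D) (φ : X → X) (hφ : ∀ x, c x = D → c (φ x) = E) : G c D φ ∈ S := by
  classical
  obtain ⟨i, hi, hinj, hiS⟩ := hg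
  obtain ⟨e0, he0⟩ := hc E
  obtain ⟨d0, hd0⟩ := hc D
  have : ∀ y, ∃ x, c x = E ∧ ∀ z, c z = E → i z = y → z = x := by
    intro y
    by_cases h : ∃ x, c x = E ∧ i x = y
    · obtain ⟨x, hx, rfl⟩ := h
      exact ⟨x, hx, fun z hz h => hinj z x hz hx h⟩
    · exact ⟨e0, he0, fun z hz h' => (h ⟨z, hz, h'⟩).elim⟩
  choose κ hκE hκ using this
  have hκi : ∀ x, c x = E → κ (i x) = x := fun x hx => (hκ (i x) x hx rfl).symm
  let τ : Function.End X := fun x => if c x = D then κ x else if c x = E then d0 else x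
  have hτ : τ ∈ S := by
    apply hS
    · intro x y hxy
      by_cases h : c x = D
      · have h' : c y = D := hxy ▸ h
        simp [τ, h, h', hκE]
      · have h' : c y ≠ D := hxy ▸ h
        by_cases k : c x = E
        · have k' : c y = E := hxy ▸ k
          simp [τ, k, k', hED]
        · have k' : c y ≠ E := hxy ▸ k
          simp [τ, h, h', k, k', hxy]
    · intro q
      by_cases h : q = E
      · exact ⟨d0, by simp [τ, hd0, hκE, h]⟩
      by_cases h' : q = D
      · exact ⟨e0, by simp [τ, he0, hED, hd0, h']⟩
      obtain ⟨x, rfl⟩ := hc q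
      exact ⟨x, by simp [τ, h, h']⟩
  have ha : G c D (i ∘ φ) ∈ S := by
    apply big_pres hc hS
    intro x
    by_cases h : c x = D
    · rw [G_pos h, h]; exact hi _ (hφ _ h)
    · rw [G_neg h]
  have key : G c D φ = τ * (G c E i * G c D (i ∘ φ)) := by
    funext x
    change _ = τ (G c E i (G c D (i ∘ φ) x))
    by_cases h : c x = D
    · have h1 : c (i (φ x)) = D := hi _ (hφ _ h)
      rw [G_pos h, G_pos h, comp_apply, G_neg (by rw [h1]; exact hED.symm)]
      simp [τ, h1, hκi _ (hφ x h)]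
    · rw [G_neg h, G_neg h]
      by_cases h' : c x = E
      · rw [G_pos h']
        simp [τ, hi x h', hκi x h']
      · rw [G_neg h']
        simp [τ, h, h']
  rw [key]
  exact S.mul_mem hτ (S.mul_mem hiS ha)

/-- size of a block -/
noncomputable def sz {X Q : Type*} (c : X → Q) (q : Q) : ℕ := {x | c x = q}.ncard

lemma exists_unit {X Q : Type*} [Finite X] (c : X → Q) (π : Equiv.Perm Q)
    (hπ : ∀ q, sz c (π q) = sz c q) : ∃ u : Equiv.Perm X, ∀ x, c (u x) = π (c x) := by
  have : ∀ q, Nonempty ({a // π (c a) = q} ≃ {b // c b = q}) := by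
    intro q
    rw [← Finite.card_eq]
    have h := hπ (π.symm q)
    rw [Equiv.apply_symm_apply] at h
    have h1 : Nat.card {b // c b = q} = sz c q := rfl
    have h2 : Nat.card {a // π (c a) = q} = sz c (π.symm q) := by
      simp_rw [← Equiv.eq_symm_apply]
      rfl
    rw [h1, h2, h]
  let e' : ∀ q, {a // (π ∘ c) a = q} ≃ {b // c b = q} := fun q => (this q).some
  exact ⟨Equiv.ofFiberEquiv e', fun x => Equiv.ofFiberEquiv_map e' x⟩

lemma lemC {X Q : Type*} [Finite X] {c : X → Q} (hc : Surjective c)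
    {S : Submonoid (Function.End X)} (hS : Big c S) {E D : Q} (hg : Good c S E D)
    (π : Equiv.Perm Q) (hπ : ∀ q, sz c (π q) = sz c q) : Good c S (π E) (π D) := by
  obtain ⟨u, hu⟩ := exists_unit c π hπ
  obtain ⟨i, hi, hinj, hiS⟩ := hg
  have hu' : ∀ x, c (u.symm x) = π.symm (c x) := by
    intro x
    rw [Equiv.eq_symm_apply, ← hu, Equiv.apply_symm_apply]
  have hE : ∀ x, c x = π E → c (u.symm x) = E := by
    intro x hx; rw [hu', hx, Equiv.symm_apply_apply]
  let v : Function.End X := fun x => u x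
  let v' : Function.End X := fun x => u.symm x
  have m1 : v ∈ S := by
    apply hS
    · intro x y h; change c (u x) = c (u y); rw [hu, hu, h]
    · intro q; obtain ⟨x, hx⟩ := hc q
      exact ⟨u.symm x, by simp [v, hx]⟩
  have m2 : v' ∈ S := by
    apply hS
    · intro x y h; change c (u.symm x) = c (u.symm y); rw [hu', hu', h]
    · intro q; obtain ⟨x, hx⟩ := hc q
      exact ⟨u x, by simp [v', hx]⟩
  refine ⟨fun x => u (i (u.symm x)), ?_, ?_, ?_⟩
  · intro x hx
    rw [hu, hi _ (hE x hx)]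
  · intro x y hx hy h
    exact u.symm.injective (hinj _ _ (hE x hx) (hE y hy) (u.injective h))
  · have : G c (π E) (fun x => u (i (u.symm x))) =
        v * (G c E i * v') := by
      funext x
      change _ = u (G c E i (u.symm x))
      by_cases h : c x = π E
      · rw [G_pos h, G_pos (hE x h)]
      · rw [G_neg h, G_neg, Equiv.apply_symm_apply]
        rw [hu']
        intro h'
        exact h (by rw [← h', Equiv.apply_symm_apply])
    rw [this]
    exact S.mul_mem m1 (S.mul_mem hiS m2)

lemma lemC' {X Q : Type*} [Finite X] {c : X → Q} (hc : Surjective c)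
    {S : Submonoid (Function.End X)} (hS : Big c S) {A B E D : Q} (hAB : A ≠ B) (hED : E ≠ D)
    (h1 : sz c A = sz c E) (h2 : sz c B = sz c D) (hg : Good c S A B) : Good c S E D := by
  classical
  have hsw : ∀ p q : Q, sz c p = sz c q → ∀ t, sz c (Equiv.swap p q t) = sz c t := by
    intro p q h t
    rw [Equiv.swap_apply_def]
    split_ifs with h1 h2
    · rw [h1, h]
    · rw [h2, h]
    · rfl
  have g1 := lemC hc hS hg (Equiv.swap A E) (hsw A E h1)
  rw [Equiv.swap_apply_left] at g1
  set B' := Equiv.swap A E B with hB'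
  have hB'E : E ≠ B' := by
    intro h
    have : Equiv.swap A E A = Equiv.swap A E B := by rw [Equiv.swap_apply_left, ← hB', h]
    exact hAB ((Equiv.swap A E).injective this)
  have h3 : sz c B' = sz c D := by rw [hB', hsw A E h1, h2]
  have g2 := lemC hc hS g1 (Equiv.swap B' D) (hsw B' D h3)
  rwa [Equiv.swap_apply_left, Equiv.swap_apply_of_ne_of_ne hB'E hED] at g2

/-- the type of a pair of blocks -/
noncomputable def key {X Q : Type*} (c : X → Q) (E D : Q) : Finset ℕ := {sz c E, sz c D}

lemma pair_eq {a b e d : ℕ} (h : ({a, b} : Finset ℕ) = {e, d}) (h1 : a ≤ b) (h2 : e ≤ d) :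
    a = e ∧ b = d := by
  have ha : a ∈ ({e, d} : Finset ℕ) := h ▸ (by simp)
  have hb : b ∈ ({e, d} : Finset ℕ) := h ▸ (by simp)
  have he : e ∈ ({a, b} : Finset ℕ) := h ▸ (by simp)
  have hd : d ∈ ({a, b} : Finset ℕ) := h ▸ (by simp)
  simp only [Finset.mem_insert, Finset.mem_singleton] at ha hb he hd
  omega

/-- all types of pairs of distinct blocks -/
def J {X Q : Type*} (c : X → Q) : Set (Finset ℕ) := {j | ∃ E D, E ≠ D ∧ key c E D = j}

lemma J_spec {X Q : Type*} [Finite X] [Nonempty X] (c : X → Q) (j : J c) :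
    ∃ E D, ∃ i : X → X, E ≠ D ∧ sz c E ≤ sz c D ∧ key c E D = j.1 ∧
      (∀ x, c x = E → c (i x) = D) ∧ (∀ x y, c x = E → c y = E → i x = i y → x = y) := by
  have aux : ∀ E D, E ≠ D → sz c E ≤ sz c D → key c E D = j.1 → ∃ E D, ∃ i : X → X, E ≠ D ∧
      sz c E ≤ sz c D ∧ key c E D = j.1 ∧ (∀ x, c x = E → c (i x) = D) ∧
      (∀ x y, c x = E → c y = E → i x = i y → x = y) := by
    intro E D h h1 h2
    obtain ⟨i, hi1, hi2⟩ := Set.Finite.exists_injOn_of_encard_le (s := {x | c x = E})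
      (t := {x | c x = D}) (Set.toFinite _) (by
        rw [← Set.Finite.cast_ncard_eq (Set.toFinite _), ← Set.Finite.cast_ncard_eq (Set.toFinite _)]
        exact_mod_cast h1)
    exact ⟨E, D, i, h, h1, h2, fun x hx => hi1 hx, fun x y hx hy hxy => hi2 hx hy hxy⟩
  obtain ⟨j, E, D, h, rfl⟩ := j
  rcases le_total (sz c E) (sz c D) with h1 | h1
  · exact aux E D h h1 rfl
  · exact aux D E h.symm h1 (Finset.pair_comm _ _)

lemma upper {X Q : Type*} [Finite X] [Nonempty X] {c : X → Q} (hc : Surjective c) :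
    ∃ W : Set (Function.End X), (∀ f ∈ W, ∀ x y, c x = c y → c (f x) = c (f y)) ∧
      W.ncard ≤ (J c).ncard ∧ ∀ S : Submonoid (Function.End X), Big c S → W ⊆ S →
      ∀ f : Function.End X, (∀ x y, c x = c y → c (f x) = c (f y)) → f ∈ S := by
  choose A B i hAB hsz hkey hi hinj using J_spec c
  have : Finite Q := Finite.of_surjective c hc
  have hJ : (J c).Finite := by
    apply Set.Finite.subset (Set.finite_range (fun p : Q × Q => key c p.1 p.2))
    rintro j ⟨E, D, -, rfl⟩
    exact ⟨(E, D), rfl⟩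
  have := hJ.to_subtype
  refine ⟨Set.range (fun j => G c (A j) (i j)), ?_, ?_, ?_⟩
  · rintro f ⟨j, rfl⟩ x y h
    by_cases hx : c x = A j
    · have hy : c y = A j := h ▸ hx
      change c (G c (A j) (i j) x) = c (G c (A j) (i j) y)
      rw [G_pos hx, G_pos hy, hi j x hx, hi j y hy]
    · have hy : c y ≠ A j := h ▸ hx
      change c (G c (A j) (i j) x) = c (G c (A j) (i j) y)
      rw [G_neg hx, G_neg hy, h]
  · rw [← Set.image_univ]
    refine (Set.ncard_image_le Set.finite_univ).trans ?_
    rw [Set.ncard_univ]; exact le_rfl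
  · intro S hS hW f hf
    have good : ∀ E D, E ≠ D → sz c E ≤ sz c D → Good c S E D := by
      intro E D hED hle
      let j : J c := ⟨key c E D, E, D, hED, rfl⟩
      have hj := pair_eq (hkey j) (hsz j) hle
      exact lemC' hc hS (hAB j) hED hj.1 hj.2 ⟨i j, hi j, hinj j, hW ⟨j, rfl⟩⟩
    refine lemA hc hS ?_ _ f rfl hf
    intro E D φ hED hφ
    rcases le_total (sz c E) (sz c D) with h1 | h1
    · exact lemB1 hc hS hED (good E D hED h1) φ hφ
    · exact lemB2 hc hS hED.symm (good D E hED.symm h1) φ hφ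

/-- `f` is injective on blocks, and collapses exactly pairs of blocks of type `j`. -/
def P {X Q : Type*} (c : X → Q) (j : Finset ℕ) (f : Function.End X) : Prop :=
  (∀ x y, c x = c y → f x = f y → x = y) ∧ (∃ x y, c x ≠ c y ∧ c (f x) = c (f y)) ∧
    ∀ x y, c x ≠ c y → c (f x) = c (f y) → key c (c x) (c y) = j

lemma peel {X Q : Type*} [Finite X] {c : X → Q} {U W : Set (Function.End X)}
    (hU : ∀ f ∈ U, (∀ x y, c x = c y → c (f x) = c (f y)))
    (hU2 : ∀ f ∈ U, ∀ x y, c (f x) = c (f y) → c x = c y)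
    (hW : ∀ f ∈ W, ∀ x y, c x = c y → c (f x) = c (f y)) (j : Finset ℕ) (f : Function.End X)
    (hf : f ∈ Submonoid.closure (U ∪ W)) :
    (∀ x y, c x = c y → c (f x) = c (f y)) ∧ (P c j f → ∃ w ∈ W, P c j w) := by
  induction hf using Submonoid.closure_induction_right with
  | one =>
    refine ⟨fun x y h => h, ?_⟩
    rintro ⟨-, ⟨x, y, h, h'⟩, -⟩
    exact (h h').elim
  | mul_right h hh g hg ih =>
    have hgT : ∀ x y, c x = c y → c (g x) = c (g y) := by
      rcases hg with hg | hg
      · exact hU g hg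
      · exact hW g hg
    refine ⟨fun x y hxy => ih.1 _ _ (hgT _ _ hxy), ?_⟩
    rintro ⟨p1, p2, p3⟩
    change ∀ x y, c x = c y → h (g x) = h (g y) → x = y at p1
    change ∃ x y, c x ≠ c y ∧ c (h (g x)) = c (h (g y)) at p2
    change ∀ x y, c x ≠ c y → c (h (g x)) = c (h (g y)) → key c (c x) (c y) = j at p3
    by_cases hb : ∀ x y, c (g x) = c (g y) → c x = c y
    · apply ih.2
      have ginj : Injective g := by
        intro x y hxy
        have hxy' : g x = g y := hxy
        exact p1 x y (hb x y (by rw [hxy'])) (by rw [hxy'])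
      have gsurj : Surjective g := Finite.surjective_of_injective ginj
      have hsz : ∀ x, sz c (c (g x)) = sz c (c x) := by
        intro x
        unfold sz
        rw [← Set.ncard_image_of_injective {y | c y = c x} ginj]
        congr 1
        ext z
        constructor
        · intro hz
          obtain ⟨y, rfl⟩ := gsurj z
          exact ⟨y, hb _ _ hz, rfl⟩
        · rintro ⟨y, hy, rfl⟩
          exact hgT _ _ hy
      have hkey : ∀ x y, key c (c (g x)) (c (g y)) = key c (c x) (c y) := by
        intro x y; unfold key; rw [hsz, hsz]
      refine ⟨?_, ?_, ?_⟩
      · intro u v huv e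
        obtain ⟨x, rfl⟩ := gsurj u
        obtain ⟨y, rfl⟩ := gsurj v
        rw [p1 x y (hb _ _ huv) e]
      · obtain ⟨x, y, hxy, e⟩ := p2
        exact ⟨g x, g y, fun h => hxy (hb _ _ h), e⟩
      · intro u v huv e
        obtain ⟨x, rfl⟩ := gsurj u
        obtain ⟨y, rfl⟩ := gsurj v
        rw [hkey]
        exact p3 x y (fun h => huv (hgT _ _ h)) e
    · rcases hg with hg | hg
      · exact (hb (hU2 g hg)).elim
      refine ⟨g, hg, ?_, ?_, ?_⟩
      · intro x y hxy e
        exact p1 x y hxy (by rw [e])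
      · push Not at hb
        obtain ⟨x, y, h1, h2⟩ := hb
        exact ⟨x, y, h2, h1⟩
      · intro x y hxy e
        exact p3 x y hxy (ih.1 _ _ e)

lemma lower {X Q : Type*} [Finite X] [Nonempty X] {c : X → Q} (hc : Surjective c)
    {U W : Set (Function.End X)}
    (hU : ∀ f ∈ U, (∀ x y, c x = c y → c (f x) = c (f y)))
    (hU2 : ∀ f ∈ U, ∀ x y, c (f x) = c (f y) → c x = c y)
    (hW : ∀ f ∈ W, ∀ x y, c x = c y → c (f x) = c (f y))
    (hcl : ∀ f : Function.End X, (∀ x y, c x = c y → c (f x) = c (f y)) →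
      f ∈ Submonoid.closure (U ∪ W)) : (J c).ncard ≤ W.ncard := by
  have hfin : Finite (Function.End X) := inferInstanceAs (Finite (X → X))
  have main : ∀ j ∈ J c, ∃ w ∈ W, P c j w := by
    intro j hj
    obtain ⟨E, D, i, hED, -, hk, hi, hinj⟩ := J_spec c ⟨j, hj⟩
    have hT : ∀ x y, c x = c y → c (G c E i x) = c (G c E i y) := by
      intro x y h
      by_cases hx : c x = E
      · have hy : c y = E := h ▸ hx
        rw [G_pos hx, G_pos hy, hi x hx, hi y hy]
      · have hy : c y ≠ E := h ▸ hx
        rw [G_neg hx, G_neg hy, h]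
    refine (peel hU hU2 hW j (G c E i) (hcl _ hT)).2 ⟨?_, ?_, ?_⟩
    · intro x y h e
      by_cases hx : c x = E
      · have hy : c y = E := h ▸ hx
        rw [G_pos hx, G_pos hy] at e
        exact hinj x y hx hy e
      · have hy : c y ≠ E := h ▸ hx
        rwa [G_neg hx, G_neg hy] at e
    · obtain ⟨x, hx⟩ := hc E
      obtain ⟨y, hy⟩ := hc D
      refine ⟨x, y, by rwa [hx, hy], ?_⟩
      rw [G_pos hx, G_neg (by rw [hy]; exact hED.symm), hi x hx, hy]
    · intro x y h e
      by_cases hx : c x = E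
      · have hy : c y ≠ E := fun h' => h (hx.trans h'.symm)
        rw [G_pos hx, G_neg hy, hi x hx] at e
        rw [hx, ← e]; exact hk
      · rw [G_neg hx] at e
        by_cases hy : c y = E
        · rw [G_pos hy, hi y hy] at e
          rw [hy, e]
          exact (Finset.pair_comm _ _).trans hk
        · rw [G_neg hy] at e
          exact (h e).elim
  choose! w hw hP using main
  refine Set.ncard_le_ncard_of_injOn w hw ?_ (Set.toFinite _)
  intro j hj j' hj' e
  obtain ⟨-, ⟨x, y, h1, h2⟩, h3⟩ := hP j hj
  rw [← h3 x y h1 h2]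
  have h4 := (hP j' hj').2.2
  rw [e] at h2
  exact h4 x y h1 h2

lemma J_card {X Q : Type*} [Finite Q] (c : X → Q) :
    (J c).ncard = {s | ∃ q, sz c q = s}.ncard.choose 2 +
      {s | ∃ p q, p ≠ q ∧ sz c p = s ∧ sz c q = s}.ncard := by
  classical
  have hfin : {s | ∃ q, sz c q = s}.Finite := Set.finite_range (sz c)
  have hfin2 : {s | ∃ p q, p ≠ q ∧ sz c p = s ∧ sz c q = s}.Finite := by
    apply hfin.subset
    rintro s ⟨p, q, -, h, -⟩
    exact ⟨p, h⟩
  have hJ : J c = ↑(Finset.powersetCard 2 hfin.toFinset) ∪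
      (fun a : ℕ => ({a} : Finset ℕ)) '' {s | ∃ p q, p ≠ q ∧ sz c p = s ∧ sz c q = s} := by
    ext j
    constructor
    · rintro ⟨E, D, hED, rfl⟩
      by_cases h : sz c E = sz c D
      · right
        exact ⟨sz c D, ⟨E, D, hED, h, rfl⟩, by simp [key, h]⟩
      · left
        simp only [Finset.mem_coe, Finset.mem_powersetCard]
        refine ⟨?_, Finset.card_pair h⟩
        intro a ha
        simp only [key, Finset.mem_insert, Finset.mem_singleton] at ha
        rw [Set.Finite.mem_toFinset]
        rcases ha with rfl | rfl
        · exact ⟨E, rfl⟩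
        · exact ⟨D, rfl⟩
    · rintro (h | ⟨a, ⟨p, q, hpq, h1, h2⟩, rfl⟩)
      · simp only [Finset.mem_coe, Finset.mem_powersetCard] at h
        obtain ⟨h1, h2⟩ := h
        obtain ⟨a, b, hab, rfl⟩ := Finset.card_eq_two.1 h2
        have ha : a ∈ hfin.toFinset := h1 (by simp)
        have hb : b ∈ hfin.toFinset := h1 (by simp)
        rw [Set.Finite.mem_toFinset] at ha hb
        obtain ⟨p, rfl⟩ := ha
        obtain ⟨q, rfl⟩ := hb
        exact ⟨p, q, fun h => hab (by rw [h]), rfl⟩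
      · exact ⟨p, q, hpq, by simp [key, h1, h2]⟩
  rw [hJ, Set.ncard_union_eq _ (Set.toFinite _) (hfin2.image _), Set.ncard_coe_finset,
    Finset.card_powersetCard, Set.ncard_image_of_injective _ Finset.singleton_injective,
    Set.ncard_eq_toFinset_card _ hfin]
  rw [Set.disjoint_left]
  rintro j hj ⟨a, -, rfl⟩
  simp [Finset.mem_powersetCard] at hj

lemma blockCount_eq {X : Type*} (r : Setoid X) (s : ℕ) :
    blockCount r s = {q | sz (Quotient.mk r) q = s}.ncard := by
  have hinj : Injective (fun q : Quotient r => {x | Quotient.mk r x = q}) := by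
    intro p q h
    obtain ⟨x, rfl⟩ := Quotient.exists_rep p
    have : x ∈ {x | Quotient.mk r x = q} := by
      rw [← show _ = {x | Quotient.mk r x = q} from h]; rfl
    exact this
  unfold blockCount
  rw [← Set.ncard_image_of_injective _ hinj]
  congr 1
  ext B
  have hcl : ∀ y, {x | Quotient.mk r x = Quotient.mk r y} = {x | r x y} := by
    intro y; ext x; exact Quotient.eq
  constructor
  · rintro ⟨⟨y, rfl⟩, h⟩
    refine ⟨Quotient.mk r y, ?_, hcl y⟩
    change Set.ncard _ = s
    rw [hcl]; exact h
  · rintro ⟨q, h, rfl⟩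
    obtain ⟨y, rfl⟩ := Quotient.exists_rep q
    exact ⟨⟨y, hcl y⟩, h⟩

end RelRankAux

open RelRankAux in
/-- If `s` is the number of distinct block sizes of the
partition and `r'` is the number of block sizes occurring in at least two
blocks, then the relative rank of `T(X,P)` modulo `Σ(X,P)` is `C(s,2) + r'`. -/
theorem relRank_TXP_SigmaXP {X : Type*} [Fintype X] [Nonempty X] (r : Setoid X) :
    relRank (TSet r) (SigmaSet r) =
      {s : ℕ | blockCount r s ≠ 0}.ncard.choose 2 +
        {s : ℕ | 2 ≤ blockCount r s}.ncard := by
  have hc : Surjective (Quotient.mk r) := Quotient.exists_rep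
  have hr : ∀ x y, r x y ↔ Quotient.mk r x = Quotient.mk r y := fun x y => Quotient.eq.symm
  have e1 : {s : ℕ | blockCount r s ≠ 0} = {s | ∃ q, sz (Quotient.mk r) q = s} := by
    ext s
    simp only [Set.mem_ofPred_eq, blockCount_eq, ← Nat.pos_iff_ne_zero]
    rw [Set.ncard_pos (Set.toFinite _)]
    rfl
  have e2 : {s : ℕ | 2 ≤ blockCount r s} =
      {s | ∃ p q, p ≠ q ∧ sz (Quotient.mk r) p = s ∧ sz (Quotient.mk r) q = s} := by
    ext s
    simp only [Set.mem_ofPred_eq, blockCount_eq]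
    rw [← Nat.lt_iff_add_one_le, Set.one_lt_ncard (Set.toFinite _)]
    constructor
    · rintro ⟨p, hp, q, hq, h⟩
      exact ⟨p, q, h, hp, hq⟩
    · rintro ⟨p, q, h, hp, hq⟩
      exact ⟨p, hp, q, hq, h⟩
  rw [e1, e2, ← J_card (Quotient.mk r)]
  have hT : ∀ f : Function.End X, f ∈ TSet r ↔ ∀ x y, Quotient.mk r x = Quotient.mk r y →
      Quotient.mk r (f x) = Quotient.mk r (f y) := by
    intro f
    simp only [TSet, Set.mem_ofPred_eq, hr]
  have hSig : ∀ f : Function.End X, f ∈ SigmaSet r ↔ f ∈ TSet r ∧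
      ∀ q, ∃ x, Quotient.mk r (f x) = q := by
    intro f
    refine and_congr Iff.rfl ⟨?_, ?_⟩
    · intro h q
      obtain ⟨y, rfl⟩ := hc q
      obtain ⟨z, ⟨x, rfl⟩, hx⟩ := h {x | r x y} ⟨y, rfl⟩
      exact ⟨x, (hr _ _).1 hx⟩
    · rintro h B ⟨y, rfl⟩
      obtain ⟨x, hx⟩ := h (Quotient.mk r y)
      exact ⟨f x, ⟨x, rfl⟩, (hr _ _).2 hx⟩
  have hSig2 : ∀ f ∈ SigmaSet r, ∀ x y, Quotient.mk r (f x) = Quotient.mk r (f y) →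
      Quotient.mk r x = Quotient.mk r y := by
    intro f hf
    obtain ⟨h1, h2⟩ := (hSig f).1 hf
    rw [hT] at h1
    let fb : Quotient r → Quotient r := Quotient.lift (fun x => Quotient.mk r (f x))
      (fun x y h => h1 x y (Quotient.sound h))
    have hs : Surjective fb := by
      intro q
      obtain ⟨x, hx⟩ := h2 q
      exact ⟨Quotient.mk r x, hx⟩
    have hi : Injective fb := Finite.injective_iff_surjective.2 hs
    intro x y h
    exact hi h
  have hfin : Finite (Function.End X) := inferInstanceAs (Finite (X → X))
  have low : ∀ k ∈ {k | ∃ W : Set (Function.End X), W ⊆ TSet r ∧ W.Finite ∧ W.ncard = k ∧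
      (Submonoid.closure (SigmaSet r ∪ W) : Set (Function.End X)) = TSet r},
      (J (Quotient.mk r)).ncard ≤ k := by
    rintro k ⟨W, hW, -, rfl, hcl⟩
    refine lower hc (U := SigmaSet r) (fun f hf => (hT f).1 hf.1) hSig2
      (fun f hf => (hT f).1 (hW hf)) ?_
    intro f hf
    have : f ∈ (Submonoid.closure (SigmaSet r ∪ W) : Set (Function.End X)) := by
      rw [hcl]; exact (hT f).2 hf
    exact this
  obtain ⟨W, hW, hcard, hgen⟩ := upper hc
  have hmem : W.ncard ∈ {k | ∃ W : Set (Function.End X), W ⊆ TSet r ∧ W.Finite ∧ W.ncard = k ∧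
      (Submonoid.closure (SigmaSet r ∪ W) : Set (Function.End X)) = TSet r} := by
    have hWT : W ⊆ TSet r := fun f hf => (hT f).2 (hW f hf)
    refine ⟨W, hWT, Set.toFinite _, rfl, Set.Subset.antisymm ?_ ?_⟩
    · let M : Submonoid (Function.End X) :=
        { carrier := TSet r
          one_mem' := fun x y h => h
          mul_mem' := fun {f g} hf hg x y h => hf _ _ (hg _ _ h) }
      have : Submonoid.closure (SigmaSet r ∪ W) ≤ M := by
        rw [Submonoid.closure_le]
        exact Set.union_subset (fun f hf => hf.1) hWT
      exact this
    · intro f hf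
      refine hgen (Submonoid.closure (SigmaSet r ∪ W)) ?_ ?_ f ((hT f).1 hf)
      · intro g hg1 hg2
        exact Submonoid.subset_closure (Or.inl ((hSig g).2 ⟨(hT g).2 hg1, hg2⟩))
      · exact fun g hg => Submonoid.subset_closure (Or.inr hg)
  apply le_antisymm
  · exact (Nat.sInf_le hmem).trans hcard
  · exact le_csInf ⟨_, hmem⟩ low
end

section
/- The relative rank of T(X,P) modulo Σ(X,P) equals C(p+q,2) + p + h(p,q,t), where C(p+q,2) is the binomial coefficient (p+q) choose 2. -/
open Function Set

/-- `h(p,q,0) = 0`, `h(p,q,1) = p + q`, and `h(p,q,t) = p + q + 1` for `t ≥ 2`. -/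
def hh (p q t : ℕ) : ℕ := if t = 0 then 0 else if t = 1 then p + q else p + q + 1


section Helpers

open Classical in
/-- Replace the identity by `φ` on the block of `x`. -/
noncomputable def elemMap {X : Type*} (r : Setoid X) (x : X) (φ : X → X) : Function.End X :=
  fun z => if r z x then φ z else z

/-- Size of the block of `x`. -/
noncomputable def bsz {X : Type*} (r : Setoid X) (x : X) : ℕ := {z | r z x}.ncard

/-- `w` merges exactly one pair of blocks, of sizes `a ≤ b`. -/
def MergeT {X : Type*} (r : Setoid X) (w : Function.End X) (a b : ℕ) : Prop :=
  ∃ x y, ¬ r x y ∧ r (w x) (w y) ∧ bsz r x = a ∧ bsz r y = b ∧ a ≤ b ∧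
    ∀ x' y', ¬ r x' y' → r (w x') (w y') → (r x' x ∧ r y' y) ∨ (r x' y ∧ r y' x)

/-- The possible pairs of sizes of two distinct blocks. -/
def KSet {X : Type*} (r : Setoid X) : Set (ℕ × ℕ) :=
  {k | ∃ x y, ¬ r x y ∧ bsz r x = k.1 ∧ bsz r y = k.2 ∧ k.1 ≤ k.2}

lemma bsz_congr {X : Type*} (r : Setoid X) {x y : X} (h : r x y) : bsz r x = bsz r y := by
  unfold bsz
  congr 1
  ext z
  exact ⟨fun hz => r.trans hz h, fun hz => r.trans hz (r.symm h)⟩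

lemma mem_Sigma_iff {X : Type*} (r : Setoid X) (f : Function.End X) :
    f ∈ SigmaSet r ↔ f ∈ TSet r ∧ ∀ y, ∃ x, r (f x) y := by
  constructor
  · rintro ⟨h1, h2⟩
    refine ⟨h1, fun y => ?_⟩
    obtain ⟨_, ⟨x, rfl⟩, hx⟩ := h2 {z | r z y} ⟨y, rfl⟩
    exact ⟨x, hx⟩
  · rintro ⟨h1, h2⟩
    refine ⟨h1, ?_⟩
    rintro B ⟨y, rfl⟩
    obtain ⟨x, hx⟩ := h2 y
    exact ⟨f x, ⟨x, rfl⟩, hx⟩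

lemma TSet_mul {X : Type*} (r : Setoid X) {f g : Function.End X} (hf : f ∈ TSet r)
    (hg : g ∈ TSet r) : f * g ∈ TSet r := fun x y h => hf _ _ (hg x y h)

lemma Sigma_refl {X : Type*} [Finite X] (r : Setoid X) {f : Function.End X}
    (hf : f ∈ SigmaSet r) {x y : X} (h : r (f x) (f y)) : r x y := by
  rw [mem_Sigma_iff] at hf
  let F : Quotient r → Quotient r := Quotient.map f (fun a b hab => hf.1 a b hab)
  have hs : Function.Surjective F := by
    intro q
    induction q using Quotient.inductionOn with
    | h y =>
      obtain ⟨x, hx⟩ := hf.2 y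
      exact ⟨Quotient.mk r x, Quotient.sound hx⟩
  have hi : Function.Injective F := Finite.injective_iff_surjective.mpr hs
  have : F (Quotient.mk r x) = F (Quotient.mk r y) := Quotient.sound h
  exact Quotient.exact (hi this)

lemma elemMap_pos {X : Type*} (r : Setoid X) {x z : X} {φ : X → X} (h : r z x) :
    elemMap r x φ z = φ z := if_pos h

lemma elemMap_neg {X : Type*} (r : Setoid X) {x z : X} {φ : X → X} (h : ¬ r z x) :
    elemMap r x φ z = z := if_neg h

lemma elemMap_T {X : Type*} (r : Setoid X) {x y : X} {φ : X → X}
    (hφ : ∀ z, r z x → r (φ z) y) : elemMap r x φ ∈ TSet r := by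
  intro a b h
  unfold elemMap
  by_cases ha : r a x
  · have hb : r b x := r.trans (r.symm h) ha
    rw [if_pos ha, if_pos hb]
    exact r.trans (hφ a ha) (r.symm (hφ b hb))
  · have hb : ¬ r b x := fun hb => ha (r.trans h hb)
    rw [if_neg ha, if_neg hb]
    exact h

lemma exists_bij {X : Type*} [Finite X] {A B Q R : Set X} (hAB : A.ncard = B.ncard)
    (hQ : Q ⊆ A) (hR : R ⊆ B) (hQR : Q.ncard ≤ R.ncard) :
    ∃ β : X → X, Set.BijOn β A B ∧ ∀ z ∈ Q, β z ∈ R := by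
  classical
  obtain ⟨R', hR', hc⟩ := Set.exists_subset_card_eq hQR
  have key : ∀ S S' : Set X, S.ncard = S'.ncard → ∃ β : X → X, Set.BijOn β S S' := by
    intro S S' h
    rcases isEmpty_or_nonempty X with he | hne
    · refine ⟨id, ?_⟩
      rw [Set.eq_empty_of_isEmpty S, Set.eq_empty_of_isEmpty S']
      exact Set.bijOn_empty _
    · refine (Set.toFinite S).exists_bijOn_of_encard_eq ?_
      rw [← (Set.toFinite S).cast_ncard_eq, ← (Set.toFinite S').cast_ncard_eq, h]
  obtain ⟨β1, h1⟩ := key Q R' hc.symm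
  obtain ⟨β2, h2⟩ := key (A \ Q) (B \ R') (by
    have e1 := Set.ncard_sdiff_add_ncard_of_subset hQ
    have e2 := Set.ncard_sdiff_add_ncard_of_subset (hR'.trans hR)
    omega)
  refine ⟨fun z => if z ∈ Q then β1 z else β2 z, ⟨?_, ?_, ?_⟩, ?_⟩
  · intro z hz
    by_cases hzQ : z ∈ Q
    · simp only [hzQ, if_true]; exact hR (hR' (h1.1 hzQ))
    · simp only [hzQ, if_false]; exact (h2.1 ⟨hz, hzQ⟩).1
  · intro z hz z' hz' h
    by_cases hzQ : z ∈ Q <;> by_cases hzQ' : z' ∈ Q <;> simp only [hzQ, hzQ', if_true, if_false] at h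
    · exact h1.2.1 hzQ hzQ' h
    · exact absurd (h ▸ h1.1 hzQ) (h2.1 ⟨hz', hzQ'⟩).2
    · exact absurd (h ▸ h1.1 hzQ') (h2.1 ⟨hz, hzQ⟩).2
    · exact h2.2.1 ⟨hz, hzQ⟩ ⟨hz', hzQ'⟩ h
  · intro y hy
    by_cases hyR : y ∈ R'
    · obtain ⟨z, hz, rfl⟩ := h1.2.2 hyR
      exact ⟨z, hQ hz, by simp [hz]⟩
    · obtain ⟨z, hz, rfl⟩ := h2.2.2 ⟨hy, hyR⟩
      exact ⟨z, hz.1, by simp [hz.2]⟩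
  · intro z hz
    simp only [hz, if_true]
    exact hR' (h1.1 hz)

/-- `v`, `v'` are mutually inverse elements of `T(X,P)`. -/
def UnitPair {X : Type*} (r : Setoid X) (v v' : X → X) : Prop :=
  (∀ x y, r x y → r (v x) (v y)) ∧ (∀ x y, r x y → r (v' x) (v' y)) ∧
    (∀ x, v' (v x) = x) ∧ (∀ x, v (v' x) = x)

lemma UnitPair.bsz {X : Type*} {r : Setoid X} {v v' : X → X}
    (h : UnitPair r v v') (x : X) : bsz r (v x) = bsz r x := by
  obtain ⟨h1, h2, h3, h4⟩ := h
  unfold _root_.bsz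
  have : {z | r z (v x)} = v '' {z | r z x} := by
    ext z
    constructor
    · intro hz
      exact ⟨v' z, by have := h2 _ _ hz; rwa [h3] at this, h4 z⟩
    · rintro ⟨y, hy, rfl⟩
      exact h1 _ _ hy
  rw [this, Set.ncard_image_of_injective]
  exact Function.LeftInverse.injective h3

lemma exists_blockSwap {X : Type*} (r : Setoid X) {a b : X} {β : X → X}
    (hβ : Set.BijOn β {z | r z a} {z | r z b}) :
    ∃ v v' : X → X, UnitPair r v v' ∧ (∀ z, r z a → v z = β z) ∧
      (∀ z, ¬ r z a → ¬ r z b → v z = z) := by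
  classical
  have : Nonempty X := ⟨a⟩
  obtain ⟨γ, hγ⟩ : ∃ γ, γ = Function.invFunOn β {z | r z a} := ⟨_, rfl⟩
  have hm : ∀ z, r z a → r (β z) b := fun z hz => hβ.1 hz
  have hm' : ∀ z, r z b → r (γ z) a := fun z hz => by
    rw [hγ]; exact Function.invFunOn_mem (hβ.2.2 hz)
  have hl : ∀ z, r z a → γ (β z) = z := fun z hz => by
    rw [hγ]; exact hβ.2.1.leftInvOn_invFunOn hz
  have hr : ∀ z, r z b → β (γ z) = z := fun z hz => by
    rw [hγ]; exact Function.invFunOn_eq (hβ.2.2 hz)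
  have hT : ∀ x y z, r x y → (r x z ↔ r y z) := fun x y z h =>
    ⟨fun k => r.trans (r.symm h) k, fun k => r.trans h k⟩
  have tr : ∀ {x y z}, r x z → r y z → r x y := fun h k => r.trans h (r.symm k)
  refine ⟨fun z => if r z a then β z else if r z b then γ z else z,
    fun z => if r z b then γ z else if r z a then β z else z, ⟨?_, ?_, ?_, ?_⟩, ?_, ?_⟩
  · intro x y h
    have ha := hT x y a h
    have hb := hT x y b h
    dsimp only
    by_cases h1 : r y a
    · rw [if_pos h1, if_pos (ha.2 h1)]
      exact tr (hm _ (ha.2 h1)) (hm _ h1)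
    · rw [if_neg h1, if_neg (mt ha.1 h1)]
      by_cases h2 : r y b
      · rw [if_pos h2, if_pos (hb.2 h2)]
        exact tr (hm' _ (hb.2 h2)) (hm' _ h2)
      · rw [if_neg h2, if_neg (mt hb.1 h2)]
        exact h
  · intro x y h
    have ha := hT x y a h
    have hb := hT x y b h
    dsimp only
    by_cases h2 : r y b
    · rw [if_pos h2, if_pos (hb.2 h2)]
      exact tr (hm' _ (hb.2 h2)) (hm' _ h2)
    · rw [if_neg h2, if_neg (mt hb.1 h2)]
      by_cases h1 : r y a
      · rw [if_pos h1, if_pos (ha.2 h1)]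
        exact tr (hm _ (ha.2 h1)) (hm _ h1)
      · rw [if_neg h1, if_neg (mt ha.1 h1)]
        exact h
  · intro x
    dsimp only
    by_cases h1 : r x a
    · rw [if_pos h1, if_pos (hm _ h1), hl _ h1]
    · rw [if_neg h1]
      by_cases h2 : r x b
      · have h3 : ¬ r (γ x) b := fun h3 => h1 (r.trans h2 (r.trans (r.symm h3) (hm' _ h2)))
        rw [if_pos h2, if_neg h3, if_pos (hm' _ h2), hr _ h2]
      · rw [if_neg h2, if_neg h2, if_neg h1]
  · intro x
    dsimp only
    by_cases h1 : r x b
    · rw [if_pos h1, if_pos (hm' _ h1), hr _ h1]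
    · rw [if_neg h1]
      by_cases h2 : r x a
      · have h3 : ¬ r (β x) a := fun h3 => h1 (r.trans h2 (r.trans (r.symm h3) (hm _ h2)))
        rw [if_pos h2, if_neg h3, if_pos (hm _ h2), hl _ h2]
      · rw [if_neg h2, if_neg h2, if_neg h1]
  · intro z hz
    dsimp only
    rw [if_pos hz]
  · intro z hz hz'
    dsimp only
    rw [if_neg hz, if_neg hz']

lemma exists_unit {X : Type*} [Finite X] (r : Setoid X) {x y x' y' : X} {φ ι : X → X}
    (hxy : ¬ r x y) (hxy' : ¬ r x' y') (hx : bsz r x' = bsz r x) (hy : bsz r y' = bsz r y)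
    (hφ : ∀ z, r z x' → r (φ z) y') (hι : ∀ z, r z x → r (ι z) y)
    (hinj : Set.InjOn ι {z | r z x}) :
    ∃ u u' : X → X, UnitPair r u u' ∧ r (u x') x ∧
      ∀ z, r z x' → ∃ c, r c x ∧ ι c = u (φ z) := by
  obtain ⟨β1, hβ1, -⟩ := exists_bij (A := {z | r z x'}) (B := {z | r z x}) (Q := ∅) (R := ∅)
    hx (by simp) (by simp) le_rfl
  obtain ⟨v1, v1', hu1, hv1, -⟩ := exists_blockSwap r hβ1
  obtain ⟨β2, hβ2, hR⟩ := exists_bij (A := {z | r z (v1 y')}) (B := {z | r z y})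
    (Q := (fun z => v1 (φ z)) '' {z | r z x'}) (R := ι '' {z | r z x})
    ((hu1.bsz y').trans hy)
    (by rintro _ ⟨z, hz, rfl⟩; exact hu1.1 _ _ (hφ z hz))
    (by rintro _ ⟨z, hz, rfl⟩; exact hι z hz)
    (by
      rw [hinj.ncard_image]
      refine (Set.ncard_image_le (Set.toFinite _)).trans ?_
      exact hx.le)
  obtain ⟨v2, v2', hu2, hv2, hv2n⟩ := exists_blockSwap r hβ2
  have h1 : r (v1 x') x := by rw [hv1 _ (r.refl _)]; exact hβ1.1 (r.refl _)
  refine ⟨fun z => v2 (v1 z), fun z => v1' (v2' z), ⟨?_, ?_, ?_, ?_⟩, ?_, ?_⟩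
  · exact fun a b h => hu2.1 _ _ (hu1.1 _ _ h)
  · exact fun a b h => hu1.2.1 _ _ (hu2.2.1 _ _ h)
  · intro a; dsimp only; rw [hu2.2.2.1, hu1.2.2.1]
  · intro a; dsimp only; rw [hu1.2.2.2, hu2.2.2.2]
  · dsimp only
    rw [hv2n]
    · exact h1
    · intro h
      have := hu1.2.1 _ _ h
      rw [hu1.2.2.1, hu1.2.2.1] at this
      exact hxy' this
    · intro h
      exact hxy (r.trans (r.symm h1) h)
  · intro z hz
    obtain ⟨c, hc, hc'⟩ := hR _ ⟨z, hz, rfl⟩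
    refine ⟨c, hc, ?_⟩
    dsimp only
    rw [hv2 _ (hu1.1 _ _ (hφ z hz))]
    exact hc'

lemma elem_mem_of_le {X : Type*} [Finite X] (r : Setoid X) (S : Submonoid (Function.End X))
    (hS : SigmaSet r ⊆ S) {x y x' y' : X} {φ ι : X → X}
    (hxy : ¬ r x y) (hxy' : ¬ r x' y') (hx : bsz r x' = bsz r x) (hy : bsz r y' = bsz r y)
    (hφ : ∀ z, r z x' → r (φ z) y') (hι : ∀ z, r z x → r (ι z) y)
    (hinj : Set.InjOn ι {z | r z x}) (hw : elemMap r x ι ∈ S) : elemMap r x' φ ∈ S := by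
  classical
  obtain ⟨u, u', ⟨h1, h2, h3, h4⟩, hux, hc⟩ := exists_unit r hxy hxy' hx hy hφ hι hinj
  choose! α hα hα' using hc
  let s : Function.End X := fun z => if r z x' then α z else u z
  have hs : s ∈ SigmaSet r := by
    rw [mem_Sigma_iff]
    constructor
    · intro a b h
      dsimp only [s]
      by_cases ha : r a x'
      · have hb : r b x' := r.trans (r.symm h) ha
        rw [if_pos ha, if_pos hb]
        exact r.trans (hα a ha) (r.symm (hα b hb))
      · have hb : ¬ r b x' := fun hb => ha (r.trans h hb)
        rw [if_neg ha, if_neg hb]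
        exact h1 _ _ h
    · intro z
      by_cases hz : r (u' z) x'
      · refine ⟨x', ?_⟩
        dsimp only [s]
        rw [if_pos (r.refl _)]
        have := h1 _ _ hz
        rw [h4] at this
        exact r.trans (hα _ (r.refl _)) (r.symm (r.trans this hux))
      · refine ⟨u' z, ?_⟩
        dsimp only [s]
        rw [if_neg hz, h4]
  let U : Function.End X := u'
  have hU : U ∈ SigmaSet r := by
    rw [mem_Sigma_iff]
    exact ⟨h2, fun z => ⟨u z, by dsimp only [U]; rw [h3]⟩⟩
  have : elemMap r x' φ = U * elemMap r x ι * s := by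
    funext z
    show elemMap r x' φ z = u' (elemMap r x ι (s z))
    by_cases hz : r z x'
    · have hsz : s z = α z := if_pos hz
      rw [elemMap_pos r hz, hsz, elemMap_pos r (hα z hz), hα' z hz, h3]
    · have : ¬ r (u z) x := by
        intro h
        have := h2 _ _ (r.trans h (r.symm hux))
        rw [h3, h3] at this
        exact hz this
      have hsz : s z = u z := if_neg hz
      rw [elemMap_neg r hz, hsz, elemMap_neg r this, h3]
  rw [this]
  exact S.mul_mem (S.mul_mem (hS hU) hw) (hS hs)

lemma exists_inj {X : Type*} [Finite X] (r : Setoid X) {x y : X} (h : bsz r x ≤ bsz r y) :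
    ∃ ι : X → X, (∀ z, r z x → r (ι z) y) ∧ Set.InjOn ι {z | r z x} := by
  obtain ⟨R, hR, hc⟩ := Set.exists_subset_card_eq h
  obtain ⟨β, hβ, -⟩ := exists_bij (A := {z | r z x}) (B := R) (Q := ∅) (R := ∅)
    hc.symm (by simp) (by simp) le_rfl
  exact ⟨β, fun z hz => hR (hβ.1 hz), hβ.2.1⟩

lemma elem_mem_of_gt {X : Type*} [Finite X] (r : Setoid X) (S : Submonoid (Function.End X))
    (hS : SigmaSet r ⊆ S) {x y : X} {φ ι : X → X} (hxy : ¬ r x y)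
    (hφ : ∀ z, r z x → r (φ z) y) (hι : ∀ z, r z y → r (ι z) x)
    (hinj : Set.InjOn ι {z | r z y}) (hw : elemMap r y ι ∈ S) : elemMap r x φ ∈ S := by
  classical
  have : Nonempty X := ⟨x⟩
  have hyx : ∀ z, r z x → ¬ r z y := fun z h k => hxy (r.trans (r.symm h) k)
  have hyx' : ∀ z, r z y → ¬ r z x := fun z h k => hxy (r.trans (r.symm k) h)
  obtain ⟨κ, hκ, hκ'⟩ : ∃ κ : X → X, (∀ z, r (κ z) y) ∧ ∀ z, r z y → κ (ι z) = z := by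
    refine ⟨fun z => if r (Function.invFunOn ι {z | r z y} z) y then
      Function.invFunOn ι {z | r z y} z else y, ?_, ?_⟩
    · intro z
      dsimp only
      split_ifs with h
      · exact h
      · exact r.refl _
    · intro z hz
      dsimp only
      rw [hinj.leftInvOn_invFunOn (show z ∈ {z | r z y} from hz), if_pos hz]
  have hT : ∀ x y z, r x y → (r x z ↔ r y z) := fun x y z h =>
    ⟨fun k => r.trans (r.symm h) k, fun k => r.trans h k⟩
  have tr : ∀ {x y z}, r x z → r y z → r x y := fun h k => r.trans h (r.symm k)
  have hs : elemMap r x (fun z => ι (φ z)) ∈ SigmaSet r := by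
    rw [mem_Sigma_iff]
    refine ⟨elemMap_T r (y := x) (fun z hz => hι _ (hφ z hz)), fun z => ⟨z, ?_⟩⟩
    unfold elemMap
    by_cases hz : r z x
    · rw [if_pos hz]
      exact tr (hι _ (hφ z hz)) hz
    · rw [if_neg hz]
  let τ : Function.End X := fun z => if r z x then κ z else if r z y then ι z else z
  have hτ : τ ∈ SigmaSet r := by
    rw [mem_Sigma_iff]
    constructor
    · intro a b h
      have ha := hT a b x h
      have hb := hT a b y h
      dsimp only [τ]
      by_cases h1 : r b x
      · rw [if_pos h1, if_pos (ha.2 h1)]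
        exact tr (hκ _) (hκ _)
      · rw [if_neg h1, if_neg (mt ha.1 h1)]
        by_cases h2 : r b y
        · rw [if_pos h2, if_pos (hb.2 h2)]
          exact tr (hι _ (hb.2 h2)) (hι _ h2)
        · rw [if_neg h2, if_neg (mt hb.1 h2)]
          exact h
    · intro z
      dsimp only [τ]
      by_cases h1 : r z x
      · refine ⟨y, ?_⟩
        rw [if_neg (hyx' y (r.refl _)), if_pos (r.refl _)]
        exact tr (hι _ (r.refl _)) h1
      · by_cases h2 : r z y
        · refine ⟨x, ?_⟩
          rw [if_pos (r.refl _)]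
          exact tr (hκ _) h2
        · refine ⟨z, ?_⟩
          rw [if_neg h1, if_neg h2]
  have : elemMap r x φ = τ * elemMap r y ι * elemMap r x (fun z => ι (φ z)) := by
    funext z
    show elemMap r x φ z = τ (elemMap r y ι (elemMap r x (fun z => ι (φ z)) z))
    unfold elemMap
    dsimp only [τ]
    by_cases h1 : r z x
    · have h2 := hι _ (hφ z h1)
      rw [if_pos h1, if_pos h1, if_neg (hyx _ h2), if_pos h2, hκ' _ (hφ z h1)]
    · rw [if_neg h1, if_neg h1]
      by_cases h2 : r z y
      · rw [if_pos h2, if_pos (hι _ h2), hκ' _ h2]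
      · rw [if_neg h2, if_neg h1, if_neg h2]
  rw [this]
  exact S.mul_mem (S.mul_mem (hS hτ) hw) (hS hs)

lemma T_sub_of_elem {X : Type*} [Finite X] (r : Setoid X) (S : Submonoid (Function.End X))
    (hS : SigmaSet r ⊆ S)
    (hE : ∀ x y φ, ¬ r x y → (∀ z, r z x → r (φ z) y) → elemMap r x φ ∈ S) :
    ∀ (N : ℕ) (f : Function.End X), f ∈ TSet r → {y | ¬ r (f y) y}.ncard = N → f ∈ S := by
  classical
  intro N
  induction N using Nat.strong_induction_on with
  | _ N ih =>
    intro f hf hN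
    by_cases hs : f ∈ SigmaSet r
    · exact hS hs
    · rw [mem_Sigma_iff] at hs
      push Not at hs
      obtain ⟨M, hM⟩ := hs hf
      let f' : Function.End X := fun z => if r z M then z else f z
      have hf' : f' ∈ TSet r := by
        intro a b h
        dsimp only [f']
        by_cases ha : r a M
        · have hb : r b M := r.trans (r.symm h) ha
          rw [if_pos ha, if_pos hb]
          exact h
        · have hb : ¬ r b M := fun hb => ha (r.trans h hb)
          rw [if_neg ha, if_neg hb]
          exact hf _ _ h
      have hf'S : f' ∈ S := by
        refine ih _ ?_ f' hf' rfl
        rw [← hN]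
        refine Set.ncard_lt_ncard ?_ (Set.toFinite _)
        refine ⟨?_, ?_⟩
        · intro y hy hfy
          by_cases hyM : r y M
          · refine hy ?_
            have hsz : f' y = y := if_pos hyM
            rw [hsz]
          · refine hy ?_
            have hsz : f' y = f y := if_neg hyM
            rw [hsz]
            exact hfy
        · intro h
          refine h (show M ∈ _ from hM M) ?_
          have hsz : f' M = M := if_pos (r.refl _)
          rw [hsz]
      have : f = elemMap r M f * f' := by
        funext z
        show f z = elemMap r M f (f' z)
        by_cases hz : r z M
        · have hsz : f' z = z := if_pos hz
          rw [hsz]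
          exact (elemMap_pos r hz).symm
        · have hsz : f' z = f z := if_neg hz
          rw [hsz]
          exact (elemMap_neg r (hM z)).symm
      rw [this]
      refine S.mul_mem (hE M (f M) f ?_ ?_) hf'S
      · exact fun h => hM M (r.symm h)
      · exact fun z hz => hf _ _ hz

/-- A chosen injection of one block into another, for each pair of sizes. -/
lemma exists_rep {X : Type*} [Finite X] (r : Setoid X) (k : ℕ × ℕ) (hk : k ∈ KSet r) :
    ∃ w : Function.End X, ∃ x y ι, ¬ r x y ∧ bsz r x = k.1 ∧ bsz r y = k.2 ∧
      (∀ z, r z x → r (ι z) y) ∧ Set.InjOn ι {z | r z x} ∧ w = elemMap r x ι := by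
  obtain ⟨x, y, h1, h2, h3, h4⟩ := hk
  obtain ⟨ι, hι, hι'⟩ := exists_inj r (x := x) (y := y) (by omega)
  exact ⟨_, x, y, ι, h1, h2, h3, hι, hι', rfl⟩

lemma closure_sub_T {X : Type*} (r : Setoid X) {W : Set (Function.End X)} (hW : W ⊆ TSet r) :
    (Submonoid.closure (SigmaSet r ∪ W) : Set (Function.End X)) ⊆ TSet r := by
  let S : Submonoid (Function.End X) :=
    { carrier := TSet r
      mul_mem' := fun hf hg => TSet_mul r hf hg
      one_mem' := fun x y h => h }
  have : Submonoid.closure (SigmaSet r ∪ W) ≤ S := by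
    rw [Submonoid.closure_le]
    rintro f (hf | hf)
    · exact hf.1
    · exact hW hf
  exact this

lemma upper {X : Type*} [Finite X] (r : Setoid X) (hK : (KSet r).Finite) :
    ∃ W : Set (Function.End X), W ⊆ TSet r ∧ W.Finite ∧ W.ncard ≤ (KSet r).ncard ∧
      (Submonoid.closure (SigmaSet r ∪ W) : Set (Function.End X)) = TSet r := by
  choose! w hw using exists_rep r
  have hWT : w '' KSet r ⊆ TSet r := by
    rintro _ ⟨k, hk, rfl⟩
    obtain ⟨x, y, ι, h1, h2, h3, h4, h5, h6⟩ := hw k hk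
    rw [h6]
    exact elemMap_T r h4
  refine ⟨w '' KSet r, hWT, hK.image _, Set.ncard_image_le hK, ?_⟩
  refine (closure_sub_T r hWT).antisymm ?_
  obtain ⟨S, hSdef⟩ : ∃ S, S = Submonoid.closure (SigmaSet r ∪ w '' KSet r) := ⟨_, rfl⟩
  rw [← hSdef]
  have hS : SigmaSet r ⊆ S := fun f hf => by
    rw [hSdef]; exact Submonoid.subset_closure (Or.inl hf)
  have hle : ∀ x y φ, ¬ r x y → bsz r x ≤ bsz r y → (∀ z, r z x → r (φ z) y) →
      elemMap r x φ ∈ S := by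
    intro x y φ hxy hle hφ
    have hk : (bsz r x, bsz r y) ∈ KSet r := ⟨x, y, hxy, rfl, rfl, hle⟩
    obtain ⟨x0, y0, ι, h1, h2, h3, h4, h5, h6⟩ := hw _ hk
    refine elem_mem_of_le r S hS h1 hxy h2.symm h3.symm hφ h4 h5 ?_
    rw [← h6, hSdef]
    exact Submonoid.subset_closure (Or.inr ⟨_, hk, rfl⟩)
  intro f hf
  refine T_sub_of_elem r S hS ?_ _ f hf rfl
  intro x y φ hxy hφ
  rcases le_total (bsz r x) (bsz r y) with h | h
  · exact hle x y φ hxy h hφ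
  · obtain ⟨ι, hι, hι'⟩ := exists_inj r h
    have hyx : ¬ r y x := fun k => hxy (r.symm k)
    exact elem_mem_of_gt r S hS hxy hφ hι hι' (hle y x ι hyx h hι)

lemma MergeT_unique {X : Type*} (r : Setoid X) {w : Function.End X} {a b a' b' : ℕ}
    (h : MergeT r w a b) (h' : MergeT r w a' b') : a = a' ∧ b = b' := by
  obtain ⟨x, y, h1, h2, h3, h4, h5, h6⟩ := h
  obtain ⟨x', y', k1, k2, k3, k4, k5, -⟩ := h'
  rcases h6 x' y' k1 k2 with ⟨e1, e2⟩ | ⟨e1, e2⟩ <;>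
  · have := bsz_congr r e1
    have := bsz_congr r e2
    omega

lemma merge_in_W {X : Type*} [Finite X] (r : Setoid X) {W : Set (Function.End X)}
    (hW : W ⊆ TSet r) (f : Function.End X) (hf : f ∈ Submonoid.closure (SigmaSet r ∪ W)) :
    ∀ a b, (∀ x y, r x y → f x = f y → x = y) → MergeT r f a b → ∃ w ∈ W, MergeT r w a b := by
  induction hf using Submonoid.closure_induction with
  | mem f hf =>
    intro a b hi hm
    rcases hf with hf | hf
    · obtain ⟨x, y, h1, h2, -⟩ := hm
      exact absurd (Sigma_refl r hf h2) h1
    · exact ⟨f, hf, hm⟩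
  | one =>
    intro a b hi hm
    obtain ⟨x, y, h1, h2, -⟩ := hm
    exact absurd h2 h1
  | mul g h hg hh ihg ihh =>
    intro a b hi hm
    have hgT : g ∈ TSet r := closure_sub_T r hW hg
    have hhT : h ∈ TSet r := closure_sub_T r hW hh
    have hhi : ∀ x y, r x y → h x = h y → x = y := fun x y hxy e =>
      hi x y hxy (congrArg g e)
    obtain ⟨x, y, h1, h2, h3, h4, h5, h6⟩ := hm
    by_cases hr : ∀ x y, r (h x) (h y) → r x y
    · have hinj : Function.Injective h := fun u v e => hhi u v (hr u v (by rw [e])) e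
      have hsurj : Function.Surjective h := Finite.surjective_of_injective hinj
      have hup : UnitPair r h (Function.surjInv hsurj) := by
        refine ⟨hhT, ?_, Function.leftInverse_surjInv ⟨hinj, hsurj⟩, Function.surjInv_eq hsurj⟩
        intro u v huv
        refine hr _ _ ?_
        have e1 : h (Function.surjInv hsurj u) = u := Function.surjInv_eq hsurj u
        have e2 : h (Function.surjInv hsurj v) = v := Function.surjInv_eq hsurj v
        rw [e1, e2]
        exact huv
      refine ihg a b ?_ ⟨h x, h y, fun k => h1 (hr _ _ k), h2, ?_, ?_, h5, ?_⟩
      · intro u v huv e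
        obtain ⟨u, rfl⟩ := hsurj u
        obtain ⟨v, rfl⟩ := hsurj v
        exact congrArg h (hi u v (hr _ _ huv) e)
      · rw [hup.bsz, h3]
      · rw [hup.bsz, h4]
      · intro u v huv e
        obtain ⟨u, rfl⟩ := hsurj u
        obtain ⟨v, rfl⟩ := hsurj v
        rcases h6 u v (fun k => huv (hhT _ _ k)) e with ⟨e1, e2⟩ | ⟨e1, e2⟩
        · exact Or.inl ⟨hhT _ _ e1, hhT _ _ e2⟩
        · exact Or.inr ⟨hhT _ _ e1, hhT _ _ e2⟩
    · push Not at hr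
      obtain ⟨u, v, huv, hnuv⟩ := hr
      refine ihh a b hhi ⟨x, y, h1, ?_, h3, h4, h5, ?_⟩
      · rcases h6 u v hnuv (hgT _ _ huv) with ⟨e1, e2⟩ | ⟨e1, e2⟩
        · exact r.trans (hhT _ _ (r.symm e1)) (r.trans huv (hhT _ _ e2))
        · exact r.trans (hhT _ _ (r.symm e2)) (r.trans (r.symm huv) (hhT _ _ e1))
      · intro u v huv e
        exact h6 u v huv (hgT _ _ e)

lemma elemMap_merge {X : Type*} (r : Setoid X) {x y : X} {ι : X → X} (hxy : ¬ r x y)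
    (hle : bsz r x ≤ bsz r y) (hι : ∀ z, r z x → r (ι z) y) :
    MergeT r (elemMap r x ι) (bsz r x) (bsz r y) := by
  refine ⟨x, y, hxy, ?_, rfl, rfl, hle, ?_⟩
  · rw [elemMap_pos r (r.refl _), elemMap_neg r (fun k => hxy (r.symm k))]
    exact hι _ (r.refl _)
  · intro u v huv e
    by_cases hu : r u x <;> by_cases hv : r v x
    · exact absurd (r.trans hu (r.symm hv)) huv
    · rw [elemMap_pos r hu, elemMap_neg r hv] at e
      exact Or.inl ⟨hu, r.trans (r.symm e) (hι _ hu)⟩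
    · rw [elemMap_pos r hv, elemMap_neg r hu] at e
      exact Or.inr ⟨r.trans e (hι _ hv), hv⟩
    · rw [elemMap_neg r hu, elemMap_neg r hv] at e
      exact absurd e huv

lemma lower {X : Type*} [Finite X] (r : Setoid X) {W : Set (Function.End X)}
    (hW : W ⊆ TSet r) (hfin : W.Finite)
    (hcl : (Submonoid.closure (SigmaSet r ∪ W) : Set (Function.End X)) = TSet r) :
    (KSet r).ncard ≤ W.ncard := by
  have : ∀ k ∈ KSet r, ∃ w ∈ W, MergeT r w k.1 k.2 := by
    rintro ⟨a, b⟩ ⟨x, y, hxy, rfl, rfl, hle⟩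
    obtain ⟨ι, hι, hι'⟩ := exists_inj r hle
    have hT : elemMap r x ι ∈ TSet r := elemMap_T r hι
    rw [← hcl] at hT
    refine merge_in_W r hW _ hT _ _ ?_ (elemMap_merge r hxy hle hι)
    intro u v huv e
    by_cases hu : r u x
    · have hv : r v x := r.trans (r.symm huv) hu
      rw [elemMap_pos r hu, elemMap_pos r hv] at e
      exact hι' hu hv e
    · have hv : ¬ r v x := fun hv => hu (r.trans huv hv)
      rwa [elemMap_neg r hu, elemMap_neg r hv] at e
  choose! w hw hm using this
  refine Set.ncard_le_ncard_of_injOn w hw ?_ hfin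
  intro k hk k' hk' e
  have h1 := hm k hk
  rw [e] at h1
  obtain ⟨e1, e2⟩ := MergeT_unique r h1 (hm k' hk')
  exact Prod.ext e1 e2

lemma KSet_finite {X : Type*} [Finite X] (r : Setoid X) : (KSet r).Finite := by
  refine (Set.finite_range (fun q : X × X => (bsz r q.1, bsz r q.2))).subset ?_
  rintro ⟨a, b⟩ ⟨x, y, -, rfl, rfl, -⟩
  exact ⟨(x, y), rfl⟩

lemma relRank_eq {X : Type*} [Finite X] (r : Setoid X) :
    relRank (TSet r) (SigmaSet r) = (KSet r).ncard := by
  obtain ⟨W, h1, h2, h3, h4⟩ := upper r (KSet_finite r)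
  have h5 := lower r h1 h2 h4
  refine le_antisymm (Nat.sInf_le ⟨W, h1, h2, le_antisymm h3 h5, h4⟩) ?_
  refine le_csInf ⟨_, ⟨W, h1, h2, rfl, h4⟩⟩ ?_
  rintro k ⟨W, g1, g2, rfl, g4⟩
  exact lower r g1 g2 g4

lemma bc_ne_zero {X : Type*} [Finite X] (r : Setoid X) (s : ℕ) :
    blockCount r s ≠ 0 ↔ ∃ x, bsz r x = s := by
  unfold blockCount
  rw [← Nat.pos_iff_ne_zero, Set.ncard_pos (Set.toFinite _)]
  constructor
  · rintro ⟨_, ⟨x, rfl⟩, h⟩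
    exact ⟨x, h⟩
  · rintro ⟨x, h⟩
    exact ⟨_, ⟨x, rfl⟩, h⟩

lemma two_le_bc {X : Type*} [Finite X] (r : Setoid X) (s : ℕ) :
    2 ≤ blockCount r s ↔ ∃ x y, ¬ r x y ∧ bsz r x = s ∧ bsz r y = s := by
  unfold blockCount
  change 1 < _ ↔ _
  rw [Set.one_lt_ncard_iff (Set.toFinite _)]
  constructor
  · rintro ⟨_, _, ⟨⟨x, rfl⟩, h⟩, ⟨⟨y, rfl⟩, h'⟩, hne⟩
    refine ⟨x, y, fun hxy => hne ?_, h, h'⟩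
    ext z
    exact ⟨fun hz => r.trans hz hxy, fun hz => r.trans hz (r.symm hxy)⟩
  · rintro ⟨x, y, hxy, h, h'⟩
    refine ⟨_, _, ⟨⟨x, rfl⟩, h⟩, ⟨⟨y, rfl⟩, h'⟩, fun e => hxy ?_⟩
    have : x ∈ {z | r z x} := r.refl x
    rw [e] at this
    exact this

lemma card_lt_pairs (F : Finset ℕ) :
    {k : ℕ × ℕ | k.1 < k.2 ∧ k.1 ∈ F ∧ k.2 ∈ F}.ncard = F.card.choose 2 := by
  induction F using Finset.induction_on_max with
  | empty => simp
  | insert m F hm ih =>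
    have hmF : m ∉ F := fun h => lt_irrefl _ (hm m h)
    have e : {k : ℕ × ℕ | k.1 < k.2 ∧ k.1 ∈ insert m F ∧ k.2 ∈ insert m F} =
        {k : ℕ × ℕ | k.1 < k.2 ∧ k.1 ∈ F ∧ k.2 ∈ F} ∪ (fun a => (a, m)) '' (F : Set ℕ) := by
      ext ⟨a, b⟩
      simp only [Finset.mem_insert, Set.mem_setOf_eq, Set.mem_union, Set.mem_image,
        Finset.mem_coe, Prod.mk.injEq]
      constructor
      · rintro ⟨h1, h2 | h2, h3 | h3⟩
        · omega
        · have := hm b h3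
          omega
        · exact Or.inr ⟨a, h2, rfl, h3.symm⟩
        · exact Or.inl ⟨h1, h2, h3⟩
      · rintro (⟨h1, h2, h3⟩ | ⟨c, h1, rfl, rfl⟩)
        · exact ⟨h1, Or.inr h2, Or.inr h3⟩
        · exact ⟨hm _ h1, Or.inr h1, Or.inl rfl⟩
    rw [e, Set.ncard_union_eq ?_ ?_ ((Finset.finite_toSet F).image _), ih, Set.ncard_image_of_injective, Set.ncard_coe_finset,
      Finset.card_insert_of_notMem hmF, Nat.choose_succ_succ' F.card 1, Nat.choose_one_right,
      add_comm]
    · intro a b h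
      exact (Prod.mk.inj h).1
    · rw [Set.disjoint_left]
      rintro _ ⟨_, _, h⟩ ⟨a, _, rfl⟩
      exact hmF h
    · refine ((F ×ˢ F).finite_toSet).subset ?_
      rintro ⟨a, b⟩ ⟨_, h1, h2⟩
      simp only [Finset.coe_product, Set.mem_prod, Finset.mem_coe]
      exact ⟨h1, h2⟩

lemma KSet_card {X : Type*} [Finite X] (r : Setoid X) (F F2 : Finset ℕ)
    (hF : ∀ s, s ∈ F ↔ blockCount r s ≠ 0) (hF2 : ∀ s, s ∈ F2 ↔ 2 ≤ blockCount r s) :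
    (KSet r).ncard = F.card.choose 2 + F2.card := by
  have e : KSet r = {k : ℕ × ℕ | k.1 < k.2 ∧ k.1 ∈ F ∧ k.2 ∈ F} ∪
      (fun a => (a, a)) '' (F2 : Set ℕ) := by
    ext ⟨a, b⟩
    simp only [KSet, hF, hF2, bc_ne_zero, two_le_bc, Set.mem_setOf_eq, Set.mem_union,
      Set.mem_image, Finset.mem_coe, Prod.mk.injEq]
    constructor
    · rintro ⟨x, y, h1, h2, h3, h4⟩
      rcases h4.lt_or_eq with h | h
      · exact Or.inl ⟨h, ⟨x, h2⟩, ⟨y, h3⟩⟩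
      · exact Or.inr ⟨a, ⟨x, y, h1, h2, h3.trans h.symm⟩, rfl, h⟩
    · rintro (⟨h, ⟨x, hx⟩, ⟨y, hy⟩⟩ | ⟨c, ⟨x, y, h1, h2, h3⟩, rfl, rfl⟩)
      · refine ⟨x, y, fun hxy => ?_, hx, hy, h.le⟩
        have := bsz_congr r hxy
        omega
      · exact ⟨x, y, h1, h2, h3, le_rfl⟩
  have hfin := KSet_finite r
  rw [e] at hfin
  rw [e, Set.ncard_union_eq ?_ (hfin.subset Set.subset_union_left)
    (hfin.subset Set.subset_union_right), card_lt_pairs, Set.ncard_image_of_injective,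
    Set.ncard_coe_finset]
  · intro a b h
    exact (Prod.mk.inj h).1
  · rw [Set.disjoint_left]
    rintro _ ⟨h, _, _⟩ ⟨a, _, rfl⟩
    exact lt_irrefl _ h

end Helpers

/-- The relative rank of `T(X,P)` modulo `Σ(X,P)` equals
`C(p+q,2) + p + h(p,q,t)`. -/
theorem relRank_TXP_SigmaXP' {X : Type*} [Fintype X] [Nonempty X] (r : Setoid X)
    (p q t : ℕ) (n m : Fin p → ℕ) (l : Fin q → ℕ)
    (hn2 : ∀ i, 2 ≤ n i) (hm2 : ∀ i, 2 ≤ m i) (hl2 : ∀ j, 2 ≤ l j)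
    (hninj : Function.Injective n) (hlinj : Function.Injective l)
    (hnl : ∀ i j, n i ≠ l j)
    (hcn : ∀ i, blockCount r (n i) = m i)
    (hcl : ∀ j, blockCount r (l j) = 1)
    (hct : blockCount r 1 = t)
    (hcover : ∀ s, 2 ≤ s → blockCount r s ≠ 0 → (∃ i, s = n i) ∨ (∃ j, s = l j))
    : relRank (TSet r) (SigmaSet r) = (p + q).choose 2 + p + hh p q t := by
  classical
  rw [relRank_eq]
  have hb0 : blockCount r 0 = 0 := by
    by_contra h
    obtain ⟨x, hx⟩ := (bc_ne_zero r 0).1 h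
    unfold bsz at hx
    rw [Set.ncard_eq_zero (Set.toFinite _)] at hx
    have : x ∈ {z | r z x} := r.refl x
    rw [hx] at this
    exact this
  have hsplit : ∀ s, blockCount r s ≠ 0 → s = 1 ∨ (∃ i, s = n i) ∨ (∃ j, s = l j) := by
    intro s hs
    rcases Nat.lt_or_ge s 2 with h | h
    · interval_cases s
      · exact absurd hb0 hs
      · exact Or.inl rfl
    · exact Or.inr (hcover s h hs)
  have hn1 : ∀ i, n i ≠ 1 := fun i h => by have := hn2 i; omega
  have hl1 : ∀ j, l j ≠ 1 := fun j h => by have := hl2 j; omega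
  have hFn : (Finset.univ.image n).card = p := by
    rw [Finset.card_image_of_injective _ hninj, Finset.card_univ, Fintype.card_fin]
  have hFl : (Finset.univ.image l).card = q := by
    rw [Finset.card_image_of_injective _ hlinj, Finset.card_univ, Fintype.card_fin]
  have hFnl : (Finset.univ.image n ∪ Finset.univ.image l).card = p + q := by
    rw [Finset.card_union_of_disjoint, hFn, hFl]
    rw [Finset.disjoint_left]
    intro s h1 h2
    simp only [Finset.mem_image, Finset.mem_univ, true_and] at h1 h2
    obtain ⟨i, rfl⟩ := h1
    obtain ⟨j, hj⟩ := h2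
    exact hnl i j hj.symm
  have h1n : 1 ∉ Finset.univ.image n := by simpa using hn1
  have h1nl : 1 ∉ Finset.univ.image n ∪ Finset.univ.image l := by
    simpa using ⟨hn1, hl1⟩
  rw [KSet_card r
    (if t = 0 then Finset.univ.image n ∪ Finset.univ.image l
      else insert 1 (Finset.univ.image n ∪ Finset.univ.image l))
    (if t < 2 then Finset.univ.image n else insert 1 (Finset.univ.image n))]
  · unfold hh
    rcases Nat.lt_or_ge t 2 with h | h
    · rw [if_pos h, hFn]
      interval_cases t
      · simp [hFnl]
      · simp only [one_ne_zero, if_false, if_true]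
        rw [Finset.card_insert_of_notMem h1nl, hFnl, Nat.choose_succ_succ' (p + q) 1,
          Nat.choose_one_right]
        ring
    · rw [if_neg (by omega), if_neg (by omega), if_neg (by omega), if_neg (by omega),
        Finset.card_insert_of_notMem h1nl, hFnl, Finset.card_insert_of_notMem h1n, hFn,
        Nat.choose_succ_succ' (p + q) 1, Nat.choose_one_right]
      ring
  · intro s
    have hA : s ∈ Finset.univ.image n ∪ Finset.univ.image l ↔ (∃ i, s = n i) ∨ ∃ j, s = l j := by
      simp [eq_comm]
    have hB : ((∃ i, s = n i) ∨ ∃ j, s = l j) → blockCount r s ≠ 0 := by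
      rintro (⟨i, rfl⟩ | ⟨j, rfl⟩)
      · rw [hcn]; have := hm2 i; omega
      · rw [hcl]; omega
    split_ifs with h
    · rw [hA]
      refine ⟨hB, fun hs => ?_⟩
      rcases hsplit s hs with rfl | h'
      · exact absurd (hct.trans h) hs
      · exact h'
    · rw [Finset.mem_insert, hA]
      refine ⟨?_, hsplit s⟩
      rintro (rfl | h')
      · rw [hct]; exact h
      · exact hB h'
  · intro s
    have hA : s ∈ Finset.univ.image n ↔ ∃ i, s = n i := by
      simp [eq_comm]
    have hB : (∃ i, s = n i) → 2 ≤ blockCount r s := by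
      rintro ⟨i, rfl⟩
      rw [hcn]; exact hm2 i
    have hC : 2 ≤ blockCount r s → s = 1 ∨ ∃ i, s = n i := by
      intro hs
      rcases hsplit s (by omega) with h' | h' | ⟨j, rfl⟩
      · exact Or.inl h'
      · exact Or.inr h'
      · rw [hcl] at hs; omega
    split_ifs with h
    · rw [hA]
      refine ⟨hB, fun hs => ?_⟩
      rcases hC hs with rfl | h'
      · rw [hct] at hs; omega
      · exact h'
    · rw [Finset.mem_insert, hA]
      refine ⟨?_, hC⟩
      rintro (rfl | h')
      · rw [hct]; omega
      · exact hB h'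
end

section
/- If U ⊆ Σ(X,P) is such that S(X,P) ∪ U generates the monoid Σ(X,P), then U ∩ ℬ_i ≠ ∅ for every i with 1 ≤ i ≤ r−1. -/
open Function Set

/-- Membership in `ℬᵢ`, where `a = dᵢ` and `b = d_{i+1}` are consecutive distinct
block sizes: `f ∈ Σ(X,P)`, and there are blocks `B, B'` of size `a` and `C, C'`
of size `b` such that `f` maps `B` injectively into `C`, maps `C'` onto `B'`, and
maps every other block bijectively onto a block of the same size. -/
def memB {X : Type*} (r : Setoid X) (a b : ℕ) (f : Function.End X) : Prop :=
  f ∈ SigmaSet r ∧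
    ∃ B B' C C' : Set X,
      B ∈ Setoid.classes r ∧ B' ∈ Setoid.classes r ∧
      C ∈ Setoid.classes r ∧ C' ∈ Setoid.classes r ∧
      B.ncard = a ∧ B'.ncard = a ∧ C.ncard = b ∧ C'.ncard = b ∧
      Set.InjOn f B ∧ f '' B ⊆ C ∧ f '' C' = B' ∧
      ∀ D ∈ Setoid.classes r, D ≠ B → D ≠ C' →
        ∃ E ∈ Setoid.classes r, f '' D = E ∧ Set.InjOn f D ∧ E.ncard = D.ncard

/-- Membership in `𝒞ᵢ`, where `s = dᵢ` is a block size: `f ∈ Σ(X,P)`, `f` maps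
every block into a block of the same size, there is one block of size `s` whose
image under `f` has size `s - 1`, and `f` is injective on every other block. -/
def memC {X : Type*} (r : Setoid X) (s : ℕ) (f : Function.End X) : Prop :=
  f ∈ SigmaSet r ∧
    (∀ D ∈ Setoid.classes r, ∃ E ∈ Setoid.classes r, E.ncard = D.ncard ∧ f '' D ⊆ E) ∧
    ∃ B ∈ Setoid.classes r, B.ncard = s ∧ (f '' B).ncard = s - 1 ∧
      ∀ D ∈ Setoid.classes r, D ≠ B → Set.InjOn f D


namespace GenB

def blk {X : Type*} (r : Setoid X) (q : Quotient r) : Set X := {x | (Quotient.mk r x) = q}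

noncomputable def sz {X : Type*} (r : Setoid X) (q : Quotient r) : ℕ := (blk r q).ncard

lemma mem_blk {X : Type*} (r : Setoid X) (q : Quotient r) (x : X) :
    x ∈ blk r q ↔ Quotient.mk r x = q := Iff.rfl

lemma classes_iff {X : Type*} (r : Setoid X) (B : Set X) :
    B ∈ Setoid.classes r ↔ ∃ q, B = blk r q := by
  constructor
  · rintro ⟨y, rfl⟩
    refine ⟨Quotient.mk r y, ?_⟩
    ext x
    simp only [mem_blk, Quotient.eq]
    rfl
  · rintro ⟨q, rfl⟩
    induction q using Quotient.inductionOn with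
    | h y =>
      refine ⟨y, ?_⟩
      ext x
      simp only [mem_blk, Quotient.eq]
      rfl

lemma blk_inj {X : Type*} (r : Setoid X) {p q : Quotient r} (h : blk r p = blk r q) : p = q := by
  induction p using Quotient.inductionOn with
  | h y =>
    have : y ∈ blk r (Quotient.mk r y) := rfl
    rw [h] at this
    exact this

/-- the block permutation -/
lemma exists_perm {X : Type*} [Finite X] (r : Setoid X) (f : Function.End X)
    (hf : f ∈ SigmaSet r) :
    ∃ σ : Equiv.Perm (Quotient r), ∀ x, σ (Quotient.mk r x) = Quotient.mk r (f x) := by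
  have hT : ∀ x y : X, r x y → r (f x) (f y) := hf.1
  let g : Quotient r → Quotient r := Quotient.map f hT
  have hs : Function.Surjective g := by
    intro q
    obtain ⟨_, ⟨x, rfl⟩, hx⟩ := hf.2 (blk r q) ((classes_iff r _).2 ⟨q, rfl⟩)
    exact ⟨Quotient.mk r x, hx⟩
  have hb : Function.Bijective g := Finite.surjective_iff_bijective.1 hs
  exact ⟨Equiv.ofBijective g hb, fun x => rfl⟩

lemma image_blk {X : Type*} (r : Setoid X) (f : Function.End X)
    (σ : Equiv.Perm (Quotient r)) (hσ : ∀ x, σ (Quotient.mk r x) = Quotient.mk r (f x))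
    (q : Quotient r) : f '' blk r q ⊆ blk r (σ q) := by
  rintro _ ⟨x, hx, rfl⟩
  rw [mem_blk] at hx ⊢
  rw [← hσ, hx]

lemma sz_le {X : Type*} [Finite X] (r : Setoid X) (f : Function.End X)
    (σ : Equiv.Perm (Quotient r)) (hσ : ∀ x, σ (Quotient.mk r x) = Quotient.mk r (f x))
    (q : Quotient r) (hi : Set.InjOn f (blk r q)) : sz r q ≤ sz r (σ q) := by
  unfold sz
  rw [← hi.ncard_image]
  exact Set.ncard_le_ncard (image_blk r f σ hσ q) (Set.toFinite _)

lemma perm_eq_of_le {Q : Type*} [Finite Q] (σ : Equiv.Perm Q) (s : Q → ℕ)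
    (h : ∀ q, s q ≤ s (σ q)) (q : Q) : s (σ q) = s q := by
  have := Fintype.ofFinite Q
  have h1 := (Finset.sum_eq_sum_iff_of_le (s := Finset.univ) (fun q _ => h q)).1
    (Equiv.sum_comp σ s).symm
  exact (h1 q (Finset.mem_univ q)).symm

lemma perm_iff {Q : Type*} [Finite Q] (σ : Equiv.Perm Q) (p : Q → Prop)
    (h : ∀ q, p q → p (σ q)) (q : Q) : p (σ q) ↔ p q := by
  classical
  have := perm_eq_of_le σ (fun q => if p q then 1 else 0) (by
    intro q
    by_cases h1 : p q
    · simp [h1, h q h1]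
    · simp [h1]) q
  by_cases h1 : p q <;> by_cases h2 : p (σ q) <;> simp_all

/-- the combinatorial core -/
lemma perm_core {Q : Type*} [Finite Q] (σ : Equiv.Perm Q) (s : Q → ℕ) (a b : ℕ) (hab : a < b)
    (hcons : ∀ q, s q < b → s q ≤ a) (q1 : Q) (h1 : s q1 = b)
    (hle : ∀ q, q ≠ q1 → s q ≤ s (σ q)) (ha : a ≤ s (σ q1)) (hne : s (σ q1) ≠ b) :
    s (σ q1) = a ∧ ∃ q2, s q2 = a ∧ s (σ q2) = b ∧
      ∀ q, q ≠ q1 → q ≠ q2 → s (σ q) = s q := by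
  classical
  have := Fintype.ofFinite Q
  have hlt : s (σ q1) < b := by
    by_contra hcon
    have := perm_eq_of_le σ s (by
      intro q
      by_cases hq : q = q1
      · subst hq; omega
      · exact hle q hq) q1
    omega
  have hσ1 : s (σ q1) = a := le_antisymm (hcons _ hlt) ha
  have hlow : ∀ t, t ≤ a → ∀ q, t ≤ s (σ q) ↔ t ≤ s q := by
    intro t ht q
    refine perm_iff σ (fun q => t ≤ s q) ?_ q
    intro q hq
    by_cases hqq : q = q1
    · subst hqq; omega
    · exact hq.trans (hle q hqq)
  have hhigh : ∀ t, b < t → ∀ q, t ≤ s (σ q) ↔ t ≤ s q := by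
    intro t ht q
    refine perm_iff σ (fun q => t ≤ s q) ?_ q
    intro q hq
    by_cases hqq : q = q1
    · subst hqq; omega
    · exact hq.trans (hle q hqq)
  -- the set at level b
  let A : Finset Q := Finset.univ.filter (fun q => b ≤ s q)
  let A' : Finset Q := Finset.univ.filter (fun q => b ≤ s (σ q))
  have hcard : A'.card = A.card := by
    refine Finset.card_bij (fun q _ => σ q) ?_ ?_ ?_
    · intro q hq; simpa [A, A'] using hq
    · intro p _ q _ h; exact σ.injective h
    · intro q hq
      exact ⟨σ.symm q, by simpa [A, A'] using hq, by simp⟩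
  have hsub : A.erase q1 ⊆ A' := by
    intro q hq
    simp only [A, A', Finset.mem_erase, Finset.mem_filter, Finset.mem_univ, true_and] at hq ⊢
    exact hq.2.trans (hle q hq.1)
  have hq1A : q1 ∈ A := by simp [A, h1]
  have hd : (A' \ A.erase q1).card = 1 := by
    rw [Finset.card_sdiff_of_subset hsub, Finset.card_erase_of_mem hq1A, hcard]
    have : 0 < A.card := Finset.card_pos.2 ⟨q1, hq1A⟩
    omega
  obtain ⟨q2, hq2⟩ := Finset.card_eq_one.1 hd
  have key : ∀ q, (b ≤ s (σ q) ∧ (q = q1 ∨ s q < b)) ↔ q = q2 := by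
    intro q
    have : q ∈ A' \ A.erase q1 ↔ q = q2 := by rw [hq2]; simp
    rw [← this]
    simp only [A, A', Finset.mem_sdiff, Finset.mem_erase, Finset.mem_filter, Finset.mem_univ,
      true_and, not_and, not_le]
    tauto
  have k2 := (key q2).2 rfl
  have hq21 : q2 ≠ q1 := by
    rintro rfl; omega
  have k3 : s q2 < b := k2.2.resolve_left hq21
  refine ⟨hσ1, q2, ?_, ?_, ?_⟩
  · refine le_antisymm (hcons _ k3) ((hlow a le_rfl q2).1 (by omega))
  · refine le_antisymm ?_ k2.1
    by_contra hcon
    have := (hhigh (b+1) (by omega) q2).1 (by omega)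
    omega
  · intro q hqa hqb
    have hk : b ≤ s (σ q) → b ≤ s q := by
      intro h
      by_contra hcon
      exact hqb ((key q).1 ⟨h, Or.inr (by omega)⟩)
    refine le_antisymm ?_ (hle q hqa)
    by_cases c1 : b < s (σ q)
    · exact (hhigh _ c1 q).1 le_rfl
    · by_cases c2 : s (σ q) < b
      · exact (hlow _ (hcons _ c2) q).1 le_rfl
      · have := hk (by omega); omega

lemma memB_of {X : Type*} [Finite X] (r : Setoid X) (a b : ℕ) (hab : a < b)
    (hcons : ∀ q, sz r q < b → sz r q ≤ a) (f : Function.End X) (hf : f ∈ SigmaSet r)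
    (x1 : X) (h1 : sz r (Quotient.mk r x1) = b)
    (hinj : ∀ q, q ≠ Quotient.mk r x1 → Set.InjOn f (blk r q))
    (ha : a ≤ (f '' blk r (Quotient.mk r x1)).ncard)
    (hne : sz r (Quotient.mk r (f x1)) ≠ b) : memB r a b f := by
  obtain ⟨σ, hσ⟩ := exists_perm r f hf
  have him := image_blk r f σ hσ
  obtain ⟨hs1, q2, hq2, hq2', hrest⟩ := perm_core σ (sz r) a b hab hcons (Quotient.mk r x1) h1
    (fun q hq => sz_le r f σ hσ q (hinj q hq))
    (ha.trans (Set.ncard_le_ncard (him _) (Set.toFinite _))) (by rwa [hσ])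
  have hne2 : q2 ≠ Quotient.mk r x1 := by rintro rfl; omega
  have cl : ∀ q, blk r q ∈ Setoid.classes r := fun q => (classes_iff r _).2 ⟨q, rfl⟩
  refine ⟨hf, blk r q2, blk r (σ (Quotient.mk r x1)), blk r (σ q2), blk r (Quotient.mk r x1),
    cl _, cl _, cl _, cl _, hq2, hs1, hq2', h1, hinj _ hne2, him _, ?_, ?_⟩
  · exact Set.eq_of_subset_of_ncard_le (him _) (by
      have : (blk r (σ (Quotient.mk r x1))).ncard = a := hs1
      omega) (Set.toFinite _)
  · intro D hD hDB hDC
    obtain ⟨q, rfl⟩ := (classes_iff r _).1 hD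
    have n1 : q ≠ Quotient.mk r x1 := by rintro rfl; exact hDC rfl
    have n2 : q ≠ q2 := by rintro rfl; exact hDB rfl
    have he : (blk r (σ q)).ncard = (blk r q).ncard := hrest q n1 n2
    refine ⟨blk r (σ q), cl _, ?_, hinj q n1, he⟩
    refine Set.eq_of_subset_of_ncard_le (him _) ?_ (Set.toFinite _)
    rw [(hinj q n1).ncard_image, he]

lemma one_mem_sigma {X : Type*} (r : Setoid X) : (1 : Function.End X) ∈ SigmaSet r := by
  refine ⟨fun x y h => h, ?_⟩
  intro B hB
  obtain ⟨q, rfl⟩ := (classes_iff r B).1 hB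
  obtain ⟨x, rfl⟩ := Quotient.exists_rep q
  exact ⟨x, ⟨x, rfl⟩, rfl⟩

lemma sxp_sz {X : Type*} [Finite X] (r : Setoid X) (f : Function.End X) (hS : f ∈ SXP r)
    (hf : f ∈ SigmaSet r) (x : X) :
    sz r (Quotient.mk r (f x)) = sz r (Quotient.mk r x) := by
  obtain ⟨σ, hσ⟩ := exists_perm r f hf
  rw [← hσ]
  exact perm_eq_of_le σ (sz r) (fun q => sz_le r f σ hσ q (hS.1.1.injOn)) _

lemma induct {X : Type*} [Finite X] (r : Setoid X) (a b : ℕ) (hab : a < b)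
    (hcons : ∀ q, sz r q < b → sz r q ≤ a)
    (U : Set (Function.End X))
    (hgen : (Submonoid.closure (SXP r ∪ U) : Set (Function.End X)) = SigmaSet r)
    (f : Function.End X) (hf : f ∈ Submonoid.closure (SXP r ∪ U)) (x1 : X)
    (h1 : sz r (Quotient.mk r x1) = b)
    (hinj : ∀ q, q ≠ Quotient.mk r x1 → Set.InjOn f (blk r q))
    (ha : a ≤ (f '' blk r (Quotient.mk r x1)).ncard)
    (hne : sz r (Quotient.mk r (f x1)) ≠ b) : ∃ g ∈ U, memB r a b g := by
  have hsig : ∀ g, g ∈ Submonoid.closure (SXP r ∪ U) → g ∈ SigmaSet r := by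
    intro g hg; rw [← hgen]; exact hg
  induction hf using Submonoid.closure_induction_left with
  | one => exact absurd h1 hne
  | mul_left x hx y hy ih =>
    have hyS := hsig y hy
    have hxS := hsig x (Submonoid.subset_closure hx)
    have hcomp : ∀ z, (x * y) z = x (y z) := fun z => rfl
    have himg : ∀ S : Set X, (x * y) '' S = x '' (y '' S) := fun S => Set.image_comp x y S
    have yinj : ∀ q, q ≠ Quotient.mk r x1 → Set.InjOn y (blk r q) := by
      intro q hq u hu v hv huv
      exact hinj q hq hu hv (by rw [hcomp, hcomp, huv])
    by_cases hy1 : sz r (Quotient.mk r (y x1)) = b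
    · obtain ⟨σ, hσ⟩ := exists_perm r y hyS
      have hpres : ∀ q, sz r (σ q) = sz r q := by
        refine perm_eq_of_le σ (sz r) ?_
        intro q
        by_cases hq : q = Quotient.mk r x1
        · subst hq; rw [hσ, hy1, h1]
        · exact sz_le r y σ hσ q (yinj q hq)
      have hxU : x ∈ U := by
        rcases hx with hx | hx
        · exfalso
          apply hne
          rw [hcomp, sxp_sz r x hx hxS, hy1]
        · exact hx
      refine ⟨x, hxU, memB_of r a b hab hcons x hxS (y x1) hy1 ?_ ?_ hne⟩
      · intro q hq
        obtain ⟨p, rfl⟩ := σ.surjective q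
        have hp : p ≠ Quotient.mk r x1 := by rintro rfl; exact hq (hσ _)
        have hfull : y '' blk r p = blk r (σ p) := by
          refine Set.eq_of_subset_of_ncard_le (image_blk r y σ hσ p) ?_ (Set.toFinite _)
          rw [(yinj p hp).ncard_image]
          exact (hpres p).le
        rw [← hfull]
        rintro _ ⟨u, hu, rfl⟩ _ ⟨v, hv, rfl⟩ huv
        rw [hinj p hp hu hv huv]
      · refine ha.trans ?_
        rw [himg]
        refine Set.ncard_le_ncard (Set.image_mono ?_) (Set.toFinite _)
        rw [← hσ]
        exact image_blk r y σ hσ _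
    · refine ih yinj (ha.trans ?_) hy1
      rw [himg]
      exact Set.ncard_image_le (Set.toFinite _)

/-- A witness. -/
lemma witness {X : Type*} [Finite X] (r : Setoid X) (a b : ℕ) (hab : a < b)
    (x0 x1 : X) (h0 : sz r (Quotient.mk r x0) = a) (h1 : sz r (Quotient.mk r x1) = b) :
    ∃ f ∈ SigmaSet r, (∀ q, q ≠ Quotient.mk r x1 → Set.InjOn f (blk r q)) ∧
      a ≤ (f '' blk r (Quotient.mk r x1)).ncard ∧ sz r (Quotient.mk r (f x1)) ≠ b := by
  classical
  set A := blk r (Quotient.mk r x0) with hA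
  set C := blk r (Quotient.mk r x1) with hC
  have hne : Quotient.mk r x0 ≠ Quotient.mk r x1 := by
    intro h; rw [h] at h0; omega
  have hcard : Nat.card A ≤ Nat.card C := by
    rw [Nat.card_coe_set_eq, Nat.card_coe_set_eq]
    have e0 : A.ncard = a := h0
    have e1 : C.ncard = b := h1
    omega
  have := Fintype.ofFinite A
  have := Fintype.ofFinite C
  obtain ⟨ι⟩ : Nonempty (A ↪ C) := by
    apply Function.Embedding.nonempty_of_card_le
    simpa [Nat.card_eq_fintype_card] using hcard
  haveI : Nonempty A := ⟨⟨x0, rfl⟩⟩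
  let π : C → A := Function.invFun ι
  have hπ : Function.Surjective π := Function.invFun_surjective ι.injective
  let f : X → X := fun x => if h : x ∈ A then (ι ⟨x, h⟩ : X) else
    if h : x ∈ C then (π ⟨x, h⟩ : X) else x
  have fA : ∀ x (h : x ∈ A), f x = ι ⟨x, h⟩ := fun x h => by simp [f, h]
  have dis : ∀ x, x ∈ C → x ∉ A := by
    intro x hx hx'
    exact hne (Eq.trans (Eq.symm hx') hx)
  have fC : ∀ x (h : x ∈ C), f x = π ⟨x, h⟩ := fun x h => by simp [f, h, dis x h]
  have fO : ∀ x, x ∉ A → x ∉ C → f x = x := fun x h h' => by simp [f, h, h']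
  have fA' : ∀ x, x ∈ A → f x ∈ C := fun x h => by rw [fA x h]; exact (ι ⟨x, h⟩).2
  have fC' : ∀ x, x ∈ C → f x ∈ A := fun x h => by rw [fC x h]; exact (π ⟨x, h⟩).2
  have hx1 : x1 ∈ C := rfl
  have hx0 : x0 ∈ A := rfl
  have himg : f '' C = A := by
    ext z
    constructor
    · rintro ⟨x, hx, rfl⟩; exact fC' x hx
    · intro hz
      obtain ⟨⟨w, hw⟩, h⟩ := hπ ⟨z, hz⟩
      exact ⟨w, hw, by rw [fC w hw, h]⟩
  refine ⟨f, ⟨?_, ?_⟩, ?_, ?_, ?_⟩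
  · intro x y hxy
    have hq : Quotient.mk r x = Quotient.mk r y := Quotient.sound hxy
    apply Quotient.exact (s := r)
    by_cases hxA : x ∈ A
    · have hyA : y ∈ A := hq.symm.trans hxA
      exact (fA' x hxA : _ = _).trans (Eq.symm (fA' y hyA))
    · have hyA : y ∉ A := fun h => hxA (hq.trans h)
      by_cases hxC : x ∈ C
      · have hyC : y ∈ C := hq.symm.trans hxC
        exact (fC' x hxC : _ = _).trans (Eq.symm (fC' y hyC))
      · have hyC : y ∉ C := fun h => hxC (hq.trans h)
        rw [fO x hxA hxC, fO y hyA hyC]; exact hq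
  · intro B hB
    obtain ⟨q, rfl⟩ := (classes_iff r B).1 hB
    obtain ⟨x, rfl⟩ := Quotient.exists_rep q
    by_cases hxA : x ∈ A
    · exact ⟨f x1, ⟨x1, rfl⟩, (fC' x1 hx1 : _ = _).trans (Eq.symm hxA)⟩
    · by_cases hxC : x ∈ C
      · exact ⟨f x0, ⟨x0, rfl⟩, (fA' x0 hx0 : _ = _).trans (Eq.symm hxC)⟩
      · exact ⟨f x, ⟨x, rfl⟩, by rw [fO x hxA hxC]; rfl⟩
  · intro q hq
    by_cases hqA : q = Quotient.mk r x0
    · subst hqA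
      intro u hu v hv huv
      rw [fA u hu, fA v hv] at huv
      have := ι.injective (Subtype.ext huv)
      exact congrArg Subtype.val this
    · intro u hu v hv huv
      have o : ∀ u ∈ blk r q, f u = u := by
        intro u hu
        exact fO u (fun h => hqA (Eq.trans (Eq.symm hu) h)) (fun h => hq (Eq.trans (Eq.symm hu) h))
      rwa [o u hu, o v hv] at huv
  · rw [himg]; exact h0.ge
  · have : Quotient.mk r (f x1) = Quotient.mk r x0 := fC' x1 hx1
    rw [this, h0]; omega

lemma exists_of_blockCount {X : Type*} (r : Setoid X) (s : ℕ) (h : blockCount r s ≠ 0) :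
    ∃ x, sz r (Quotient.mk r x) = s := by
  obtain ⟨B, hB, hs⟩ := Set.nonempty_of_ncard_ne_zero h
  obtain ⟨q, rfl⟩ := (classes_iff r B).1 hB
  obtain ⟨x, rfl⟩ := Quotient.exists_rep q
  exact ⟨x, hs⟩

lemma blockCount_of {X : Type*} [Finite X] (r : Setoid X) (q : Quotient r) :
    blockCount r (sz r q) ≠ 0 := by
  unfold blockCount
  exact Set.ncard_ne_zero_of_mem (a := blk r q) ⟨(classes_iff r _).2 ⟨q, rfl⟩, rfl⟩ (Set.toFinite _)

end GenB

/-- (Here `d 1 < d 2 < … < d R` are the distinct block sizes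
of the partition.)  If `U ⊆ Σ(X,P)` is such that `S(X,P) ∪ U` generates the
monoid `Σ(X,P)`, then `U ∩ ℬᵢ ≠ ∅` for every `1 ≤ i ≤ R - 1`. -/
theorem generators_meet_B {X : Type*} [Fintype X] [Nonempty X] (r : Setoid X)
    (R : ℕ) (d : ℕ → ℕ)
    (hdmono : ∀ i, 1 ≤ i → i + 1 ≤ R → d i < d (i + 1))
    (hdsizes : ∀ s, blockCount r s ≠ 0 ↔ ∃ i, 1 ≤ i ∧ i ≤ R ∧ d i = s)
    (U : Set (Function.End X)) (hU : U ⊆ SigmaSet r)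
    (hgen : (Submonoid.closure (SXP r ∪ U) : Set (Function.End X)) = SigmaSet r) :
    ∀ i, 1 ≤ i → i + 1 ≤ R → ∃ f ∈ U, memB r (d i) (d (i + 1)) f := by
  intro i hi hiR
  have hab := hdmono i hi hiR
  have hmono : ∀ j k, 1 ≤ j → j ≤ k → k ≤ R → d j ≤ d k := by
    intro j k hj hjk
    induction k, hjk using Nat.le_induction with
    | base => intro _; exact le_rfl
    | succ k hk ih =>
      intro h
      exact (ih (by omega)).trans (hdmono k (by omega) h).le
  have hcons : ∀ q, GenB.sz r q < d (i + 1) → GenB.sz r q ≤ d i := by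
    intro q hq
    obtain ⟨j, hj, hjR, e⟩ := (hdsizes _).1 (GenB.blockCount_of r q)
    rw [← e] at hq ⊢
    by_cases hji : j ≤ i
    · exact hmono j i hj hji (by omega)
    · have := hmono (i + 1) j (by omega) (by omega) hjR
      omega
  obtain ⟨x0, h0⟩ := GenB.exists_of_blockCount r _ ((hdsizes (d i)).2 ⟨i, hi, by omega, rfl⟩)
  obtain ⟨x1, h1⟩ := GenB.exists_of_blockCount r _
    ((hdsizes (d (i + 1))).2 ⟨i + 1, by omega, hiR, rfl⟩)
  obtain ⟨f, hf, hinj, ha, hne⟩ := GenB.witness r _ _ hab x0 x1 h0 h1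
  have hf' : f ∈ Submonoid.closure (SXP r ∪ U) := by
    rw [← SetLike.mem_coe, hgen]; exact hf
  exact GenB.induct r _ _ hab hcons U hgen f hf' x1 h1 hinj ha hne
end

section
/- For every f ∈ Σ(X,P), the submonoid of T(X,P) generated by S(X,P) ∪ ℬ contains a companion of the permutation f̄. -/
open Function Set

/-- `ℬ`: the union of the sets `ℬᵢ` for `1 ≤ i ≤ R − 1`. -/
def Bset {X : Type*} (r : Setoid X) (R : ℕ) (d : ℕ → ℕ) : Set (Function.End X) :=
  {f | ∃ i, 1 ≤ i ∧ i + 1 ≤ R ∧ memB r (d i) (d (i + 1)) f}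

/-- `𝒞`: the union of the sets `𝒞ᵢ` for `1 ≤ i ≤ R`. -/
def Cset {X : Type*} (r : Setoid X) (R : ℕ) (d : ℕ → ℕ) : Set (Function.End X) :=
  {f | ∃ i, 1 ≤ i ∧ i ≤ R ∧ memC r (d i) f}

/-- `g` is a companion of the index permutation `σ` (relative to the enumeration
`Pb` of the blocks): `ḡ = σ`, `g` is injective on `Pb i` whenever
`|Pb i| ≤ |Pb (σ i)|`, and `g` maps `Pb i` onto `Pb (σ i)` whenever
`|Pb i| ≥ |Pb (σ i)|`. -/
def IsCompanion {X : Type*} {N : ℕ} (r : Setoid X) (Pb : Fin N → Set X)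
    (σ : Fin N → Fin N) (g : Function.End X) : Prop :=
  g ∈ SigmaSet r ∧ (∀ i, g '' Pb i ⊆ Pb (σ i)) ∧
    (∀ i, (Pb i).ncard ≤ (Pb (σ i)).ncard → Set.InjOn g (Pb i)) ∧
    (∀ i, (Pb (σ i)).ncard ≤ (Pb i).ncard → g '' Pb i = Pb (σ i))

/-- The fibre of the block-index map. -/
abbrev Fib {X : Type*} {N : ℕ} (idx : X → Fin N) (i : Fin N) : Set X := {x | idx x = i}

/-- `t` is a companion of the transposition of `p` and `q`, where block `p` is not larger. -/
def Tr {X : Type*} {N : ℕ} (idx : X → Fin N) (p q : Fin N) (t : X → X) : Prop :=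
  (∀ x, idx (t x) = Equiv.swap p q (idx x)) ∧ t '' Fib idx q = Fib idx p ∧
    (∀ j, j ≠ p → j ≠ q → t '' Fib idx j = Fib idx j) ∧
    (Fib idx p).ncard ≤ (t '' Fib idx p).ncard

/-- Rank form of the companion property. -/
def Co {X : Type*} {N : ℕ} (idx : X → Fin N) (σ : Equiv.Perm (Fin N)) (t : X → X) : Prop :=
  (∀ x, idx (t x) = σ (idx x)) ∧
    ∀ i, min (Fib idx i).ncard (Fib idx (σ i)).ncard ≤ (t '' Fib idx i).ncard

lemma injOn_of_ncard_le {X : Type*} [Finite X] {t : X → X} {A : Set X}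
    (h : A.ncard ≤ (t '' A).ncard) : Set.InjOn t A :=
  Set.injOn_of_ncard_image_eq (le_antisymm (Set.ncard_image_le (Set.toFinite A)) h) (Set.toFinite A)

lemma image_sub {X : Type*} {N : ℕ} {idx : X → Fin N} {σ : Fin N → Fin N} {t : X → X}
    (h : ∀ x, idx (t x) = σ (idx x)) (i : Fin N) : t '' Fib idx i ⊆ Fib idx (σ i) := by
  rintro _ ⟨x, rfl, rfl⟩
  exact h x

lemma exists_perm {X : Type*} [Finite X] {N : ℕ} (idx : X → Fin N) (q : Fin N) (A A' : Set X)
    (hA : A ⊆ Fib idx q) (hA' : A' ⊆ Fib idx q) (hc : A.ncard = A'.ncard) :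
    ∃ u : X → X, Function.Bijective u ∧ (∀ x, idx (u x) = idx x) ∧
      (∀ x, idx x ≠ q → u x = x) ∧ u '' A = A' := by
  classical
  have := Fintype.ofFinite X
  let pa : Fib idx q → Prop := fun x => x.1 ∈ A
  let pb : Fib idx q → Prop := fun x => x.1 ∈ A'
  have ea : {x // pa x} ≃ A :=
    ⟨fun x => ⟨x.1.1, x.2⟩, fun x => ⟨⟨x.1, hA x.2⟩, x.2⟩, fun _ => rfl, fun _ => rfl⟩
  have eb : {x // pb x} ≃ A' :=
    ⟨fun x => ⟨x.1.1, x.2⟩, fun x => ⟨⟨x.1, hA' x.2⟩, x.2⟩, fun _ => rfl, fun _ => rfl⟩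
  have hcard : Nat.card A = Nat.card A' := by
    rw [Nat.card_coe_set_eq, Nat.card_coe_set_eq, hc]
  have e : {x // pa x} ≃ {x // pb x} := ea.trans ((Classical.choice (Finite.card_eq.mp hcard)).trans eb.symm)
  let v : Equiv.Perm (Fib idx q) := e.extendSubtype
  let u : Equiv.Perm X := Equiv.Perm.ofSubtype (p := fun x => idx x = q) v
  have hu1 : ∀ x (hx : idx x = q), u x = (v ⟨x, hx⟩ : Fib idx q).1 := fun x hx =>
    Equiv.Perm.ofSubtype_apply_of_mem v hx
  have hu2 : ∀ x, idx x ≠ q → u x = x := fun x hx => Equiv.Perm.ofSubtype_apply_of_not_mem v hx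
  refine ⟨u, u.bijective, ?_, hu2, ?_⟩
  · intro x
    by_cases hx : idx x = q
    · rw [hu1 x hx, hx]; exact (v ⟨x, hx⟩).2
    · rw [hu2 x hx]
  · apply Set.eq_of_subset_of_ncard_le _ _ (Set.toFinite _)
    · rintro _ ⟨x, hx, rfl⟩
      rw [hu1 x (hA hx)]
      exact e.extendSubtype_mem ⟨x, hA hx⟩ hx
    · rw [Set.ncard_image_of_injective _ u.injective, hc]

lemma perm_image_other {X : Type*} {N : ℕ} {idx : X → Fin N} {q : Fin N} {u : X → X}
    (hu : ∀ x, idx x ≠ q → u x = x) {A : Set X} (hA : ∀ x ∈ A, idx x ≠ q) : u '' A = A := by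
  ext y
  constructor
  · rintro ⟨x, hx, rfl⟩
    rwa [hu x (hA x hx)]
  · intro hy
    exact ⟨y, hy, hu y (hA y hy)⟩

lemma perm_image_fib {X : Type*} [Finite X] {N : ℕ} {idx : X → Fin N} {u : X → X}
    (hb : Function.Bijective u) (hu : ∀ x, idx (u x) = idx x) (i : Fin N) :
    u '' Fib idx i = Fib idx i := by
  apply Set.eq_of_subset_of_ncard_le _ _ (Set.toFinite _)
  · rintro _ ⟨x, hx, rfl⟩
    exact (hu x).trans hx
  · rw [Set.ncard_image_of_injective _ hb.injective]

section
variable {X : Type*} [Finite X] {N : ℕ} (idx : X → Fin N) (C : Submonoid (Function.End X))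

/-- The induction giving all transpositions. -/
lemma exists_tr
    (hS : ∀ u : X → X, Function.Bijective u → (∀ x, idx (u x) = idx x) → u ∈ C)
    (hB : ∀ p q, p ≠ q → (Fib idx p).ncard ≤ (Fib idx q).ncard →
      (∀ m, ¬ ((Fib idx p).ncard < (Fib idx m).ncard ∧ (Fib idx m).ncard < (Fib idx q).ncard)) →
      ∃ t : X → X, t ∈ C ∧ Tr idx p q t) :
    ∀ n p q, p ≠ q → (Fib idx p).ncard ≤ (Fib idx q).ncard →
      (Fib idx q).ncard - (Fib idx p).ncard ≤ n → ∃ t : X → X, t ∈ C ∧ Tr idx p q t := by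
  intro n
  induction n with
  | zero =>
    intro p q hpq hle hn
    exact hB p q hpq hle (fun m hm => by omega)
  | succ n ih =>
    intro p q hpq hle hn
    by_cases hm : ∃ m, (Fib idx p).ncard < (Fib idx m).ncard ∧
        (Fib idx m).ncard < (Fib idx q).ncard
    swap
    · exact hB p q hpq hle (fun m h => hm ⟨m, h⟩)
    obtain ⟨m, h1, h2⟩ := hm
    have hpm : p ≠ m := by rintro rfl; omega
    have hmq : m ≠ q := by rintro rfl; omega
    obtain ⟨t, htC, a1, a2, a3, a4⟩ := ih m q hmq h2.le (by omega)
    obtain ⟨s, hsC, b1, b2, b3, b4⟩ := ih p m hpm h1.le (by omega)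
    -- transversal of t in block q
    obtain ⟨T, hT, hTb⟩ := (Set.surjOn_image t (Fib idx q)).exists_bijOn_subset
    rw [a2] at hTb
    have hTc : T.ncard = (Fib idx m).ncard := by
      rw [← hTb.image_eq, Set.InjOn.ncard_image hTb.injOn]
    have hinj_t : Set.InjOn t (Fib idx m) := injOn_of_ncard_le a4
    have hinj_s : Set.InjOn s (Fib idx q) := by
      apply injOn_of_ncard_le; rw [b3 q hpq.symm hmq.symm]
    have hAq : t '' Fib idx m ⊆ Fib idx q := by
      have := image_sub a1 m; rwa [Equiv.swap_apply_left] at this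
    have hA'q : s '' (t '' Fib idx m) ⊆ Fib idx q := by
      have h := Set.image_mono (f := s) hAq
      rwa [b3 q hpq.symm hmq.symm] at h
    have hA'c : (s '' (t '' Fib idx m)).ncard = (Fib idx m).ncard := by
      rw [Set.InjOn.ncard_image (hinj_s.mono hAq), Set.ncard_image_of_injOn hinj_t]
    obtain ⟨u, hub, hui, huo, huA⟩ := exists_perm idx q _ T hA'q hT (hA'c.trans hTc.symm)
    refine ⟨fun x => t (u (s (t x))), C.mul_mem htC (C.mul_mem (hS u hub hui)
      (C.mul_mem hsC htC)), ?_, ?_, ?_, ?_⟩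
    · intro x
      simp only [a1, hui, b1]
      generalize idx x = i
      simp only [Equiv.swap_apply_def]
      grind
    · have : (fun x => t (u (s (t x)))) '' Fib idx q
        = t '' (u '' (s '' (t '' Fib idx q))) := by simp only [Set.image_image]
      rw [this, a2, b2, perm_image_fib hub hui, a3 p hpm hpq]
    · intro j hjp hjq
      have : (fun x => t (u (s (t x)))) '' Fib idx j
        = t '' (u '' (s '' (t '' Fib idx j))) := by simp only [Set.image_image]
      rw [this]
      by_cases hjm : j = m
      · rw [hjm, huA, hTb.image_eq]
      · rw [a3 j hjm hjq, b3 j hjp hjm, perm_image_fib hub hui, a3 j hjm hjq]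
    · have : (fun x => t (u (s (t x)))) '' Fib idx p
        = t '' (u '' (s '' (t '' Fib idx p))) := by simp only [Set.image_image]
      have hsp : s '' Fib idx p ⊆ Fib idx m := by
        have := image_sub b1 p; rwa [Equiv.swap_apply_left] at this
      have husp : u '' (s '' Fib idx p) = s '' Fib idx p :=
        perm_image_other huo (fun x hx => by rw [show idx x = m from hsp hx]; exact hmq)
      rw [this, a3 p hpm hpq, husp, Set.InjOn.ncard_image (hinj_t.mono hsp)]
      exact b4

lemma exists_co
    (hS : ∀ u : X → X, Function.Bijective u → (∀ x, idx (u x) = idx x) → u ∈ C)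
    (hT : ∀ p q, p ≠ q → (Fib idx p).ncard ≤ (Fib idx q).ncard →
      ∃ t : X → X, t ∈ C ∧ Tr idx p q t) :
    ∀ n (F : Equiv.Perm (Fin N)), F.support.card ≤ n → ∃ g : X → X, g ∈ C ∧ Co idx F g := by
  intro n
  induction n with
  | zero =>
    intro F hF
    have : F = 1 := by
      rw [← Equiv.Perm.support_eq_empty_iff]; exact Finset.card_eq_zero.mp (by omega)
    subst this
    exact ⟨id, C.one_mem, fun x => rfl, fun i => by simp⟩
  | succ n ih =>
    intro F hF
    by_cases hne : F.support.Nonempty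
    swap
    · exact ih F (by rw [Finset.not_nonempty_iff_eq_empty.mp hne]; simp)
    obtain ⟨q, hq, hmax⟩ := Finset.exists_max_image F.support (fun i => (Fib idx i).ncard) hne
    have hq' : F q ≠ q := Equiv.Perm.mem_support.mp hq
    have hp : F q ∈ F.support := Equiv.Perm.apply_mem_support.mpr hq
    have hw : F (F q) ∈ F.support := Equiv.Perm.apply_mem_support.mpr hp
    have hp' : F (F q) ≠ F q := Equiv.Perm.mem_support.mp hp
    have hpq := hmax _ hp
    have hwq := hmax _ hw
    have hlt := Equiv.Perm.card_support_swap_mul (f := F) (x := F q) hp'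
    obtain ⟨g, hgC, g1, g2⟩ := ih (Equiv.swap (F q) (F (F q)) * F) (by omega)
    obtain ⟨t, htC, t1, t2, t3, t4⟩ := hT (F q) q hq' hpq
    have hFq : (Equiv.swap (F q) (F (F q)) * F) q = F (F q) := by simp
    have hFp : (Equiv.swap (F q) (F (F q)) * F) (F q) = F q := by simp
    have hFj : ∀ j, j ≠ F q → j ≠ q → (Equiv.swap (F q) (F (F q)) * F) j = F j := by
      intro j h1 h2
      rw [Equiv.Perm.mul_apply, Equiv.swap_apply_of_ne_of_ne]
      · exact fun h => h2 (F.injective h)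
      · exact fun h => h1 (F.injective h)
    have hgq : g '' Fib idx q = Fib idx (F (F q)) := by
      have h := image_sub g1 q
      have h2 := g2 q
      rw [hFq] at h h2
      refine Set.eq_of_subset_of_ncard_le h ?_ (Set.toFinite _)
      rwa [min_eq_right hwq] at h2
    have hgp : g '' Fib idx (F q) = Fib idx (F q) := by
      have h := image_sub g1 (F q)
      have h2 := g2 (F q)
      rw [hFp] at h h2
      refine Set.eq_of_subset_of_ncard_le h ?_ (Set.toFinite _)
      rwa [min_self] at h2
    obtain ⟨T, hTq, hTb⟩ := (Set.surjOn_image g (Fib idx q)).exists_bijOn_subset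
    rw [hgq] at hTb
    have hTc : T.ncard = (Fib idx (F (F q))).ncard := by
      rw [← hTb.image_eq, Set.InjOn.ncard_image hTb.injOn]
    have htp : (t '' Fib idx (F q)).ncard = (Fib idx (F q)).ncard :=
      le_antisymm (Set.ncard_image_le (Set.toFinite _)) t4
    have htpq : t '' Fib idx (F q) ⊆ Fib idx q := by
      have := image_sub t1 (F q); rwa [Equiv.swap_apply_left] at this
    have hA : ∃ A ⊆ Fib idx q, A.ncard = (Fib idx (F q)).ncard ∧
        min (Fib idx (F q)).ncard (Fib idx (F (F q))).ncard ≤ (g '' A).ncard := by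
      rcases le_total (Fib idx (F q)).ncard (Fib idx (F (F q))).ncard with h | h
      · obtain ⟨A, hAT, hAc⟩ := Set.exists_subset_card_eq (s := T) (h.trans hTc.ge)
        refine ⟨A, hAT.trans hTq, hAc, ?_⟩
        rw [Set.InjOn.ncard_image (hTb.injOn.mono hAT), hAc]
        exact min_le_left _ _
      · obtain ⟨A, hTA, hAq, hAc⟩ := Set.exists_subsuperset_card_eq hTq (hTc.le.trans h) hpq
        refine ⟨A, hAq, hAc, (min_le_right _ _).trans ?_⟩
        rw [← hTb.image_eq]
        exact Set.ncard_le_ncard (Set.image_mono hTA) (Set.toFinite _)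
    obtain ⟨A, hAq, hAc, hAg⟩ := hA
    obtain ⟨u, hub, hui, huo, huA⟩ := exists_perm idx q _ A htpq hAq (htp.trans hAc.symm)
    refine ⟨fun x => g (u (t x)), C.mul_mem hgC (C.mul_mem (hS u hub hui) htC), ?_, ?_⟩
    · intro x
      rw [g1, hui, t1]
      by_cases h1 : idx x = F q
      · rw [h1, Equiv.swap_apply_left, hFq]
      by_cases h2 : idx x = q
      · rw [h2, Equiv.swap_apply_right, hFp]
      rw [Equiv.swap_apply_of_ne_of_ne h1 h2, hFj _ h1 h2]
    · intro i
      have : (fun x => g (u (t x))) '' Fib idx i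
        = g '' (u '' (t '' Fib idx i)) := by simp only [Set.image_image]
      rw [this]
      by_cases h1 : i = F q
      · rw [h1, huA]; exact hAg
      by_cases h2 : i = q
      · rw [h2, t2, perm_image_fib hub hui, hgp]; exact min_le_right _ _
      rw [t3 i h1 h2, perm_image_fib hub hui]
      have := g2 i
      rwa [hFj _ h1 h2] at this

end

lemma exists_basic {X : Type*} [Finite X] {N : ℕ} (idx : X → Fin N)
    (hsurj : Function.Surjective idx) (p q : Fin N) (hpq : p ≠ q)
    (hle : (Fib idx p).ncard ≤ (Fib idx q).ncard) :
    ∃ t : X → X, Tr idx p q t ∧ ∀ x, idx x ≠ p → idx x ≠ q → t x = x := by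
  classical
  have := Fintype.ofFinite X
  obtain ⟨e⟩ : Nonempty (Fib idx p ↪ Fib idx q) := by
    apply Function.Embedding.nonempty_of_card_le
    rwa [← Nat.card_eq_fintype_card, ← Nat.card_eq_fintype_card, Nat.card_coe_set_eq,
      Nat.card_coe_set_eq]
  obtain ⟨x0, hx0⟩ := hsurj p
  have : Nonempty (Fib idx p) := ⟨⟨x0, hx0⟩⟩
  let c := Function.invFun e
  have hc : ∀ x, c (e x) = x := Function.leftInverse_invFun e.injective
  let t : X → X := fun x => if h : idx x = p then (e ⟨x, h⟩).1 else
    if h : idx x = q then (c ⟨x, h⟩).1 else x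
  have tp : ∀ x (h : idx x = p), t x = (e ⟨x, h⟩).1 := fun x h => by simp [t, h]
  have tq : ∀ x (h : idx x = q), t x = (c ⟨x, h⟩).1 := fun x h => by
    have : idx x ≠ p := fun h' => hpq (h'.symm.trans h)
    simp only [t, dif_neg this, dif_pos h]
  have t_o : ∀ x, idx x ≠ p → idx x ≠ q → t x = x := fun x h h' => by simp [t, h, h']
  refine ⟨t, ⟨?_, ?_, ?_, ?_⟩, t_o⟩
  · intro x
    by_cases h1 : idx x = p
    · rw [tp x h1, h1, Equiv.swap_apply_left]; exact (e ⟨x, h1⟩).2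
    by_cases h2 : idx x = q
    · rw [tq x h2, h2, Equiv.swap_apply_right]; exact (c ⟨x, h2⟩).2
    rw [t_o x h1 h2, Equiv.swap_apply_of_ne_of_ne h1 h2]
  · ext y
    constructor
    · rintro ⟨x, hx, rfl⟩
      rw [tq x hx]; exact (c ⟨x, hx⟩).2
    · intro hy
      refine ⟨(e ⟨y, hy⟩).1, (e ⟨y, hy⟩).2, ?_⟩
      rw [tq _ (e ⟨y, hy⟩).2]
      exact congrArg Subtype.val (hc ⟨y, hy⟩)
  · intro j h1 h2
    ext y
    constructor
    · rintro ⟨x, hx, rfl⟩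
      have hx' : idx x = j := hx
      rwa [t_o x (hx' ▸ h1) (hx' ▸ h2)]
    · intro hy
      have hy' : idx y = j := hy
      exact ⟨y, hy, t_o y (hy' ▸ h1) (hy' ▸ h2)⟩
  · rw [Set.InjOn.ncard_image]
    intro x hx y hy hxy
    rw [tp x hx, tp y hy] at hxy
    have := e.injective (Subtype.ext hxy)
    exact congrArg Subtype.val this

/-- (Blocks are enumerated as `Pb 0, …, Pb (N-1)` with
nondecreasing sizes, and `d 1 < … < d R` are the distinct block sizes; `F` is
the index permutation induced by `f ∈ Σ(X,P)`.)  The submonoid generated by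
`S(X,P) ∪ ℬ` contains a companion of `f̄`. -/
theorem companion_exists {X : Type*} [Fintype X] [Nonempty X] (r : Setoid X)
    (N : ℕ) (Pb : Fin N → Set X)
    (hPmem : ∀ i, Pb i ∈ Setoid.classes r)
    (hPinj : Function.Injective Pb)
    (hPsurj : ∀ B ∈ Setoid.classes r, ∃ i, Pb i = B)
    (hPmono : Monotone fun i => (Pb i).ncard)
    (R : ℕ) (d : ℕ → ℕ)
    (hdmono : ∀ i, 1 ≤ i → i + 1 ≤ R → d i < d (i + 1))
    (hdsizes : ∀ s, blockCount r s ≠ 0 ↔ ∃ i, 1 ≤ i ∧ i ≤ R ∧ d i = s)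
    (f : Function.End X) (hf : f ∈ SigmaSet r)
    (F : Fin N → Fin N) (hF : ∀ i, f '' Pb i ⊆ Pb (F i)) :
    ∃ g ∈ (Submonoid.closure (SXP r ∪ Bset r R d) : Set (Function.End X)),
      IsCompanion r Pb F g := by
  classical
  -- the block-index map
  have hex : ∀ x, ∃ i, Pb i = {y | r y x} := fun x => hPsurj _ (Setoid.mem_classes r x)
  choose idx hidx using hex
  have hmemiff : ∀ x i, x ∈ Pb i ↔ idx x = i := by
    intro x i
    have hx : x ∈ Pb (idx x) := by rw [hidx]; exact r.refl x
    constructor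
    · intro h
      by_contra hne
      apply hne
      apply hPinj
      exact Setoid.eq_of_mem_classes (hPmem _) hx (hPmem _) h
    · rintro rfl; exact hx
  have hFib : ∀ i, Pb i = Fib idx i := fun i => Set.ext fun x => hmemiff x i
  have hr : ∀ x y, r x y ↔ idx x = idx y := by
    intro x y
    rw [← hmemiff x (idx y), hidx y]; rfl
  have hsurj : Function.Surjective idx := by
    intro i
    obtain ⟨x, hx⟩ := Setoid.nonempty_of_mem_partition (Setoid.isPartition_classes r) (hPmem i)
    exact ⟨x, (hmemiff x i).1 hx⟩
  have hsig : ∀ (σ : Equiv.Perm (Fin N)) (g : Function.End X),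
      (∀ x, idx (g x) = σ (idx x)) → g ∈ SigmaSet r := by
    intro σ g hg
    refine ⟨fun x y hxy => ?_, fun B hB => ?_⟩
    · rw [hr] at hxy ⊢; rw [hg, hg, hxy]
    · obtain ⟨i, rfl⟩ := hPsurj B hB
      obtain ⟨x, hx⟩ := hsurj (σ.symm i)
      refine ⟨g x, ⟨x, rfl⟩, (hmemiff _ _).2 ?_⟩
      rw [hg, hx, Equiv.apply_symm_apply]
  set C := Submonoid.closure (SXP r ∪ Bset r R d) with hC
  have hSX : ∀ (σ : Equiv.Perm (Fin N)) (u : X → X), Function.Bijective u →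
      (∀ x, idx (u x) = σ (idx x)) → u ∈ C := by
    intro σ u hu hi
    apply Submonoid.subset_closure
    left
    refine ⟨hu, fun x y => ?_⟩
    rw [hr, hr, hi, hi]
    exact σ.injective.eq_iff
  have hS : ∀ u : X → X, Function.Bijective u → (∀ x, idx (u x) = idx x) → u ∈ C :=
    fun u hu hi => hSX 1 u hu (fun x => by rw [hi]; rfl)
  have hsize : ∀ s, (∃ i, (Fib idx i).ncard = s) ↔ ∃ k, 1 ≤ k ∧ k ≤ R ∧ d k = s := by
    intro s
    rw [← hdsizes s, blockCount, ne_eq, Set.ncard_eq_zero (Set.toFinite _), ← ne_eq, ← Set.nonempty_iff_ne_empty]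
    constructor
    · rintro ⟨i, hi⟩
      exact ⟨Pb i, hPmem i, by rw [hFib]; exact hi⟩
    · rintro ⟨B, hB, hs⟩
      obtain ⟨i, rfl⟩ := hPsurj B hB
      exact ⟨i, by rw [← hFib]; exact hs⟩
  have hdlt : ∀ n k, 1 ≤ k → k + n + 1 ≤ R → d k < d (k + n + 1) := by
    intro n
    induction n with
    | zero => intro k h1 h2; exact hdmono k h1 h2
    | succ n ih =>
      intro k h1 h2
      exact (ih k h1 (by omega)).trans (hdmono (k + n + 1) (by omega) (by omega))
  have hdlt' : ∀ k l, 1 ≤ k → k < l → l ≤ R → d k < d l := by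
    intro k l h1 h2 h3
    obtain ⟨n, rfl⟩ := Nat.exists_eq_add_of_lt h2
    exact hdlt n k h1 h3
  have hB : ∀ p q, p ≠ q → (Fib idx p).ncard ≤ (Fib idx q).ncard →
      (∀ m, ¬ ((Fib idx p).ncard < (Fib idx m).ncard ∧ (Fib idx m).ncard < (Fib idx q).ncard)) →
      ∃ t : X → X, t ∈ C ∧ Tr idx p q t := by
    intro p q hpq hle hno
    obtain ⟨t, ht, hto⟩ := exists_basic idx hsurj p q hpq hle
    refine ⟨t, ?_, ht⟩
    obtain ⟨t1, t2, t3, t4⟩ := ht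
    have htpq : t '' Fib idx p ⊆ Fib idx q := by
      have := image_sub t1 p; rwa [Equiv.swap_apply_left] at this
    rcases hle.eq_or_lt with heq | hlt
    · have h5 : t '' Fib idx p = Fib idx q :=
        Set.eq_of_subset_of_ncard_le htpq (heq.symm.le.trans t4) (Set.toFinite _)
      refine hSX (Equiv.swap p q) t (Finite.surjective_iff_bijective.mp ?_) t1
      intro y
      by_cases h1 : idx y = p
      · have : y ∈ t '' Fib idx q := by rw [t2]; exact h1
        obtain ⟨x, -, hx⟩ := this
        exact ⟨x, hx⟩
      by_cases h2 : idx y = q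
      · have : y ∈ t '' Fib idx p := by rw [h5]; exact h2
        obtain ⟨x, -, hx⟩ := this
        exact ⟨x, hx⟩
      exact ⟨y, hto y h1 h2⟩
    · obtain ⟨k, hk1, hk2, hk⟩ := (hsize _).1 ⟨p, rfl⟩
      obtain ⟨l, hl1, hl2, hl⟩ := (hsize _).1 ⟨q, rfl⟩
      have hkl : k < l := by
        by_contra hcon
        rcases (not_lt.mp hcon).eq_or_lt with h | h
        · subst h; omega
        · have := hdlt' l k hl1 h hk2; omega
      have hl' : l = k + 1 := by
        by_contra hcon
        obtain ⟨m, hm⟩ := (hsize (d (k + 1))).2 ⟨k + 1, by omega, by omega, rfl⟩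
        have e1 := hdlt' k (k + 1) hk1 (by omega) (by omega)
        have e2 := hdlt' (k + 1) l (by omega) (by omega) hl2
        exact hno m (by omega)
      subst hl'
      apply Submonoid.subset_closure
      right
      refine ⟨k, hk1, hl2, hsig _ t t1, Pb p, Pb p, Pb q, Pb q, hPmem p, hPmem p, hPmem q,
        hPmem q, ?_⟩
      rw [hFib p, hFib q]
      refine ⟨hk.symm, hk.symm, hl.symm, hl.symm, injOn_of_ncard_le t4, htpq, t2, ?_⟩
      intro D hD hDp hDq
      obtain ⟨j, rfl⟩ := hPsurj D hD
      rw [hFib j] at hDp hDq ⊢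
      have hj1 : j ≠ p := fun h => hDp (by rw [h])
      have hj2 : j ≠ q := fun h => hDq (by rw [h])
      exact ⟨Fib idx j, hFib j ▸ hPmem j, t3 j hj1 hj2,
        injOn_of_ncard_le (by rw [t3 j hj1 hj2]), rfl⟩
  -- the induced permutation
  have hFx : ∀ x, idx (f x) = F (idx x) := by
    intro x
    exact (hmemiff _ _).1 (hF (idx x) ⟨x, (hmemiff _ _).2 rfl, rfl⟩)
  have hFsurj : Function.Surjective F := by
    intro i
    obtain ⟨y, ⟨x, rfl⟩, hy⟩ := hf.2 (Pb i) (hPmem i)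
    exact ⟨idx x, by rw [← hFx]; exact (hmemiff _ _).1 hy⟩
  let σ : Equiv.Perm (Fin N) := Equiv.ofBijective F (Finite.surjective_iff_bijective.mp hFsurj)
  have hσ : ∀ i, σ i = F i := fun i => rfl
  obtain ⟨g, hgC, g1, g2⟩ := exists_co idx C hS
    (fun p q hpq hle => exists_tr idx C hS hB _ p q hpq hle le_rfl) _ σ le_rfl
  refine ⟨g, hgC, hsig σ g g1, ?_, ?_, ?_⟩
  · intro i
    rw [hFib, hFib]; exact image_sub g1 i
  · intro i h
    have := g2 i
    rw [hσ] at this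
    rw [hFib, hFib] at h
    rw [hFib]
    rw [min_eq_left h] at this
    exact injOn_of_ncard_le this
  · intro i h
    have := g2 i
    rw [hσ] at this
    rw [hFib, hFib] at h
    rw [hFib, hFib]
    rw [min_eq_right h] at this
    exact Set.eq_of_subset_of_ncard_le (image_sub g1 i) this (Set.toFinite _)
end

section
/- If f ∈ Σ(X,P) and the submonoid of T(X,P) generated by S(X,P) ∪ ℬ contains a companion of f̄, then f belongs to the submonoid of T(X,P) generated by S(X,P) ∪ ℬ ∪ 𝒞. -/
open Function Set

/-- Every map sending each block into itself is generated by units and `𝒞`. -/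
theorem mem_closure_of_blockwise {X : Type*} [Fintype X] (r : Setoid X)
    (R : ℕ) (d : ℕ → ℕ)
    (hdsizes : ∀ s, blockCount r s ≠ 0 ↔ ∃ i, 1 ≤ i ∧ i ≤ R ∧ d i = s) :
    ∀ (n : ℕ) (h : Function.End X), (∀ x, r x (h x)) →
      Fintype.card X - (Set.range h).ncard = n →
      h ∈ Submonoid.closure (SXP r ∪ Bset r R d ∪ Cset r R d) := by
  classical
  intro n
  induction n using Nat.strong_induction_on with
  | _ n ih =>
    intro h hr hn
    by_cases hs : Function.Surjective h
    · apply Submonoid.subset_closure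
      refine Or.inl (Or.inl ⟨Finite.surjective_iff_bijective.1 hs, fun x y => ?_⟩)
      exact ⟨fun q => r.trans (hr x) (r.trans q (r.symm (hr y))),
        fun q => r.trans (r.symm (hr x)) (r.trans q (hr y))⟩
    · simp only [Function.Surjective, not_forall] at hs
      obtain ⟨c, hc⟩ := hs
      have hmaps : Set.MapsTo h {x | r x c} {x | r x c} :=
        fun x hx => r.trans (r.symm (hr x)) hx
      have hni : ¬ Set.InjOn h {x | r x c} := by
        intro hi
        have hsurj : Set.SurjOn h {x | r x c} {x | r x c} :=
          ((Set.toFinite _).injOn_iff_bijOn_of_mapsTo hmaps).1 hi |>.surjOn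
        obtain ⟨x, _, hx⟩ := hsurj (r.refl c)
        exact hc ⟨x, hx⟩
      simp only [Set.InjOn, not_forall] at hni
      obtain ⟨a, ha, b, hb, hab, hne⟩ := hni
      have hac : r a c := ha
      have hbc : r b c := hb
      have hrab : r a b := r.trans hac (r.symm hbc)
      let h' : Function.End X := Function.update h a c
      let e : Function.End X := Function.update id a b
      have ea : e a = b := Function.update_self ..
      have ex : ∀ x, x ≠ a → e x = x := fun x hx => Function.update_of_ne hx ..
      have ha' : h' a = c := Function.update_self ..
      have hx' : ∀ x, x ≠ a → h' x = h x := fun x hx => Function.update_of_ne hx ..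
      have hfac : h = h' * e := by
        funext x
        change h x = h' (e x)
        by_cases hx : x = a
        · rw [hx, ea, hx' b (Ne.symm hne), hab]
        · rw [ex x hx, hx' x hx]
      have her : ∀ x, r x (e x) := by
        intro x
        by_cases hx : x = a
        · rw [hx, ea]; exact hrab
        · rw [ex x hx]
      have hr' : ∀ x, r x (h' x) := by
        intro x
        by_cases hx : x = a
        · rw [hx, ha']; exact hac
        · rw [hx' x hx]; exact hr x
      have hlt : (Set.range h).ncard < (Set.range h').ncard := by
        apply Set.ncard_lt_ncard _ (Set.toFinite _)
        refine ⟨?_, fun hsub => hc ?_⟩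
        · rintro _ ⟨x, rfl⟩
          by_cases hx : x = a
          · exact ⟨b, by rw [hx, hx' b (Ne.symm hne), hab]⟩
          · exact ⟨x, hx' x hx⟩
        · exact hsub ⟨a, ha'⟩
      have hle : (Set.range h').ncard ≤ Fintype.card X := by
        rw [← Nat.card_eq_fintype_card]
        exact Set.ncard_le_card _
      have hmem' := ih (Fintype.card X - (Set.range h').ncard) (by omega) h' hr' rfl
      have heC : e ∈ Cset r R d := by
        have hBm : {x | r x c} ∈ Setoid.classes r := ⟨c, rfl⟩
        obtain ⟨i, h1, h2, h3⟩ := (hdsizes ({x | r x c} : Set X).ncard).1 (by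
          unfold blockCount
          exact Set.ncard_ne_zero_of_mem (a := {x | r x c}) ⟨hBm, rfl⟩ (Set.toFinite _))
        refine ⟨i, h1, h2, ⟨fun x y q => r.trans (r.symm (her x)) (r.trans q (her y)), ?_⟩,
          ?_, {x | r x c}, hBm, h3.symm, ?_, ?_⟩
        · rintro _ ⟨y, rfl⟩
          exact ⟨e y, ⟨y, rfl⟩, r.symm (her y)⟩
        · intro D hD
          refine ⟨D, hD, rfl, ?_⟩
          obtain ⟨y, rfl⟩ := hD
          rintro _ ⟨x, hx, rfl⟩
          exact r.trans (r.symm (her x)) hx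
        · have : e '' {x | r x c} = {x | r x c} \ {a} := by
            ext y
            constructor
            · rintro ⟨x, hx, rfl⟩
              refine ⟨r.trans (r.symm (her x)) hx, ?_⟩
              by_cases hxa : x = a
              · rw [hxa, ea]; exact Ne.symm hne
              · rw [ex x hxa]; exact hxa
            · rintro ⟨hy, hya⟩
              exact ⟨y, hy, ex y hya⟩
          rw [this, Set.ncard_sdiff_singleton_of_mem ha, h3]
        · rintro D ⟨y, rfl⟩ hD
          have hna : ¬ r a y := by
            intro q
            apply hD
            ext x
            exact ⟨fun t => r.trans t (r.trans (r.symm q) hac),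
              fun t => r.trans t (r.trans (r.symm hac) q)⟩
          have hna' : ∀ x, r x y → x ≠ a := fun x hx hxa => hna (hxa ▸ hx)
          intro x hx z hz hxz
          rwa [ex x (hna' x hx), ex z (hna' z hz)] at hxz
      rw [hfac]
      exact Submonoid.mul_mem _ hmem' (Submonoid.subset_closure (Or.inr heC))

/-- (Blocks are enumerated as `Pb 0, …, Pb (N-1)` with
nondecreasing sizes, and `d 1 < … < d R` are the distinct block sizes; `F` is
the index permutation induced by `f ∈ Σ(X,P)`.)  If the submonoid generated by
`S(X,P) ∪ ℬ` contains a companion of `f̄`, then `f` belongs to the submonoid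
generated by `S(X,P) ∪ ℬ ∪ 𝒞`. -/
theorem mem_closure_of_companion {X : Type*} [Fintype X] [Nonempty X] (r : Setoid X)
    (N : ℕ) (Pb : Fin N → Set X)
    (hPmem : ∀ i, Pb i ∈ Setoid.classes r)
    (hPinj : Function.Injective Pb)
    (hPsurj : ∀ B ∈ Setoid.classes r, ∃ i, Pb i = B)
    (hPmono : Monotone fun i => (Pb i).ncard)
    (R : ℕ) (d : ℕ → ℕ)
    (hdmono : ∀ i, 1 ≤ i → i + 1 ≤ R → d i < d (i + 1))
    (hdsizes : ∀ s, blockCount r s ≠ 0 ↔ ∃ i, 1 ≤ i ∧ i ≤ R ∧ d i = s)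
    (f : Function.End X) (hf : f ∈ SigmaSet r)
    (F : Fin N → Fin N) (hF : ∀ i, f '' Pb i ⊆ Pb (F i))
    (hcomp : ∃ g ∈ (Submonoid.closure (SXP r ∪ Bset r R d) : Set (Function.End X)),
      IsCompanion r Pb F g) :
    f ∈ (Submonoid.closure (SXP r ∪ Bset r R d ∪ Cset r R d) : Set (Function.End X)) := by
  classical
  obtain ⟨g, hg, -, hgF, hgi, hgs⟩ := hcomp
  have key : ∀ h : Function.End X, (∀ x, r x (h x)) →
      h ∈ Submonoid.closure (SXP r ∪ Bset r R d ∪ Cset r R d) :=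
    fun h hr => mem_closure_of_blockwise r R d hdsizes _ h hr rfl
  have hrel : ∀ i x y, x ∈ Pb i → y ∈ Pb i → r x y := by
    intro i x y hx hy
    obtain ⟨z, hz⟩ := hPmem i
    rw [hz] at hx hy
    exact r.trans hx (r.symm hy)
  have huniq : ∀ i j x, x ∈ Pb i → x ∈ Pb j → i = j := by
    intro i j x hi hj
    apply hPinj
    obtain ⟨y, hy⟩ := hPmem i
    obtain ⟨z, hz⟩ := hPmem j
    rw [hy] at hi
    rw [hz] at hj
    rw [hy, hz]
    ext w
    exact ⟨fun t => r.trans t (r.trans (r.symm hi) hj),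
      fun t => r.trans t (r.trans (r.symm hj) hi)⟩
  have hex : ∀ x, ∃ i, x ∈ Pb i := by
    intro x
    obtain ⟨i, hi⟩ := hPsurj {y | r y x} ⟨x, rfl⟩
    exact ⟨i, by rw [hi]; exact r.refl x⟩
  choose idx hidx using hex
  have hFsurj : Function.Surjective F := by
    intro j
    obtain ⟨_, ⟨x, rfl⟩, hx⟩ := hf.2 (Pb j) (hPmem j)
    exact ⟨idx x, huniq _ _ _ (hF _ ⟨x, hidx x, rfl⟩) hx⟩
  have hFinj : Function.Injective F := Finite.injective_iff_surjective.2 hFsurj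
  have hfx : ∀ x, f x ∈ Pb (F (idx x)) := fun x => hF _ ⟨x, hidx x, rfl⟩
  have hgx : ∀ x, g x ∈ Pb (F (idx x)) := fun x => hgF _ ⟨x, hidx x, rfl⟩
  let I : X → Prop := fun x => (Pb (idx x)).ncard ≤ (Pb (F (idx x))).ncard
  have hh : ∀ x, ∃ x', r x x' ∧ (I x → x' = x) ∧ (¬ I x → g x' = f x) := by
    intro x
    by_cases hI : I x
    · exact ⟨x, r.refl x, fun _ => rfl, fun q => absurd hI q⟩
    · have hm : f x ∈ g '' Pb (idx x) := by
        rw [hgs _ (le_of_lt (not_le.1 hI))]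
        exact hfx x
      obtain ⟨x', h1, h2⟩ := hm
      exact ⟨x', hrel _ _ _ (hidx x) h1, fun q => absurd q hI, fun _ => h2⟩
  have hk : ∀ y, ∃ z, r y z ∧ (∀ x, I x → g x = y → z = f x) ∧
      ((∀ x, I x → g x ≠ y) → z = y) := by
    intro y
    by_cases hy : ∃ x, I x ∧ g x = y
    · obtain ⟨x, hI, rfl⟩ := hy
      refine ⟨f x, hrel _ _ _ (hgx x) (hfx x), fun x' _ he => ?_,
        fun q => absurd rfl (q x hI)⟩
      have h1 : idx x' = idx x := hFinj (huniq _ _ _ (hgx x') (by rw [he]; exact hgx x))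
      have h2 : x' = x := hgi (idx x) hI (by rw [← h1]; exact hidx x') (hidx x) he
      rw [h2]
    · refine ⟨y, r.refl y, fun x hI he => absurd ⟨x, hI, he⟩ hy, fun _ => rfl⟩
  choose h hhr hh1 hh2 using hh
  choose k hkr hk1 hk2 using hk
  let k' : Function.End X := k
  let h' : Function.End X := h
  have hfac : f = k' * (g * h') := by
    funext x
    change f x = k (g (h x))
    by_cases hI : I x
    · rw [hh1 x hI]
      exact (hk1 (g x) x hI rfl).symm
    · rw [hh2 x hI]
      refine (hk2 (f x) fun x0 h0 he => hI ?_).symm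
      have h1 : idx x0 = idx x := hFinj (huniq _ _ _ (hgx x0) (by rw [he]; exact hfx x))
      change (Pb (idx x0)).ncard ≤ (Pb (F (idx x0))).ncard at h0
      rw [h1] at h0
      exact h0
  have hg' : g ∈ Submonoid.closure (SXP r ∪ Bset r R d ∪ Cset r R d) :=
    Submonoid.closure_mono Set.subset_union_left hg
  rw [hfac]
  exact Submonoid.mul_mem _ (key k' hkr) (Submonoid.mul_mem _ hg' (key h' hhr))
end
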